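/- arXiv:math-ph/0702051 — 4 statements merged into one kernel-verified Lean document; each statement's English description precedes it below -/
import Mathlib

section
/- (Appendix B, boundary condition at the singular point.) Consider the ODE p y′ + q y = r on U = (a,b), where p, q, r ∈ C^m(U), p has a zero of order l_p at x̂ ∈ U and q a zero of order l_q at x̂ with l_q < l_p and l_q ≤ l_r (l_r being the order of the zero of r at x̂), and p, q have no other zeros in U. Then the limit lim_{x→x̂} r(x)/q(x) exists (it equals r^{(l_q)}(x̂)/q^{(l_q)}(x̂), and equals 0 when l_r > l_q), and every solution y ∈ C¹(U) of p y′ + q y = r satisfies y(x̂) = lim_{x→x̂} r(x)/q(x). -/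
/-!
By Taylor's theorem `q` behaves like a multiple of `(x - xh) ^ lq` near `xh`, so `r / q` tends to
the quotient of the derivatives of order `lq`, while `p / q = O(x - xh)`. Away from `xh` the
equation reads `(p / q) y' + y = r / q`. Applying the mean value theorem to `y` on
`[xh + h, xh + 2h]` produces points `ξ → xh` with `(ξ - xh) y'(ξ) → 0`, and along them the term
`(p / q) y'` disappears in the limit.
-/

/- Statement 15 (Appendix B, boundary condition at the singular point): in the
singular case l_q < l_p, l_q ≤ l_r, the limit of r/q at x̂ exists and every C¹
solution y of p y' + q y = r satisfies y(x̂) = lim_{x→x̂} r(x)/q(x). -/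

open Set Filter

namespace SingularODE15

/-- `g` has a zero of order `l` at `xh`. -/
def HasZeroOfOrder (g : ℝ → ℝ) (xh : ℝ) (l : ℕ) : Prop :=
  (∀ k < l, iteratedDeriv k g xh = 0) ∧ iteratedDeriv l g xh ≠ 0

open Topology Asymptotics

section Taylor

open scoped Nat

variable {E : Type*} [NormedAddCommGroup E] [NormedSpace ℝ E] {x₀ : ℝ} {n : ℕ}

theorem isLittleO_sub_leading_taylor_term {f : ℝ → E} (hf : ContDiffAt ℝ n f x₀)
    (hf₀ : ∀ k < n, iteratedDeriv k f x₀ = 0) :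
    (fun x => f x - ((n ! : ℝ)⁻¹ * (x - x₀) ^ n) • iteratedDeriv n f x₀)
      =o[𝓝 x₀] fun x => (x - x₀) ^ n := by
  obtain ⟨u, hu, hfu⟩ := hf.contDiffOn le_rfl (by simp)
  obtain ⟨ε, hε, hεu⟩ := Metric.mem_nhds_iff.mp hu
  have hx₀ : x₀ ∈ Metric.ball x₀ ε := Metric.mem_ball_self hε
  have hderiv (k : ℕ) :
      iteratedDerivWithin k f (Metric.ball x₀ ε) x₀ = iteratedDeriv k f x₀ :=
    iteratedDerivWithin_of_isOpen Metric.isOpen_ball hx₀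
  have htaylor (x : ℝ) : taylorWithinEval f n (Metric.ball x₀ ε) x₀ x =
      ((n ! : ℝ)⁻¹ * (x - x₀) ^ n) • iteratedDeriv n f x₀ := by
    rw [taylor_within_apply, Finset.sum_range_succ, Finset.sum_eq_zero, zero_add, hderiv]
    intro k hk
    rw [hderiv, hf₀ k (Finset.mem_range.mp hk), smul_zero]
  simpa only [htaylor, Metric.isOpen_ball.nhdsWithin_eq hx₀] using
    taylor_isLittleO (convex_ball x₀ ε) hx₀ (hfu.mono hεu)

theorem isBigO_sub_pow {f : ℝ → E} (hf : ContDiffAt ℝ n f x₀)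
    (hf₀ : ∀ k < n, iteratedDeriv k f x₀ = 0) :
    f =O[𝓝 x₀] fun x => (x - x₀) ^ n := by
  have hlead : (fun x => ((n ! : ℝ)⁻¹ * (x - x₀) ^ n) • iteratedDeriv n f x₀)
      =O[𝓝 x₀] fun x => (x - x₀) ^ n := by
    simpa using ((isBigO_refl (fun x : ℝ => (x - x₀) ^ n) (𝓝 x₀)).const_mul_left _).smul
      (isBigO_const_const (iteratedDeriv n f x₀) (one_ne_zero (α := ℝ)) (𝓝 x₀))
  simpa only [sub_add_cancel] using (isLittleO_sub_leading_taylor_term hf hf₀).isBigO.add hlead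

theorem tendsto_inv_sub_pow_smul {f : ℝ → E} (hf : ContDiffAt ℝ n f x₀)
    (hf₀ : ∀ k < n, iteratedDeriv k f x₀ = 0) :
    Tendsto (fun x => ((x - x₀) ^ n)⁻¹ • f x) (𝓝[≠] x₀)
      (𝓝 ((n ! : ℝ)⁻¹ • iteratedDeriv n f x₀)) := by
  have hlim := (((isLittleO_sub_leading_taylor_term hf hf₀).mono
    (nhdsWithin_le_nhds (s := {x₀}ᶜ))).tendsto_inv_smul_nhds_zero).add_const
      ((n ! : ℝ)⁻¹ • iteratedDeriv n f x₀)
  rw [zero_add] at hlim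
  refine hlim.congr' ?_
  filter_upwards [self_mem_nhdsWithin] with x hx
  have hpow : (x - x₀) ^ n ≠ 0 := pow_ne_zero n (sub_ne_zero.mpr hx)
  rw [smul_sub, mul_comm, mul_smul, inv_smul_smul₀ hpow, sub_add_cancel]

namespace HasZeroOfOrder

variable {g : ℝ → ℝ}

theorem sub_pow_isBigO (hzero : HasZeroOfOrder g x₀ n) (hg : ContDiffAt ℝ n g x₀) :
    (fun x => (x - x₀) ^ n) =O[𝓝 x₀] g := by
  have hcoeff : (n ! : ℝ)⁻¹ * iteratedDeriv n g x₀ ≠ 0 :=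
    mul_ne_zero (inv_ne_zero (Nat.cast_ne_zero.mpr n.factorial_ne_zero)) hzero.2
  have hequiv : g ~[𝓝 x₀] fun x => ((n ! : ℝ)⁻¹ * iteratedDeriv n g x₀) * (x - x₀) ^ n := by
    refine (isLittleO_const_mul_right_iff hcoeff).mpr ?_
    simpa only [smul_eq_mul, mul_right_comm] using! isLittleO_sub_leading_taylor_term hg hzero.1
  exact (isBigO_const_mul_left_iff hcoeff).mp hequiv.isBigO_symm

theorem eventually_ne_zero (hzero : HasZeroOfOrder g x₀ n) (hg : ContDiffAt ℝ n g x₀) :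
    ∀ᶠ x in 𝓝[≠] x₀, g x ≠ 0 := by
  filter_upwards [((hzero.sub_pow_isBigO hg).mono nhdsWithin_le_nhds).eq_zero_imp,
    self_mem_nhdsWithin] with x hpow hx hgx
  exact pow_ne_zero n (sub_ne_zero.mpr hx) (hpow hgx)

theorem tendsto_inv_smul {f : ℝ → E} (hzero : HasZeroOfOrder g x₀ n)
    (hg : ContDiffAt ℝ n g x₀) (hf : ContDiffAt ℝ n f x₀)
    (hf₀ : ∀ k < n, iteratedDeriv k f x₀ = 0) :
    Tendsto (fun x => (g x)⁻¹ • f x) (𝓝[≠] x₀)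
      (𝓝 ((iteratedDeriv n g x₀)⁻¹ • iteratedDeriv n f x₀)) := by
  have hfact : (n ! : ℝ)⁻¹ ≠ 0 := inv_ne_zero (Nat.cast_ne_zero.mpr n.factorial_ne_zero)
  have cancel {c : ℝ} (hc : c ≠ 0) (t : ℝ) (v : E) : (c • t)⁻¹ • c • v = t⁻¹ • v := by
    rw [smul_eq_mul, mul_inv_rev, mul_smul, inv_smul_smul₀ hc]
  have hlim := ((tendsto_inv_sub_pow_smul hg hzero.1).inv₀ (smul_ne_zero hfact hzero.2)).smul
    (tendsto_inv_sub_pow_smul hf hf₀)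
  rw [cancel hfact] at hlim
  refine hlim.congr' ?_
  filter_upwards [self_mem_nhdsWithin] with x hx
  exact cancel (inv_ne_zero (pow_ne_zero n (sub_ne_zero.mpr hx))) (g x) (f x)

theorem inv_smul_isBigO_sub_pow {k : ℕ} {f : ℝ → E} (hzero : HasZeroOfOrder g x₀ n)
    (hg : ContDiffAt ℝ n g x₀) (hf : ContDiffAt ℝ (n + k : ℕ) f x₀)
    (hf₀ : ∀ j < n + k, iteratedDeriv j f x₀ = 0) :
    (fun x => (g x)⁻¹ • f x) =O[𝓝[≠] x₀] fun x => (x - x₀) ^ k := by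
  have hf_mul : f =O[𝓝[≠] x₀] fun x => g x * (x - x₀) ^ k := by
    refine ((isBigO_sub_pow hf hf₀).trans ?_).mono nhdsWithin_le_nhds
    simpa only [pow_add] using (hzero.sub_pow_isBigO hg).mul (isBigO_refl _ _)
  refine ((isBigO_refl (fun x => (g x)⁻¹) _).smul hf_mul).congr' .rfl ?_
  filter_upwards [hzero.eventually_ne_zero hg] with x hgx
  exact inv_mul_cancel_left₀ hgx _

end HasZeroOfOrder

end Taylor

theorem exists_abs_sub_mul_deriv_le {y : ℝ → ℝ} {x₀ x : ℝ} (hx : x₀ < x)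
    (hc : ContinuousOn y (Icc x (2 * x - x₀))) (hd : DifferentiableOn ℝ y (Ioo x (2 * x - x₀))) :
    ∃ ξ ∈ Ioo x (2 * x - x₀), |(ξ - x₀) * deriv y ξ| ≤ 2 * |y (2 * x - x₀) - y x| := by
  obtain ⟨ξ, hξ, hslope⟩ := exists_deriv_eq_slope y (by linarith : x < 2 * x - x₀) hc hd
  have hmul : (x - x₀) * deriv y ξ = y (2 * x - x₀) - y x := by
    rw [hslope, show 2 * x - x₀ - x = x - x₀ by ring, mul_div_cancel₀ _ (sub_pos.mpr hx).ne']
  refine ⟨ξ, hξ, ?_⟩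
  have hle : |ξ - x₀| ≤ 2 * |x - x₀| := by
    rw [abs_of_pos (sub_pos.mpr hx), abs_of_pos (sub_pos.mpr (hx.trans hξ.1))]
    linarith [hξ.2]
  calc |(ξ - x₀) * deriv y ξ| = |ξ - x₀| * |deriv y ξ| := abs_mul _ _
    _ ≤ 2 * |x - x₀| * |deriv y ξ| := by gcongr
    _ = 2 * |y (2 * x - x₀) - y x| := by rw [mul_assoc, ← abs_mul, hmul]

theorem mapClusterPt_sub_mul_deriv {y : ℝ → ℝ} {x₀ c : ℝ}
    (hd : ∀ᶠ x in 𝓝[>] x₀, DifferentiableAt ℝ y x) (hy : Tendsto y (𝓝[>] x₀) (𝓝 c)) :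
    MapClusterPt 0 (𝓝[>] x₀) fun x => (x - x₀) * deriv y x := by
  have htwice : Tendsto (fun x => 2 * x - x₀) (𝓝[>] x₀) (𝓝[>] x₀) := by
    refine tendsto_nhdsWithin_iff.mpr ⟨?_, ?_⟩
    · exact (Continuous.tendsto' (by fun_prop) x₀ x₀ (by ring)).mono_left nhdsWithin_le_nhds
    · filter_upwards [self_mem_nhdsWithin] with x (hx : x₀ < x)
      exact mem_Ioi.mpr (by linarith)
  obtain ⟨b, hb, hdb⟩ := mem_nhdsGT_iff_exists_Ioo_subset.mp hd
  have hmvt : ∀ᶠ x in 𝓝[>] x₀, ∃ ξ,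
      ξ ∈ Ioo x (2 * x - x₀) ∧ |(ξ - x₀) * deriv y ξ| ≤ 2 * |y (2 * x - x₀) - y x| := by
    filter_upwards [self_mem_nhdsWithin, htwice.eventually (Ioo_mem_nhdsGT hb)]
      with x (hx : x₀ < x) hx_twice
    have hdiff : ∀ t ∈ Icc x (2 * x - x₀), DifferentiableAt ℝ y t := fun t ht =>
      hdb ⟨hx.trans_le ht.1, ht.2.trans_lt hx_twice.2⟩
    exact exists_abs_sub_mul_deriv_le hx
      (fun t ht => (hdiff t ht).continuousAt.continuousWithinAt)
      (fun t ht => (hdiff t (Ioo_subset_Icc_self ht)).differentiableWithinAt)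
  obtain ⟨ξ, hξ⟩ := hmvt.choice
  have hξ_lim : Tendsto ξ (𝓝[>] x₀) (𝓝[>] x₀) := by
    refine tendsto_nhdsWithin_iff.mpr ⟨?_, ?_⟩
    · exact tendsto_of_tendsto_of_tendsto_of_le_of_le' (tendsto_id.mono_right nhdsWithin_le_nhds)
        (htwice.mono_right nhdsWithin_le_nhds) (hξ.mono fun _ h => h.1.1.le)
        (hξ.mono fun _ h => h.1.2.le)
    · filter_upwards [self_mem_nhdsWithin, hξ] with x (hx : x₀ < x) h using hx.trans h.1.1
  have hincrement : Tendsto (fun x => 2 * |y (2 * x - x₀) - y x|) (𝓝[>] x₀) (𝓝 0) := by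
    simpa using ((hy.comp htwice).sub hy).abs.const_mul 2
  exact .of_comp hξ_lim (squeeze_zero_norm' (hξ.mono fun _ h => h.2) hincrement).mapClusterPt

section SingularEquation

variable {E : Type*} [NormedAddCommGroup E] [NormedSpace ℝ E] {x₀ : ℝ}

theorem eq_of_tendsto_smul_deriv_add {s : ℝ → ℝ} {y : ℝ → E} {c l : E}
    (hs : s =O[𝓝[>] x₀] fun x => x - x₀) (hd : ∀ᶠ x in 𝓝[>] x₀, DifferentiableAt ℝ y x)
    (hy : Tendsto y (𝓝[>] x₀) (𝓝 c))
    (hl : Tendsto (fun x => s x • deriv y x + y x) (𝓝[>] x₀) (𝓝 l)) : c = l := by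
  -- The mean value theorem needs real values, so `y` is tested against functionals.
  refine (SeparatingDual.eq_iff_forall_dual_eq (R := ℝ)).mpr fun φ => ?_
  have hφy : Tendsto (φ ∘ y) (𝓝[>] x₀) (𝓝 (φ c)) := (φ.continuous.tendsto c).comp hy
  obtain ⟨U, hU, hU_lim⟩ := mapClusterPt_iff_ultrafilter.mp <| mapClusterPt_sub_mul_deriv
    (hd.mono fun x hx => φ.differentiableAt.comp x hx) hφy
  have hterm : Tendsto (fun x => s x * deriv (φ ∘ y) x) U (𝓝 0) :=
    ((hs.mono hU).mul (isBigO_refl _ _)).trans_tendsto hU_lim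
  have hsum : Tendsto (fun x => s x * deriv (φ ∘ y) x + φ (y x)) U (𝓝 (φ l)) := by
    refine (((φ.continuous.tendsto l).comp hl).mono_left hU).congr' ?_
    filter_upwards [hU hd] with x hx
    rw [(φ.hasFDerivAt.comp_hasDerivAt x hx.hasDerivAt).deriv]
    simp only [Function.comp_apply, map_add, map_smul, smul_eq_mul]
  refine tendsto_nhds_unique (?_ : Tendsto _ (U : Filter ℝ) _) hsum
  simpa only [zero_add] using! hterm.add (hφy.mono_left hU)

theorem boundary_condition_general {n : ℕ} {p q : ℝ → ℝ} {r : ℝ → E}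
    (hp : ContDiffAt ℝ (n + 1 : ℕ) p x₀) (hq : ContDiffAt ℝ n q x₀) (hr : ContDiffAt ℝ n r x₀)
    (hp₀ : ∀ k ≤ n, iteratedDeriv k p x₀ = 0) (hq₀ : HasZeroOfOrder q x₀ n)
    (hr₀ : ∀ k < n, iteratedDeriv k r x₀ = 0) :
    Tendsto (fun x => (q x)⁻¹ • r x) (𝓝[≠] x₀)
      (𝓝 ((iteratedDeriv n q x₀)⁻¹ • iteratedDeriv n r x₀)) ∧
    ∀ y : ℝ → E, ContinuousAt y x₀ → (∀ᶠ x in 𝓝[≠] x₀, DifferentiableAt ℝ y x) →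
      (∀ᶠ x in 𝓝[≠] x₀, p x • deriv y x + q x • y x = r x) →
      y x₀ = (iteratedDeriv n q x₀)⁻¹ • iteratedDeriv n r x₀ := by
  have hlim := hq₀.tendsto_inv_smul hq hr hr₀
  refine ⟨hlim, fun y hy hd hode => ?_⟩
  have hright : 𝓝[>] x₀ ≤ 𝓝[≠] x₀ := nhdsGT_le_nhdsNE x₀
  have hquot : (fun x => (q x)⁻¹ • p x) =O[𝓝[≠] x₀] fun x => x - x₀ := by
    simpa only [pow_one] using
      hq₀.inv_smul_isBigO_sub_pow hq hp fun k hk => hp₀ k (Nat.lt_succ_iff.mp hk)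
  refine eq_of_tendsto_smul_deriv_add (hquot.mono hright) (hright hd)
    (hy.mono_left nhdsWithin_le_nhds) ((hlim.congr' ?_).mono_left hright)
  filter_upwards [hode, hq₀.eventually_ne_zero hq] with x hx hqx
  rw [← hx, smul_add, inv_smul_smul₀ hqx, smul_assoc]

end SingularEquation

/-- **Appendix B, boundary condition.**  If `p` has a zero of order `l_p` at `xh` and
`q` a zero of order `l_q < l_p` with `l_q ≤ l_r`, then `r/q` converges at `xh` to
`r^{(l_q)}(xh)/q^{(l_q)}(xh)` (which is `0` when `l_q < l_r`), and every `C¹` solution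
of `p y' + q y = r` on `(a,b)` takes this value at `xh`. -/
theorem boundary_condition
    (a b xh : ℝ) (hx : xh ∈ Ioo a b) (m : ℕ∞)
    (p q r : ℝ → ℝ) (lp lq lr : ℕ)
    (hpC : ContDiffOn ℝ m p (Ioo a b))
    (hqC : ContDiffOn ℝ m q (Ioo a b))
    (hrC : ContDiffOn ℝ m r (Ioo a b))
    (hlpm : (lp : ℕ∞) < m) (hlqm : (lq : ℕ∞) < m)
    (hzp : HasZeroOfOrder p xh lp)
    (hzq : HasZeroOfOrder q xh lq)
    (hzr : HasZeroOfOrder r xh lr)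
    (hnop : ∀ x ∈ Ioo a b, x ≠ xh → p x ≠ 0)
    (hnoq : ∀ x ∈ Ioo a b, x ≠ xh → q x ≠ 0)
    (hqp : lq < lp) (hqr : lq ≤ lr) :
    Tendsto (fun x => r x / q x) (nhdsWithin xh (Ioo a b \ {xh}))
      (nhds (iteratedDeriv lq r xh / iteratedDeriv lq q xh)) ∧
    (lq < lr → iteratedDeriv lq r xh / iteratedDeriv lq q xh = 0) ∧
    ∀ y : ℝ → ℝ, ContDiffOn ℝ 1 y (Ioo a b) →
      (∀ x ∈ Ioo a b, p x * deriv y x + q x * y x = r x) →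
      y xh = iteratedDeriv lq r xh / iteratedDeriv lq q xh := by
  have hU : Ioo a b ∈ 𝓝 xh := isOpen_Ioo.mem_nhds hx
  have hlq : ((lq : ℕ) : WithTop ℕ∞) ≤ m := by exact_mod_cast hlqm.le
  have hlp : ((lq + 1 : ℕ) : WithTop ℕ∞) ≤ m := by
    exact_mod_cast (Nat.cast_le.mpr hqp).trans hlpm.le
  obtain ⟨hlim, hval⟩ := boundary_condition_general ((hpC.contDiffAt hU).of_le hlp)
    ((hqC.contDiffAt hU).of_le hlq) ((hrC.contDiffAt hU).of_le hlq)
    (fun k hk => hzp.1 k (hk.trans_lt hqp)) hzq (fun k hk => hzr.1 k (hk.trans_le hqr))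
  simp only [smul_eq_mul, ← div_eq_inv_mul] at hlim hval
  refine ⟨hlim.mono_left (nhdsWithin_mono xh fun _ h => h.2),
    fun h => by rw [hzr.1 lq h, zero_div], fun y hy hode => ?_⟩
  have hyd : ∀ᶠ x in 𝓝 xh, DifferentiableAt ℝ y x :=
    (hy.differentiableOn one_ne_zero).eventually_differentiableAt hU
  exact hval y (hy.continuousOn.continuousAt hU) (hyd.filter_mono nhdsWithin_le_nhds)
    ((eventually_of_mem hU hode).filter_mono nhdsWithin_le_nhds)

end SingularODE15
end

section
/- (Proposition B(i), regular case.) Consider the ODE p y′ + q y = r on U = (a,b), where p, q, r ∈ C^m(U), p has a zero of order l_p at x̂ ∈ U and q a zero of order l_q at x̂ (l_p, l_q < m), p and q have no other zeros in U, and r has a zero of order l_r ≥ l_p at x̂. Suppose l_p ≤ l_q. Then the solutions of the ODE belonging to C^{m−l_p+1}(U) form a one-parameter family: any antiderivative w of q/p on U is of class C^{m−l_p+1}, the function x ↦ e^{−w(x)} ( c + ∫^x e^{w(s)} r(s)/p(s) ds ) is, for every c ∈ ℝ, a solution in C^{m−l_p+1}(U), and every C¹ solution on U is of this form. -/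
/- Statement 16 (Proposition B(i), regular case l_p ≤ l_q, l_r ≥ l_p): the C¹
solutions of p y' + q y = r on U = (a,b) form the one-parameter family
y = e^{-w}(c + W), where w is an antiderivative of (the continuous extension of) q/p
and W one of e^w r/p; all these solutions are of class C^{m-l_p+1}(U). -/

open Set

namespace SingularODE16

/-- `g` has a zero of order `l` at `xh`. -/
def HasZeroOfOrder (g : ℝ → ℝ) (xh : ℝ) (l : ℕ) : Prop :=
  (∀ k < l, iteratedDeriv k g xh = 0) ∧ iteratedDeriv l g xh ≠ 0

/-!
Taylor's formula with integral remainder shows that a function `f` of class `C^(n+l)` whose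
derivatives of order `< l` vanish at `xh` is `(x - xh)^l F(x)`, where `F` is a weighted average of
`f^(l)` over the segment from `xh` to `x`. Differentiating under the integral sign, `F` is of class
`C^n`. Dividing `p` by `(x - xh)^lp` in this way leaves a function without zeros, so the equations
`p h = q` and `p ρ = r` have solutions `h` and `ρ` of class `C^(m-lp)`.

Away from `xh` the ODE therefore reads `y' = ρ - h y`, and by continuity this holds at `xh` too.
With `w' = h` it becomes `(e^w y)' = e^w ρ`, and each antiderivative gains one derivative.
-/

variable {E : Type*} [NormedAddCommGroup E] [NormedSpace ℝ E]

section ParametricIntegral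

open Function

lemma continuousOn_parametric_intervalIntegral {X : Type*} [TopologicalSpace X]
    [FirstCountableTopology X] [LocallyCompactSpace X] {s : Set X} (hs : IsOpen s)
    {a b : ℝ} {f : X → ℝ → E} (hf : ContinuousOn (uncurry f) (s ×ˢ uIcc a b)) :
    ContinuousOn (fun x => ∫ t in a..b, f x t) s := by
  have : LocallyCompactSpace s := hs.locallyCompactSpace
  rw [continuousOn_iff_continuous_domRestrict]
  -- Projecting `t` to `[a, b]` makes the integrand continuous for all real `t`.
  have hproj : Continuous fun x : s => ∫ t in a..b,
      f x (projIcc (min a b) (max a b) min_le_max t) :=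
    intervalIntegral.continuous_parametric_intervalIntegral_of_continuous'
      (f := fun (x : s) t => f x (projIcc (min a b) (max a b) min_le_max t))
      (hf.comp_continuous
        (f := fun z : s × ℝ => ((z.1 : X), (projIcc (min a b) (max a b) min_le_max z.2 : ℝ)))
        (by fun_prop) fun z => ⟨z.1.2, Subtype.coe_prop _⟩) a b
  refine hproj.congr fun x => intervalIntegral.integral_congr fun t ht => ?_
  simp only [projIcc_of_mem min_le_max ht]

lemma hasDerivAt_parametric_intervalIntegral {s : Set ℝ} (hs : IsOpen s) {a b : ℝ}
    {f f' : ℝ → ℝ → E} (hf : ∀ x ∈ s, ContinuousOn (f x) (uIcc a b))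
    (hf' : ContinuousOn (uncurry f') (s ×ˢ uIcc a b))
    (hderiv : ∀ x ∈ s, ∀ t ∈ uIcc a b, HasDerivAt (f · t) (f' x t) x) {x : ℝ} (hx : x ∈ s) :
    HasDerivAt (fun x => ∫ t in a..b, f x t) (∫ t in a..b, f' x t) x := by
  obtain ⟨K, hK, hxK, hKs⟩ := exists_compact_subset hs hx
  obtain ⟨C, hC⟩ := (hK.prod isCompact_uIcc).exists_bound_of_continuousOn
    (hf'.mono (prod_mono_left hKs))
  have hfx' : ContinuousOn (f' x) (uIcc a b) :=
    hf'.comp (f := fun t => (x, t)) (by fun_prop) fun t ht => ⟨hx, ht⟩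
  refine (intervalIntegral.hasDerivAt_integral_of_dominated_loc_of_deriv_le (bound := fun _ => C)
    (mem_interior_iff_mem_nhds.1 hxK) ?_ (hf x hx).intervalIntegrable
    hfx'.intervalIntegrable.aestronglyMeasurable_restrict_uIoc
    ?_ intervalIntegrable_const ?_).2
  · filter_upwards [hs.mem_nhds hx] with z hz
    exact (hf z hz).intervalIntegrable.aestronglyMeasurable_restrict_uIoc
  · exact .of_forall fun t ht z hz => hC (z, t) ⟨hz, uIoc_subset_uIcc ht⟩
  · exact .of_forall fun t ht z hz => hderiv z (hKs hz) t (uIoc_subset_uIcc ht)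

end ParametricIntegral

section SegmentAverage

/-- The average of `φ` over the segment from `x₀` to `x`, parametrized by `[0, 1]` and weighted by
`ω`. The integral remainder of Taylor's formula at `x₀` has this form up to a power of `x - x₀`. -/
noncomputable def segmentAverage (x₀ : ℝ) (ω : ℝ → ℝ) (φ : ℝ → E) (x : ℝ) : E :=
  ∫ t in (0 : ℝ)..1, ω t • φ (x₀ + t * (x - x₀))

variable {x₀ : ℝ} {s : Set ℝ} {ω : ℝ → ℝ} {φ : ℝ → E}

lemma mapsTo_add_mul_sub (hs : StarConvex ℝ x₀ s) :
    MapsTo (fun z : ℝ × ℝ => x₀ + z.2 * (z.1 - x₀)) (s ×ˢ uIcc 0 1) s := by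
  rintro ⟨x, t⟩ ⟨hx, ht⟩
  rw [uIcc_of_le zero_le_one] at ht
  exact hs.add_smul_sub_mem hx ht.1 ht.2

lemma continuousOn_uncurry_smul_segment (hs : StarConvex ℝ x₀ s)
    (hω : ContinuousOn ω (uIcc 0 1)) (hφ : ContinuousOn φ s) :
    ContinuousOn (Function.uncurry fun x t => ω t • φ (x₀ + t * (x - x₀))) (s ×ˢ uIcc 0 1) :=
  (hω.comp continuousOn_snd fun _ hz => hz.2).smul
    (hφ.comp (by fun_prop) (mapsTo_add_mul_sub hs))

lemma hasDerivAt_segmentAverage (hso : IsOpen s) (hs : StarConvex ℝ x₀ s)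
    (hω : ContinuousOn ω (uIcc 0 1)) (hφ : DifferentiableOn ℝ φ s)
    (hφ' : ContinuousOn (deriv φ) s) {x : ℝ} (hx : x ∈ s) :
    HasDerivAt (segmentAverage x₀ ω φ)
      (segmentAverage x₀ (fun t => ω t * t) (deriv φ) x) x := by
  refine hasDerivAt_parametric_intervalIntegral hso
    (f := fun x t => ω t • φ (x₀ + t * (x - x₀)))
    (fun z hz => (continuousOn_uncurry_smul_segment hs hω hφ.continuousOn).comp
      (f := fun t => (z, t)) (by fun_prop) fun t ht => ⟨hz, ht⟩)
    (continuousOn_uncurry_smul_segment hs (hω.mul continuousOn_id) hφ') (fun z hz t ht => ?_) hx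
  have hmem : x₀ + t * (z - x₀) ∈ s := mapsTo_add_mul_sub hs (x := (z, t)) ⟨hz, ht⟩
  have houter := (hφ.differentiableAt (hso.mem_nhds hmem)).hasDerivAt
  have hinner : HasDerivAt (fun z : ℝ => x₀ + t * (z - x₀)) t z := by
    simpa using (((hasDerivAt_id z).sub_const x₀).const_mul t).const_add x₀
  exact ((houter.scomp z hinner).const_smul (ω t)).congr_deriv (smul_smul _ _ _)

lemma contDiffOn_segmentAverage {n : ℕ∞} (hso : IsOpen s) (hs : StarConvex ℝ x₀ s)
    (hω : ContinuousOn ω (uIcc 0 1)) (hφ : ContDiffOn ℝ n φ s) :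
    ContDiffOn ℝ n (segmentAverage x₀ ω φ) s := by
  rw [contDiffOn_iff_forall_nat_le] at hφ ⊢
  intro k hk
  specialize hφ k hk
  clear hk
  induction k generalizing ω φ with
  | zero =>
    simp only [Nat.cast_zero, contDiffOn_zero] at hφ ⊢
    exact continuousOn_parametric_intervalIntegral hso
      (continuousOn_uncurry_smul_segment hs hω hφ)
  | succ k ih =>
    push_cast at hφ ⊢
    rw [contDiffOn_succ_iff_deriv_of_isOpen hso] at hφ ⊢
    have hderiv : ∀ x ∈ s, HasDerivAt (segmentAverage x₀ ω φ)
        (segmentAverage x₀ (fun t => ω t * t) (deriv φ) x) x := fun x hx =>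
      hasDerivAt_segmentAverage hso hs hω hφ.1 hφ.2.2.continuousOn hx
    exact ⟨fun x hx => (hderiv x hx).differentiableAt.differentiableWithinAt, by simp,
      (ih (hω.mul continuousOn_id) hφ.2.2).congr fun x hx => (hderiv x hx).deriv⟩

lemma segmentAverage_self [CompleteSpace E] (x₀ : ℝ) (ω : ℝ → ℝ) (φ : ℝ → E) :
    segmentAverage x₀ ω φ x₀ = (∫ t in (0 : ℝ)..1, ω t) • φ x₀ := by
  simp [segmentAverage, intervalIntegral.integral_smul_const]

end SegmentAverage

section HadamardDivision

variable {x₀ : ℝ} {s : Set ℝ} {f : ℝ → E}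

lemma contDiffOn_iteratedDeriv {n : ℕ∞} {l : ℕ} (hs : IsOpen s)
    (hf : ContDiffOn ℝ (n + l) f s) : ContDiffOn ℝ n (iteratedDeriv l f) s := by
  rw [iteratedDeriv_eq_equiv_comp]
  exact fun x hx => ((LinearIsometryEquiv.contDiff _).contDiffAt.comp x
    ((hf.contDiffAt (hs.mem_nhds hx)).iteratedFDeriv_right le_rfl)).contDiffWithinAt

variable [CompleteSpace E]

lemma eq_pow_smul_segmentAverage {l : ℕ} (hso : IsOpen s) (hs : StarConvex ℝ x₀ s)
    (hf : ContDiffOn ℝ (l + 1) f s) (hz : ∀ k < l + 1, iteratedDeriv k f x₀ = 0) {x : ℝ}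
    (hx : x ∈ s) :
    f x = (x - x₀) ^ (l + 1) • (l.factorial : ℝ)⁻¹ •
      segmentAverage x₀ (fun t => (1 - t) ^ l) (iteratedDeriv (l + 1) f) x := by
  have htaylor := map_add_eq_sum_add_integral_iteratedFDeriv (x := x₀) (y := x - x₀) (n := l)
    fun t ht => hf.contDiffAt (hso.mem_nhds (hs.add_smul_sub_mem hx ht.1 ht.2))
  have hvanish : ∀ k ∈ Finset.range (l + 1),
      (k.factorial : ℝ)⁻¹ • (x - x₀) ^ k • iteratedDeriv k f x₀ = 0 := fun k hk => by
    rw [hz k (Finset.mem_range.1 hk), smul_zero, smul_zero]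
  simp only [iteratedFDeriv_apply_eq_iteratedDeriv_mul_prod, Finset.prod_const, Finset.card_univ,
    Fintype.card_fin, Finset.sum_eq_zero hvanish, zero_add, add_sub_cancel, smul_eq_mul] at htaylor
  simp only [htaylor, segmentAverage, smul_comm _ ((x - x₀) ^ (l + 1)),
    intervalIntegral.integral_smul]

/-- **Hadamard's division lemma.** -/
lemma exists_contDiffOn_eq_pow_smul {n : ℕ∞} {l : ℕ} (hso : IsOpen s) (hs : StarConvex ℝ x₀ s)
    (hf : ContDiffOn ℝ (n + l) f s) (hz : ∀ k < l, iteratedDeriv k f x₀ = 0) :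
    ∃ F : ℝ → E, ContDiffOn ℝ n F s ∧ (∀ x ∈ s, f x = (x - x₀) ^ l • F x) ∧
      F x₀ = (l.factorial : ℝ)⁻¹ • iteratedDeriv l f x₀ := by
  cases l with
  | zero => exact ⟨f, by simpa using hf, by simp, by simp⟩
  | succ l =>
    refine ⟨(l.factorial : ℝ)⁻¹ •
        segmentAverage x₀ (fun t => (1 - t) ^ l) (iteratedDeriv (l + 1) f),
      (contDiffOn_segmentAverage hso hs (by fun_prop)
        (contDiffOn_iteratedDeriv hso hf)).const_smul _,
      fun x hx => eq_pow_smul_segmentAverage hso hs (hf.of_le (by simp)) hz hx, ?_⟩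
    have hweight : ∫ t in (0 : ℝ)..1, (1 - t) ^ l = (l + 1 : ℝ)⁻¹ := by
      simp [intervalIntegral.integral_comp_sub_left fun t : ℝ => t ^ l]
    rw [Pi.smul_apply, segmentAverage_self, hweight, smul_smul, Nat.factorial_succ]
    push_cast
    rw [mul_inv_rev]

lemma HasZeroOfOrder.exists_contDiffOn_smul_eq {n : ℕ∞} {l : ℕ} {p : ℝ → ℝ} (hso : IsOpen s)
    (hs : StarConvex ℝ x₀ s) (hzp : HasZeroOfOrder p x₀ l) (hp : ContDiffOn ℝ (n + l) p s)
    (hp₀ : ∀ x ∈ s, x ≠ x₀ → p x ≠ 0) (hf : ContDiffOn ℝ (n + l) f s)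
    (hzf : ∀ k < l, iteratedDeriv k f x₀ = 0) :
    ∃ F : ℝ → E, ContDiffOn ℝ n F s ∧ ∀ x ∈ s, p x • F x = f x := by
  obtain ⟨P, hP, hPeq, hPx₀⟩ := exists_contDiffOn_eq_pow_smul hso hs hp hzp.1
  obtain ⟨G, hG, hGeq, -⟩ := exists_contDiffOn_eq_pow_smul hso hs hf hzf
  have hPne : ∀ x ∈ s, P x ≠ 0 := fun x hx => by
    rcases eq_or_ne x x₀ with rfl | hne
    · simpa [hPx₀, Nat.factorial_ne_zero] using hzp.2
    · exact right_ne_zero_of_smul (hPeq x hx ▸ hp₀ x hx hne)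
  refine ⟨fun x => (P x)⁻¹ • G x, (hP.inv hPne).smul hG, fun x hx => ?_⟩
  rw [hPeq x hx, hGeq x hx, smul_eq_mul, mul_smul, smul_inv_smul₀ (hPne x hx)]

end HadamardDivision

lemma eqOn_of_forall_ne {X Y : Type*} [TopologicalSpace X] [TopologicalSpace Y] [T2Space Y]
    {x₀ : X} [(nhdsWithin x₀ {x₀}ᶜ).NeBot] {s : Set X} (hs : IsOpen s) {u v : X → Y}
    (hu : ContinuousOn u s) (hv : ContinuousOn v s) (h : ∀ x ∈ s, x ≠ x₀ → u x = v x) :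
    EqOn u v s :=
  EqOn.of_subset_closure (fun x hx => h x hx.1 hx.2) hu hv inter_subset_left
    ((dense_compl_singleton x₀).open_subset_closure_inter hs)

lemma eqOn_iff_forall_eq_inv_smul {x₀ : ℝ} {s : Set ℝ} {p : ℝ → ℝ} {f F G : ℝ → E}
    (hs : IsOpen s) (hp₀ : ∀ x ∈ s, x ≠ x₀ → p x ≠ 0) (hF : ContinuousOn F s)
    (hpF : ∀ x ∈ s, p x • F x = f x) (hG : ContinuousOn G s) :
    EqOn G F s ↔ ∀ x ∈ s, p x ≠ 0 → G x = (p x)⁻¹ • f x := by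
  have hFinv : ∀ x ∈ s, p x ≠ 0 → F x = (p x)⁻¹ • f x := fun x hx hpx =>
    (eq_inv_smul_iff₀ hpx).2 (hpF x hx)
  exact ⟨fun h x hx hpx => (h hx).trans (hFinv x hx hpx), fun h =>
    eqOn_of_forall_ne hs hG hF fun x hx hne =>
      (h x hx (hp₀ x hx hne)).trans (hFinv x hx (hp₀ x hx hne)).symm⟩

section Antiderivative

variable {s : Set ℝ} {u w : ℝ → E}

lemma exists_hasDerivAt_of_continuousOn [CompleteSpace E] (hso : IsOpen s) (hs : Convex ℝ s)
    (hu : ContinuousOn u s) : ∃ w : ℝ → E, ∀ x ∈ s, HasDerivAt w (u x) x := by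
  rcases s.eq_empty_or_nonempty with rfl | ⟨x₀, hx₀⟩
  · exact ⟨0, by simp⟩
  refine ⟨fun x => ∫ t in x₀..x, u t, fun x hx => ?_⟩
  exact intervalIntegral.integral_hasDerivAt_right
    (hu.mono (hs.ordConnected.uIcc_subset hx₀ hx)).intervalIntegrable
    (hu.stronglyMeasurableAtFilter hso x hx) (hu.continuousAt (hso.mem_nhds hx))

lemma contDiffOn_succ_of_hasDerivAt {n : ℕ∞} (hs : IsOpen s) (hu : ContDiffOn ℝ n u s)
    (hw : ∀ x ∈ s, HasDerivAt w (u x) x) : ContDiffOn ℝ (n + 1) w s := by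
  rw [contDiffOn_succ_iff_deriv_of_isOpen hs]
  exact ⟨fun x hx => (hw x hx).differentiableAt.differentiableWithinAt, by simp,
    hu.congr fun x hx => (hw x hx).deriv⟩

end Antiderivative

section LinearODE

variable {s : Set ℝ} {h w : ℝ → ℝ} {ρ W y : ℝ → E}

lemma hasDerivAt_exp_neg_smul {x : ℝ} (hw : HasDerivAt w (h x) x)
    (hW : HasDerivAt W (Real.exp (w x) • ρ x) x) (c : E) :
    HasDerivAt (fun x => Real.exp (-w x) • (c + W x))
      (ρ x - h x • Real.exp (-w x) • (c + W x)) x := by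
  refine (hw.fun_neg.exp.smul (hW.const_add c)).congr_deriv ?_
  rw [smul_smul, smul_smul, ← Real.exp_add, neg_add_cancel, Real.exp_zero, one_smul, mul_neg,
    neg_smul, ← sub_eq_add_neg, mul_comm]

lemma forall_hasDerivAt_sub_smul_iff_exists_eqOn (hso : IsOpen s) (hs : IsPreconnected s)
    (hw : ∀ x ∈ s, HasDerivAt w (h x) x) (hW : ∀ x ∈ s, HasDerivAt W (Real.exp (w x) • ρ x) x) :
    (∀ x ∈ s, HasDerivAt y (ρ x - h x • y x) x) ↔
      ∃ c : E, EqOn y (fun x => Real.exp (-w x) • (c + W x)) s := by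
  constructor
  · intro hy
    have hexp : ∀ x ∈ s,
        HasDerivAt (fun x => Real.exp (w x) • y x) (Real.exp (w x) • ρ x) x := fun x hx => by
      refine ((hw x hx).exp.smul (hy x hx)).congr_deriv ?_
      rw [smul_sub, smul_smul, sub_add_cancel]
    obtain ⟨c, hc⟩ := hso.exists_eq_add_of_deriv_eq hs
      (fun x hx => (hexp x hx).differentiableAt.differentiableWithinAt)
      (fun x hx => (hW x hx).differentiableAt.differentiableWithinAt)
      fun x hx => (hexp x hx).deriv.trans (hW x hx).deriv.symm
    refine ⟨c, fun x hx => ?_⟩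
    have hcx : Real.exp (w x) • y x = c + W x := (hc hx).trans (add_comm _ _)
    simp only [← hcx, smul_smul, ← Real.exp_add, neg_add_cancel, Real.exp_zero, one_smul]
  · rintro ⟨c, hc⟩ x hx
    rw [hc hx]
    exact (hasDerivAt_exp_neg_smul (hw x hx) (hW x hx) c).congr_of_eventuallyEq
      (hc.eventuallyEq_of_mem (hso.mem_nhds hx))

lemma smul_deriv_add_smul_eq_iff_hasDerivAt {x₀ : ℝ} {p q : ℝ → ℝ} {r : ℝ → E} (hs : IsOpen s)
    (hp₀ : ∀ x ∈ s, x ≠ x₀ → p x ≠ 0) (hh : ContinuousOn h s) (hρ : ContinuousOn ρ s)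
    (hph : ∀ x ∈ s, p x * h x = q x) (hpρ : ∀ x ∈ s, p x • ρ x = r x)
    (hy : ContDiffOn ℝ 1 y s) :
    (∀ x ∈ s, p x • deriv y x + q x • y x = r x) ↔
      ∀ x ∈ s, HasDerivAt y (ρ x - h x • y x) x := by
  constructor
  · intro hode x hx
    have hderiv : EqOn (deriv y) (fun x => ρ x - h x • y x) s :=
      eqOn_of_forall_ne (x₀ := x₀) hs (hy.continuousOn_deriv_of_isOpen hs le_rfl)
        (hρ.sub (hh.smul hy.continuousOn)) fun x hx hne => by
          apply (smul_right_inj (hp₀ x hx hne)).1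
          rw [smul_sub, hpρ x hx, smul_smul, hph x hx, ← hode x hx, add_sub_cancel_right]
    exact ((hy.differentiableOn one_ne_zero).differentiableAt
      (hs.mem_nhds hx)).hasDerivAt.congr_deriv (hderiv hx)
  · intro hode x hx
    rw [(hode x hx).deriv, smul_sub, hpρ x hx, smul_smul, hph x hx, sub_add_cancel]

end LinearODE

lemma coe_add_natCast_sub_natCast (n : ℕ∞) (l : ℕ) :
    ((n + l : ℕ∞) : WithTop ℕ∞) - l = n :=
  congrArg WithTop.some ((ENat.addLECancellable_natCast l).add_tsub_cancel_right)

theorem one_parameter_family_general [CompleteSpace E] {U : Set ℝ} (hU : IsOpen U)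
    (hUc : Convex ℝ U) {xh : ℝ} (hx : xh ∈ U) {m : ℕ∞} {p q : ℝ → ℝ} {r : ℝ → E} {l : ℕ}
    (hpC : ContDiffOn ℝ m p U) (hqC : ContDiffOn ℝ m q U) (hrC : ContDiffOn ℝ m r U)
    (hlm : l ≤ m) (hzp : HasZeroOfOrder p xh l)
    (hzq : ∀ k < l, iteratedDeriv k q xh = 0) (hzr : ∀ k < l, iteratedDeriv k r xh = 0)
    (hnop : ∀ x ∈ U, x ≠ xh → p x ≠ 0) :
    (∃ h : ℝ → ℝ, ContinuousOn h U ∧ ∀ x ∈ U, p x ≠ 0 → h x = q x / p x) ∧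
    ∀ h : ℝ → ℝ, ContinuousOn h U → (∀ x ∈ U, p x ≠ 0 → h x = q x / p x) →
      (∃ w : ℝ → ℝ, ∀ x ∈ U, HasDerivAt w (h x) x) ∧
      ∀ w : ℝ → ℝ, (∀ x ∈ U, HasDerivAt w (h x) x) →
        ContDiffOn ℝ (m - l + 1) w U ∧
        ((∃ g : ℝ → E, ContinuousOn g U ∧
          ∀ x ∈ U, p x ≠ 0 → g x = (p x)⁻¹ • Real.exp (w x) • r x) ∧
        ∀ g : ℝ → E, ContinuousOn g U →
          (∀ x ∈ U, p x ≠ 0 → g x = (p x)⁻¹ • Real.exp (w x) • r x) →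
          (∃ W : ℝ → E, ∀ x ∈ U, HasDerivAt W (g x) x) ∧
          ∀ W : ℝ → E, (∀ x ∈ U, HasDerivAt W (g x) x) →
            (∀ c : E,
              ContDiffOn ℝ (m - l + 1) (fun x => Real.exp (-w x) • (c + W x)) U ∧
              ∀ x ∈ U, p x • deriv (fun x => Real.exp (-w x) • (c + W x)) x +
                q x • Real.exp (-w x) • (c + W x) = r x) ∧
            ∀ y : ℝ → E, ContDiffOn ℝ 1 y U →
              (∀ x ∈ U, p x • deriv y x + q x • y x = r x) →
              ∃ c : E, EqOn y (fun x => Real.exp (-w x) • (c + W x)) U) := by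
  obtain ⟨n, rfl⟩ : ∃ n, m = n + l := ⟨m - l, (tsub_add_cancel_of_le hlm).symm⟩
  rw [coe_add_natCast_sub_natCast]
  have hUx : StarConvex ℝ xh U := hUc.starConvex hx
  obtain ⟨η, hηC, hpη⟩ := hzp.exists_contDiffOn_smul_eq hU hUx hpC hnop hqC hzq
  obtain ⟨ρ, hρC, hpρ⟩ := hzp.exists_contDiffOn_smul_eq hU hUx hpC hnop hrC hzr
  simp only [div_eq_inv_mul]
  have hηq (h : ℝ → ℝ) (hh : ContinuousOn h U) :
      EqOn h η U ↔ ∀ x ∈ U, p x ≠ 0 → h x = (p x)⁻¹ * q x :=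
    eqOn_iff_forall_eq_inv_smul hU hnop hηC.continuousOn hpη hh
  refine ⟨⟨η, hηC.continuousOn, (hηq η hηC.continuousOn).1 (eqOn_refl η U)⟩, fun h hh hhq => ?_⟩
  have hhη : EqOn h η U := (hηq h hh).2 hhq
  refine ⟨exists_hasDerivAt_of_continuousOn hU hUc hh, fun w hw => ?_⟩
  have hwC : ContDiffOn ℝ (n + 1) w U := contDiffOn_succ_of_hasDerivAt hU (hηC.congr hhη) hw
  have hγC : ContDiffOn ℝ n (fun x => Real.exp (w x) • ρ x) U :=
    (hwC.of_le le_self_add).exp.smul hρC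
  have hγr (g : ℝ → E) (hg : ContinuousOn g U) : EqOn g (fun x => Real.exp (w x) • ρ x) U ↔
      ∀ x ∈ U, p x ≠ 0 → g x = (p x)⁻¹ • Real.exp (w x) • r x :=
    eqOn_iff_forall_eq_inv_smul hU hnop hγC.continuousOn
      (fun x hxU => by rw [smul_comm, hpρ x hxU]) hg
  refine ⟨hwC, ⟨_, hγC.continuousOn, (hγr _ hγC.continuousOn).1 (eqOn_refl _ U)⟩,
    fun g hg hgr => ?_⟩
  have hgρ : EqOn g (fun x => Real.exp (w x) • ρ x) U := (hγr g hg).2 hgr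
  refine ⟨exists_hasDerivAt_of_continuousOn hU hUc hg, fun W hW => ?_⟩
  have hWC : ContDiffOn ℝ (n + 1) W U := contDiffOn_succ_of_hasDerivAt hU (hγC.congr hgρ) hW
  have hWρ : ∀ x ∈ U, HasDerivAt W (Real.exp (w x) • ρ x) x := fun x hxU =>
    (hW x hxU).congr_deriv (hgρ hxU)
  have hyC : ∀ c, ContDiffOn ℝ (n + 1) (fun x => Real.exp (-w x) • (c + W x)) U := fun c =>
    hwC.neg.exp.smul (contDiffOn_const.add hWC)
  have hode (y : ℝ → E) (hy : ContDiffOn ℝ 1 y U) :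
      (∀ x ∈ U, p x • deriv y x + q x • y x = r x) ↔
        ∃ c : E, EqOn y (fun x => Real.exp (-w x) • (c + W x)) U :=
    (smul_deriv_add_smul_eq_iff_hasDerivAt hU hnop hh hρC.continuousOn
      (fun x hxU => hhη hxU ▸ hpη x hxU) hpρ hy).trans
      (forall_hasDerivAt_sub_smul_iff_exists_eqOn hU hUc.isPreconnected hw hWρ)
  exact ⟨fun c => ⟨hyC c, (hode _ ((hyC c).of_le le_add_self)).2 ⟨c, eqOn_refl _ U⟩⟩,
    fun y hy => (hode y hy).1⟩

/-- **Proposition B(i) (regular case).** -/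
theorem one_parameter_family
    (a b xh : ℝ) (hx : xh ∈ Ioo a b) (m : ℕ∞)
    (p q r : ℝ → ℝ) (lp lq lr : ℕ)
    (hpC : ContDiffOn ℝ m p (Ioo a b))
    (hqC : ContDiffOn ℝ m q (Ioo a b))
    (hrC : ContDiffOn ℝ m r (Ioo a b))
    (hlpm : (lp : ℕ∞) < m) (hlqm : (lq : ℕ∞) < m)
    (hzp : HasZeroOfOrder p xh lp)
    (hzq : HasZeroOfOrder q xh lq)
    (hzr : HasZeroOfOrder r xh lr)
    (hnop : ∀ x ∈ Ioo a b, x ≠ xh → p x ≠ 0)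
    (hnoq : ∀ x ∈ Ioo a b, x ≠ xh → q x ≠ 0)
    (hpq : lp ≤ lq) (hpr : lp ≤ lr) :
    -- the quotient `q/p` has a continuous extension `h` on `U`:
    (∃ h : ℝ → ℝ, ContinuousOn h (Ioo a b) ∧
      ∀ x ∈ Ioo a b, p x ≠ 0 → h x = q x / p x) ∧
    -- for every such extension `h`:
    ∀ h : ℝ → ℝ, ContinuousOn h (Ioo a b) →
      (∀ x ∈ Ioo a b, p x ≠ 0 → h x = q x / p x) →
      -- antiderivatives `w` of `q/p` exist on `U` …
      (∃ w : ℝ → ℝ, ∀ x ∈ Ioo a b, HasDerivAt w (h x) x) ∧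
      -- … and every such `w` is of class `C^{m-l_p+1}(U)`:
      ∀ w : ℝ → ℝ, (∀ x ∈ Ioo a b, HasDerivAt w (h x) x) →
        ContDiffOn ℝ (m - lp + 1) w (Ioo a b) ∧
        -- `e^w r/p` has a continuous extension `g` on `U`:
        ((∃ g : ℝ → ℝ, ContinuousOn g (Ioo a b) ∧
          ∀ x ∈ Ioo a b, p x ≠ 0 → g x = Real.exp (w x) * r x / p x) ∧
        ∀ g : ℝ → ℝ, ContinuousOn g (Ioo a b) →
          (∀ x ∈ Ioo a b, p x ≠ 0 → g x = Real.exp (w x) * r x / p x) →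
          -- antiderivatives `W` of `e^w r/p` exist on `U` …
          (∃ W : ℝ → ℝ, ∀ x ∈ Ioo a b, HasDerivAt W (g x) x) ∧
          -- … and for every such `W` the functions `e^{-w}(c + W)` are exactly the
          -- solutions, and they are of class `C^{m-l_p+1}(U)`:
          ∀ W : ℝ → ℝ, (∀ x ∈ Ioo a b, HasDerivAt W (g x) x) →
            (∀ c : ℝ,
              ContDiffOn ℝ (m - lp + 1)
                (fun x => Real.exp (-(w x)) * (c + W x)) (Ioo a b) ∧
              ∀ x ∈ Ioo a b,
                p x * deriv (fun x => Real.exp (-(w x)) * (c + W x)) x +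
                  q x * (Real.exp (-(w x)) * (c + W x)) = r x) ∧
            ∀ y : ℝ → ℝ, ContDiffOn ℝ 1 y (Ioo a b) →
              (∀ x ∈ Ioo a b, p x * deriv y x + q x * y x = r x) →
              ∃ c : ℝ, EqOn y (fun x => Real.exp (-(w x)) * (c + W x)) (Ioo a b)) := by
  simpa only [smul_eq_mul, inv_mul_eq_div] using
    one_parameter_family_general isOpen_Ioo (convex_Ioo a b) hx hpC hqC hrC hlpm.le hzp
      (fun k hk => hzq.1 k (hk.trans_le hpq)) (fun k hk => hzr.1 k (hk.trans_le hpr)) hnop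

end SingularODE16
end

section
/- (Proposition B(ii), simple singular case with positive derivative.) Consider the ODE p y′ + q y = r on U = (a,b), where p, q, r ∈ C^m(U), p has a zero of order l_p at x̂ ∈ U and q a zero of order l_q at x̂ with l_p = l_q + 1 (l_p, l_q < m), p and q have no other zeros in U, and r has a zero of order l_r ≥ l_q at x̂. Then the quotient p/q extends to a C¹ function h in a neighbourhood of x̂ with h(x̂) = 0; assume h′(x̂) > 0. Then the ODE has exactly one solution y ∈ C^{m−l_q}(U). -/
/- Statement 17 (Proposition B(ii), simple singular case, positive derivative):
if l_p = l_q + 1, l_r ≥ l_q, and the C¹ extension h of p/q satisfies h(x̂) = 0 and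
h'(x̂) > 0, then the ODE p y' + q y = r has exactly one solution y ∈ C^{m-l_q}(U). -/

/-!
Dividing `p y' + q y = r` by `q` gives the normal form `h y' + y = s` with `h = p / q` and
`s = r / q`. Consider more generally `h y' + c y = s` with `c x₀ > 0`, where `h` has a simple zero
with positive slope at `x₀`.

*Existence and uniqueness.* The integrating factor `E = exp ∫ c / h` is `O(|x - x₀| ^ δ)` on both
sides of `x₀` for some `δ > 0`. Hence the homogeneous solutions, the multiples of `1 / E`, are
discontinuous at `x₀` unless they vanish, whereas `E s / h` is integrable across `x₀` and
`E⁻¹ ∫_{x₀} E s / h` is a solution with limit `s x₀ / c x₀` at `x₀` by l'Hôpital's rule.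

*Regularity.* Formally, `z = y'` solves `h z' + (c + h') z = s' - c' y`, an equation of the same
class. Its continuous solution `z` really is `y'`, because `h z` and `s - c y` solve one and the
same equation. By induction, `y` is as smooth as `h`, `c` and `s`.

*Division by `x - x₀`.* If `f x₀ = 0`, the quotient `g = f / (x - x₀)` solves
`(x - x₀) g' + g = f'`, so by regularity it loses just one derivative. Iterating this shows that
`p / q` and `r / q` extend to functions of class `C^{m - l}`, where `l` is the order of the zero
of `q`.
-/

open Set

namespace SingularODE17

/-- `g` has a zero of order `l` at `xh`. -/
def HasZeroOfOrder (g : ℝ → ℝ) (xh : ℝ) (l : ℕ) : Prop :=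
  (∀ k < l, iteratedDeriv k g xh = 0) ∧ iteratedDeriv l g xh ≠ 0

open Filter Topology MeasureTheory

theorem eqOn_of_eqOn_diff_singleton {X Y : Type*} [TopologicalSpace X] [TopologicalSpace Y]
    [T2Space Y] {U : Set X} {x₀ : X} [(𝓝[≠] x₀).NeBot] {f g : X → Y} (hU : IsOpen U)
    (hf : ContinuousOn f U) (hg : ContinuousOn g U) (hfg : EqOn f g (U \ {x₀})) : EqOn f g U :=
  hfg.of_subset_closure hf hg sdiff_subset ((dense_compl_singleton x₀).open_subset_closure_inter hU)

section
variable {E : Type*} [NormedAddCommGroup E] [NormedSpace ℝ E] {f g : ℝ → E} {U : Set ℝ} {x₀ : ℝ}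

theorem hasDerivAt_of_eventually_hasDerivAt
    (hfg : ∀ᶠ x in 𝓝[≠] x₀, HasDerivAt f (g x) x) (hf : ContinuousAt f x₀)
    (hg : ContinuousAt g x₀) : HasDerivAt f (g x₀) x₀ := by
  have hfg_gt : ∀ᶠ x in 𝓝[>] x₀, HasDerivAt f (g x) x := hfg.filter_mono (nhdsGT_le_nhdsNE _)
  have hfg_lt : ∀ᶠ x in 𝓝[<] x₀, HasDerivAt f (g x) x := hfg.filter_mono (nhdsLT_le_nhdsNE _)
  have hright : HasDerivWithinAt f (g x₀) (Ici x₀) x₀ :=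
    hasDerivWithinAt_Ici_of_tendsto_deriv
      (fun x hx ↦ (HasDerivAt.differentiableAt hx).differentiableWithinAt) hf.continuousWithinAt
      hfg_gt ((hg.mono_left nhdsWithin_le_nhds).congr' (hfg_gt.mono fun x hx ↦ hx.deriv.symm))
  have hleft : HasDerivWithinAt f (g x₀) (Iic x₀) x₀ :=
    hasDerivWithinAt_Iic_of_tendsto_deriv
      (fun x hx ↦ (HasDerivAt.differentiableAt hx).differentiableWithinAt) hf.continuousWithinAt
      hfg_lt ((hg.mono_left nhdsWithin_le_nhds).congr' (hfg_lt.mono fun x hx ↦ hx.deriv.symm))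
  simpa using hleft.union hright

theorem hasDerivAt_of_forall_mem_diff_singleton (hU : IsOpen U) (hf : ContinuousOn f U)
    (hg : ContinuousOn g U) (hfg : ∀ x ∈ U \ {x₀}, HasDerivAt f (g x) x) {x : ℝ} (hx : x ∈ U) :
    HasDerivAt f (g x) x := by
  obtain rfl | hne := eq_or_ne x x₀
  · have hnhds := hU.mem_nhds hx
    exact hasDerivAt_of_eventually_hasDerivAt
      (mem_of_superset (sdiff_mem_nhdsWithin_compl hnhds _) hfg)
      (hf.continuousAt hnhds) (hg.continuousAt hnhds)
  · exact hfg x ⟨hx, hne⟩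

variable [CompleteSpace E]

theorem exists_forall_hasDerivAt (hU : IsOpen U) [U.OrdConnected] (hf : ContinuousOn f U) :
    ∃ F : ℝ → E, ∀ x ∈ U, HasDerivAt F (f x) x := by
  obtain rfl | ⟨a, ha⟩ := U.eq_empty_or_nonempty
  · exact ⟨0, fun x hx ↦ hx.elim⟩
  · refine ⟨fun x ↦ ∫ t in a..x, f t, fun x hx ↦ intervalIntegral.integral_hasDerivAt_right
      (hf.mono (OrdConnected.uIcc_subset ‹_› ha hx)).intervalIntegrable
      (hf.stronglyMeasurableAtFilter hU x hx) (hf.continuousAt (hU.mem_nhds hx))⟩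

theorem exists_forall_hasDerivAt_diff_singleton (hU : IsOpen U) [U.OrdConnected]
    (hf : ContinuousOn f (U \ {x₀})) :
    ∃ F : ℝ → E, ∀ x ∈ U \ {x₀}, HasDerivAt F (f x) x := by
  obtain ⟨F₁, hF₁⟩ := exists_forall_hasDerivAt (hU.inter isOpen_Iio)
    (hf.mono fun x (hx : x ∈ U ∩ Iio x₀) ↦ ⟨hx.1, hx.2.ne⟩)
  obtain ⟨F₂, hF₂⟩ := exists_forall_hasDerivAt (hU.inter isOpen_Ioi)
    (hf.mono fun x (hx : x ∈ U ∩ Ioi x₀) ↦ ⟨hx.1, hx.2.ne'⟩)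
  refine ⟨(Iio x₀).piecewise F₁ F₂, fun x ⟨hxU, hne⟩ ↦ ?_⟩
  obtain hlt | hgt := lt_or_gt_of_ne hne
  · refine (hF₁ x ⟨hxU, hlt⟩).congr_of_eventuallyEq ?_
    filter_upwards [Iio_mem_nhds hlt] with z hz using piecewise_eq_of_mem _ _ _ hz
  · refine (hF₂ x ⟨hxU, hgt⟩).congr_of_eventuallyEq ?_
    filter_upwards [Ioi_mem_nhds hgt] with z hz
    exact piecewise_eq_of_notMem _ _ _ (notMem_Iio.2 (le_of_lt hz))

theorem exists_continuousOn_primitive (hU : IsOpen U) [U.OrdConnected] (hx₀ : x₀ ∈ U)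
    (hf : ContinuousOn f (U \ {x₀})) (hfi : LocallyIntegrableOn f U) :
    ∃ F : ℝ → E, F x₀ = 0 ∧ ContinuousOn F U ∧ ∀ x ∈ U \ {x₀}, HasDerivAt F (f x) x := by
  have hint : ∀ a ∈ U, ∀ b ∈ U, IntervalIntegrable f volume a b := fun a ha b hb ↦
    (hfi.integrableOn_compact_subset (OrdConnected.uIcc_subset ‹_› ha hb)
      isCompact_uIcc).intervalIntegrable
  have hopen : IsOpen (U \ {x₀}) := hU.sdiff isClosed_singleton
  have hderiv : ∀ x ∈ U \ {x₀}, HasDerivAt (fun x ↦ ∫ t in x₀..x, f t) (f x) x := fun x hx ↦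
    intervalIntegral.integral_hasDerivAt_right (hint x₀ hx₀ x hx.1)
      (hf.stronglyMeasurableAtFilter hopen x hx) (hf.continuousAt (hopen.mem_nhds hx))
  refine ⟨fun x ↦ ∫ t in x₀..x, f t, intervalIntegral.integral_same, fun x hx ↦ ?_, hderiv⟩
  obtain rfl | hne := eq_or_ne x x₀
  · obtain ⟨a, b, hxab, habx, habU⟩ := exists_Icc_mem_subset_of_mem_nhds (hU.mem_nhds hx)
    have hab : a ≤ b := hxab.1.trans hxab.2
    rw [← uIcc_of_le hab] at hxab habx
    exact ((intervalIntegral.continuousOn_primitive_interval'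
      (hint a (habU (left_mem_Icc.2 hab)) b (habU (right_mem_Icc.2 hab))) hxab).continuousAt
      habx).continuousWithinAt
  · exact (hderiv x ⟨hx, hne⟩).continuousAt.continuousWithinAt
end

theorem exists_eventually_le_of_sub_mul_deriv_nonneg {f f' : ℝ → ℝ} {x₀ : ℝ}
    (hf : ∀ᶠ x in 𝓝[≠] x₀, HasDerivAt f (f' x) x ∧ 0 ≤ (x - x₀) * f' x) :
    ∃ M, ∀ᶠ x in 𝓝[≠] x₀, f x ≤ M := by
  obtain ⟨a, b, hx₀, hab, habf⟩ :=
    exists_Icc_mem_subset_of_mem_nhds (eventually_nhdsWithin_iff.1 hf)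
  have hanti : AntitoneOn f (Ico a x₀) := by
    have hleft : ∀ x ∈ Ico a x₀, HasDerivAt f (f' x) x ∧ 0 ≤ (x - x₀) * f' x :=
      fun x hx ↦ habf ⟨hx.1, hx.2.le.trans hx₀.2⟩ hx.2.ne
    exact antitoneOn_of_hasDerivWithinAt_nonpos (convex_Ico a x₀)
      (fun x hx ↦ (hleft x hx).1.continuousAt.continuousWithinAt)
      (fun x hx ↦ (hleft x (interior_subset hx)).1.hasDerivWithinAt)
      (fun x hx ↦ nonpos_of_mul_nonneg_right (hleft x (interior_subset hx)).2
        (sub_neg.2 (interior_subset hx).2))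
  have hmono : MonotoneOn f (Ioc x₀ b) := by
    have hright : ∀ x ∈ Ioc x₀ b, HasDerivAt f (f' x) x ∧ 0 ≤ (x - x₀) * f' x :=
      fun x hx ↦ habf ⟨hx₀.1.trans hx.1.le, hx.2⟩ hx.1.ne'
    exact monotoneOn_of_hasDerivWithinAt_nonneg (convex_Ioc x₀ b)
      (fun x hx ↦ (hright x hx).1.continuousAt.continuousWithinAt)
      (fun x hx ↦ (hright x (interior_subset hx)).1.hasDerivWithinAt)
      (fun x hx ↦ nonneg_of_mul_nonneg_right (hright x (interior_subset hx)).2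
        (sub_pos.2 (interior_subset hx).1))
  refine ⟨max (f a) (f b), ?_⟩
  filter_upwards [nhdsWithin_le_nhds hab, self_mem_nhdsWithin] with x hx hne
  obtain hlt | hgt := lt_or_gt_of_ne hne
  · exact (hanti ⟨le_rfl, hx.1.trans_lt hlt⟩ ⟨hx.1, hlt⟩ hx.1).trans (le_max_left _ _)
  · exact (hmono ⟨hgt, hx.2⟩ ⟨hgt.trans_le hx.2, le_rfl⟩ hx.2).trans (le_max_right _ _)

section
variable {E : Type*} [NormedAddCommGroup E] {f : ℝ → E} {U : Set ℝ} {x₀ : ℝ}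

theorem locallyIntegrable_abs_sub_rpow (x₀ : ℝ) {r : ℝ} (hr : -1 < r) :
    LocallyIntegrable fun x : ℝ ↦ |x - x₀| ^ r := by
  have hzero : LocallyIntegrable fun x : ℝ ↦ |x| ^ r :=
    locallyIntegrable_of_norm_le_rpow (C := 1) (α := -r) (by simp) (by simpa using by linarith)
      (Eventually.of_forall fun x ↦ by
        rw [neg_neg, one_mul, Real.norm_of_nonneg (by positivity), Real.norm_eq_abs])
      (measurable_norm.pow_const r).aestronglyMeasurable
  rw [← (measurePreserving_sub_right volume x₀).map_eq] at hzero
  exact (locallyIntegrable_map_homeomorph (Homeomorph.subRight x₀)).1 hzero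

theorem locallyIntegrableOn_of_isBigO_rpow (hU : IsOpen U)
    (hf : ContinuousOn f (U \ {x₀})) {r : ℝ} (hr : -1 < r)
    (hO : f =O[𝓝[≠] x₀] fun x ↦ |x - x₀| ^ r) : LocallyIntegrableOn f U := by
  have hopen : IsOpen (U \ {x₀}) := hU.sdiff isClosed_singleton
  intro x hx
  refine IntegrableAtFilter.filter_mono nhdsWithin_le_nhds ?_
  obtain rfl | hne := eq_or_ne x x₀
  · have hmeas : StronglyMeasurableAtFilter f (𝓝[≠] x) :=
      ⟨U \ {x}, sdiff_mem_nhdsWithin_compl (hU.mem_nhds hx) _,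
        hf.aestronglyMeasurable hopen.measurableSet⟩
    have := (measurableSet_singleton x).compl.nhdsWithin_isMeasurablyGenerated x
    obtain ⟨t, ht, hft⟩ := hO.integrableAtFilter hmeas
      ((locallyIntegrable_abs_sub_rpow x hr x).filter_mono nhdsWithin_le_nhds)
    exact ⟨insert x t, insert_mem_nhds_iff.2 ht, hft.congr_set_ae (insert_ae_eq_self _ _)⟩
  · exact (hf.integrableAt_nhdsWithin hopen.measurableSet ⟨hx, hne⟩).filter_mono
      (hopen.nhdsWithin_eq ⟨hx, hne⟩).ge
end

theorem hasDerivAt_update_of_ne {𝕜 E : Type*} [NontriviallyNormedField 𝕜] [DecidableEq 𝕜]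
    [NormedAddCommGroup E] [NormedSpace 𝕜 E] {f : 𝕜 → E} {f' v : E} {x x₀ : 𝕜}
    (hf : HasDerivAt f f' x) (hne : x ≠ x₀) :
    HasDerivAt (Function.update f x₀ v) f' x :=
  hf.congr_of_eventuallyEq <| by
    filter_upwards [isOpen_ne.mem_nhds hne] with z hz using Function.update_of_ne hz v f

/-- `x₀` is a simple singular point of the operator `y ↦ h y' + c y` on the open interval `U`:
the only zero of `h` is `x₀`, with positive slope there. -/
structure IsSimpleSingular (U : Set ℝ) (x₀ : ℝ) (h : ℝ → ℝ) : Prop where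
  isOpen : IsOpen U
  ordConnected : U.OrdConnected
  mem : x₀ ∈ U
  contDiffOn : ContDiffOn ℝ 1 h U
  eq_zero : h x₀ = 0
  ne_zero : ∀ x ∈ U \ {x₀}, h x ≠ 0
  deriv_pos : 0 < deriv h x₀

/-- `y` is a continuous solution on `U` of `h y' + c y = s`, required to be differentiable and to
satisfy the equation only away from the singular point `x₀`. -/
structure IsSol (U : Set ℝ) (x₀ : ℝ) (h c s y : ℝ → ℝ) : Prop where
  continuousOn : ContinuousOn y U
  hasDerivAt : ∀ x ∈ U \ {x₀}, HasDerivAt y ((s x - c x * y x) / h x) x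

/-- `E` is an integrating factor of `h y' + c y`, that is, a version of `exp ∫ c / h`, normalised
by `E x₀ = 0` and of size at most `|x - x₀| ^ δ` near `x₀` for some `δ > 0`. -/
structure IsIntegratingFactor (U : Set ℝ) (x₀ : ℝ) (h c E : ℝ → ℝ) : Prop where
  eq_zero : E x₀ = 0
  ne_zero : ∀ x ∈ U \ {x₀}, E x ≠ 0
  hasDerivAt : ∀ x ∈ U \ {x₀}, HasDerivAt E (E x * (c x / h x)) x
  exists_isBigO : ∃ δ > (0 : ℝ), E =O[𝓝[≠] x₀] fun x ↦ |x - x₀| ^ δ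

variable {U : Set ℝ} {x₀ : ℝ} {h c s y E : ℝ → ℝ}

theorem IsIntegratingFactor.continuousOn (hE : IsIntegratingFactor U x₀ h c E) :
    ContinuousOn E U := by
  intro x hx
  refine ContinuousAt.continuousWithinAt ?_
  obtain rfl | hne := eq_or_ne x x₀
  · obtain ⟨δ, hδ, hO⟩ := hE.exists_isBigO
    have hlim : Tendsto (fun z ↦ |z - x| ^ δ) (𝓝 x) (𝓝 0) := by
      have hcont : ContinuousAt (fun z ↦ |z - x| ^ δ) x :=
        ((continuous_sub_right x).abs.continuousAt).rpow_const (Or.inr hδ.le)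
      simpa [Real.zero_rpow hδ.ne'] using hcont.tendsto
    rw [← continuousWithinAt_compl_self, ContinuousWithinAt, hE.eq_zero]
    exact hO.trans_tendsto (hlim.mono_left nhdsWithin_le_nhds)
  · exact (hE.hasDerivAt x ⟨hx, hne⟩).continuousAt

namespace IsSimpleSingular

theorem eventually_mem (H : IsSimpleSingular U x₀ h) : ∀ᶠ x in 𝓝[≠] x₀, x ∈ U \ {x₀} :=
  sdiff_mem_nhdsWithin_compl (H.isOpen.mem_nhds H.mem) _

theorem continuousOn_div (H : IsSimpleSingular U x₀ h) (hs : ContinuousOn s U) :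
    ContinuousOn (fun x ↦ s x / h x) (U \ {x₀}) :=
  (hs.mono sdiff_subset).div (H.contDiffOn.continuousOn.mono sdiff_subset) H.ne_zero

theorem tendsto_sub_mul_div (H : IsSimpleSingular U x₀ h) (hs : ContinuousOn s U) :
    Tendsto (fun x ↦ (x - x₀) * (s x / h x)) (𝓝[≠] x₀) (𝓝 (s x₀ / deriv h x₀)) := by
  have hU : U ∈ 𝓝 x₀ := H.isOpen.mem_nhds H.mem
  have hslope : Tendsto (slope h x₀) (𝓝[≠] x₀) (𝓝 (deriv h x₀)) := hasDerivAt_iff_tendsto_slope.1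
    ((H.contDiffOn.contDiffAt hU).differentiableAt one_ne_zero).hasDerivAt
  refine (((hs.continuousAt hU).mono_left nhdsWithin_le_nhds).div hslope
    H.deriv_pos.ne').congr fun x ↦ ?_
  rw [Pi.div_apply, slope_def_field, H.eq_zero, sub_zero, div_div_eq_mul_div, mul_comm,
    mul_div_assoc]

/-- Near `x₀` we have `c / h ≥ δ / (x - x₀)` to the right of `x₀` and `≤` to the left, so
`log E - δ log |x - x₀|` increases away from `x₀` and is bounded above. -/
theorem exists_isIntegratingFactor (H : IsSimpleSingular U x₀ h) (hc : ContinuousOn c U)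
    (hc₀ : 0 < c x₀) : ∃ E, IsIntegratingFactor U x₀ h c E := by
  have := H.ordConnected
  obtain ⟨G, hG⟩ := exists_forall_hasDerivAt_diff_singleton H.isOpen (H.continuousOn_div hc)
  obtain ⟨δ, hδ, hδlt⟩ := exists_between (div_pos hc₀ H.deriv_pos)
  have hδle : ∀ᶠ x in 𝓝[≠] x₀, δ < (x - x₀) * (c x / h x) :=
    (H.tendsto_sub_mul_div hc).eventually_const_lt hδlt
  obtain ⟨M, hM⟩ : ∃ M, ∀ᶠ x in 𝓝[≠] x₀, G x - δ * Real.log (x - x₀) ≤ M := by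
    refine exists_eventually_le_of_sub_mul_deriv_nonneg
      (f' := fun x ↦ c x / h x - δ * (1 / (x - x₀))) ?_
    filter_upwards [H.eventually_mem, hδle] with x hx hle
    have hne : x - x₀ ≠ 0 := sub_ne_zero.2 hx.2
    refine ⟨(hG x hx).sub ((((hasDerivAt_id' x).sub_const x₀).log hne).const_mul δ), ?_⟩
    rw [mul_sub, mul_left_comm, mul_one_div_cancel hne, mul_one]
    exact sub_nonneg.2 hle.le
  refine ⟨Function.update (fun x ↦ Real.exp (G x)) x₀ 0, by simp, fun x hx ↦ ?_, fun x hx ↦ ?_,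
    δ, hδ, .of_bound (Real.exp M) ?_⟩
  · rw [Function.update_of_ne hx.2]
    exact Real.exp_ne_zero _
  · rw [Function.update_of_ne hx.2]
    exact hasDerivAt_update_of_ne (hG x hx).exp hx.2
  · filter_upwards [hM, self_mem_nhdsWithin] with x hx hne
    have habs : 0 < |x - x₀| := abs_pos.2 (sub_ne_zero.2 hne)
    rw [Function.update_of_ne hne, Real.norm_of_nonneg (Real.exp_nonneg _),
      Real.norm_of_nonneg (by positivity), Real.rpow_def_of_pos habs, Real.log_abs, ← Real.exp_add,
      Real.exp_le_exp]
    linarith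

theorem isBigO_mul_div (H : IsSimpleSingular U x₀ h) (hE : IsIntegratingFactor U x₀ h c E)
    (hs : ContinuousOn s U) :
    ∃ δ > (0 : ℝ), (fun x ↦ E x * (s x / h x)) =O[𝓝[≠] x₀] fun x ↦ |x - x₀| ^ (δ - 1) := by
  obtain ⟨δ, hδ, hO⟩ := hE.exists_isBigO
  have hquot : (fun x ↦ (x - x₀) * (s x / h x)) =O[𝓝[≠] x₀] fun _ ↦ (1 : ℝ) :=
    (H.tendsto_sub_mul_div hs).isBigO_one ℝ
  have hinv : (fun x ↦ (x - x₀)⁻¹) =O[𝓝[≠] x₀] fun x ↦ |(x - x₀)⁻¹| :=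
    (Asymptotics.isBigO_refl _ _).abs_right
  refine ⟨δ, hδ, ((hO.mul hquot).mul hinv).congr' ?_ ?_⟩ <;>
    filter_upwards [self_mem_nhdsWithin] with x hne <;>
    have hsub : x - x₀ ≠ 0 := sub_ne_zero.2 hne
  · field_simp
  · rw [Real.rpow_sub_one (abs_ne_zero.2 hsub), abs_inv, mul_one, div_eq_mul_inv]

theorem tendsto_div_integratingFactor (H : IsSimpleSingular U x₀ h)
    (hE : IsIntegratingFactor U x₀ h c E) (hc : ContinuousOn c U) (hc₀ : 0 < c x₀)
    (hs : ContinuousOn s U) {N : ℝ → ℝ} (hN₀ : Tendsto N (𝓝[≠] x₀) (𝓝 0))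
    (hN : ∀ x ∈ U \ {x₀}, HasDerivAt N (E x * (s x / h x)) x) :
    Tendsto (fun x ↦ N x / E x) (𝓝[≠] x₀) (𝓝 (s x₀ / c x₀)) := by
  have hU : U ∈ 𝓝 x₀ := H.isOpen.mem_nhds H.mem
  have hE₀ : Tendsto E (𝓝[≠] x₀) (𝓝 0) :=
    hE.eq_zero ▸ (hE.continuousOn.continuousAt hU).mono_left nhdsWithin_le_nhds
  have hc_ne : ∀ᶠ x in 𝓝[≠] x₀, c x ≠ 0 :=
    ((hc.continuousAt hU).eventually_ne hc₀.ne').filter_mono nhdsWithin_le_nhds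
  have hlim : Tendsto (fun x ↦ s x / c x) (𝓝[≠] x₀) (𝓝 (s x₀ / c x₀)) :=
    ((hs.continuousAt hU).div (hc.continuousAt hU) hc₀.ne').mono_left nhdsWithin_le_nhds
  refine HasDerivAt.lhopital_zero_nhdsNE (H.eventually_mem.mono hN)
    (H.eventually_mem.mono hE.hasDerivAt) ?_ hN₀ hE₀ (hlim.congr' ?_)
  · filter_upwards [H.eventually_mem, hc_ne] with x hx hcx
    exact mul_ne_zero (hE.ne_zero x hx) (div_ne_zero hcx (H.ne_zero x hx))
  · filter_upwards [H.eventually_mem] with x hx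
    rw [mul_div_mul_left _ _ (hE.ne_zero x hx), div_div_div_cancel_right₀ (H.ne_zero x hx)]

theorem exists_isSol (H : IsSimpleSingular U x₀ h) (hc : ContinuousOn c U) (hc₀ : 0 < c x₀)
    (hs : ContinuousOn s U) : ∃ y, IsSol U x₀ h c s y := by
  have := H.ordConnected
  obtain ⟨E, hE⟩ := H.exists_isIntegratingFactor hc hc₀
  have hcont : ContinuousOn (fun x ↦ E x * (s x / h x)) (U \ {x₀}) :=
    (hE.continuousOn.mono sdiff_subset).mul (H.continuousOn_div hs)
  obtain ⟨δ, hδ, hO⟩ := H.isBigO_mul_div hE hs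
  obtain ⟨N, hN₀, hNcont, hN⟩ := exists_continuousOn_primitive H.isOpen H.mem hcont
    (locallyIntegrableOn_of_isBigO_rpow H.isOpen hcont (by linarith) hO)
  have hlim : Tendsto (fun x ↦ N x / E x) (𝓝[≠] x₀) (𝓝 (s x₀ / c x₀)) := by
    refine H.tendsto_div_integratingFactor hE hc hc₀ hs (hN₀ ▸ ?_) hN
    exact (hNcont.continuousAt (H.isOpen.mem_nhds H.mem)).mono_left nhdsWithin_le_nhds
  set y := Function.update (fun x ↦ N x / E x) x₀ (s x₀ / c x₀)
  have hderiv : ∀ x ∈ U \ {x₀}, HasDerivAt y ((s x - c x * y x) / h x) x := by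
    intro x hx
    refine (hasDerivAt_update_of_ne ((hN x hx).div (hE.hasDerivAt x hx) (hE.ne_zero x hx))
      hx.2).congr_deriv ?_
    rw [show y x = N x / E x from Function.update_of_ne hx.2 _ _]
    have hEx := hE.ne_zero x hx
    have hhx := H.ne_zero x hx
    field_simp
  refine ⟨y, fun x hx ↦ ContinuousAt.continuousWithinAt ?_, hderiv⟩
  obtain rfl | hne := eq_or_ne x x₀
  · exact continuousAt_update_same.2 hlim
  · exact (hderiv x ⟨hx, hne⟩).continuousAt

theorem eqOn_of_isSol (H : IsSimpleSingular U x₀ h) (hc : ContinuousOn c U) (hc₀ : 0 < c x₀)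
    {y₁ y₂ : ℝ → ℝ} (hy₁ : IsSol U x₀ h c s y₁) (hy₂ : IsSol U x₀ h c s y₂) : EqOn y₁ y₂ U := by
  obtain ⟨E, hE⟩ := H.exists_isIntegratingFactor hc hc₀
  have hderiv : ∀ x ∈ U, HasDerivAt (fun x ↦ E x * (y₁ x - y₂ x)) 0 x := by
    refine fun x ↦ hasDerivAt_of_forall_mem_diff_singleton (g := fun _ ↦ 0) (x₀ := x₀) H.isOpen
      (hE.continuousOn.mul (hy₁.continuousOn.sub hy₂.continuousOn)) continuousOn_const
      fun x hx ↦ ?_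
    refine ((hE.hasDerivAt x hx).mul
      ((hy₁.hasDerivAt x hx).sub (hy₂.hasDerivAt x hx))).congr_deriv ?_
    rw [Pi.sub_apply]
    ring
  refine eqOn_of_eqOn_diff_singleton (x₀ := x₀) H.isOpen hy₁.continuousOn hy₂.continuousOn
    fun x hx ↦ ?_
  have hconst : E x * (y₁ x - y₂ x) = E x₀ * (y₁ x₀ - y₂ x₀) :=
    H.isOpen.is_const_of_deriv_eq_zero H.ordConnected.isPreconnected
      (fun z hz ↦ (hderiv z hz).differentiableAt.differentiableWithinAt)
      (fun z hz ↦ (hderiv z hz).deriv) hx.1 H.mem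
  rw [hE.eq_zero, zero_mul] at hconst
  exact sub_eq_zero.1 ((mul_eq_zero.1 hconst).resolve_left (hE.ne_zero x hx))

end IsSimpleSingular

theorem IsSol.exists_deriv_isSol (H : IsSimpleSingular U x₀ h) (hc : ContDiffOn ℝ 1 c U)
    (hc₀ : 0 < c x₀) (hs : ContDiffOn ℝ 1 s U) (hy : IsSol U x₀ h c s y) :
    ∃ z, IsSol U x₀ h (fun x ↦ c x + deriv h x) (fun x ↦ deriv s x - deriv c x * y x) z ∧
      ∀ x ∈ U, HasDerivAt y (z x) x := by
  have hderiv : ∀ {f : ℝ → ℝ}, ContDiffOn ℝ 1 f U → ∀ x ∈ U, HasDerivAt f (deriv f x) x :=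
    fun hf x hx ↦ (hf.differentiableOn one_ne_zero).hasDerivAt (H.isOpen.mem_nhds hx)
  have hderiv_cont : ∀ {f : ℝ → ℝ}, ContDiffOn ℝ 1 f U → ContinuousOn (deriv f) U :=
    fun hf ↦ hf.continuousOn_deriv_of_isOpen H.isOpen le_rfl
  obtain ⟨z, hz⟩ := H.exists_isSol (c := fun x ↦ c x + deriv h x)
    (s := fun x ↦ deriv s x - deriv c x * y x)
    (hc.continuousOn.add (hderiv_cont H.contDiffOn)) (add_pos hc₀ H.deriv_pos)
    ((hderiv_cont hs).sub ((hderiv_cont hc).mul hy.continuousOn))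
  -- `h z = s - c y` because both sides solve `h w' + c w = h (s' - c' y)`.
  have hsub : IsSol U x₀ h c (fun x ↦ h x * (deriv s x - deriv c x * y x))
      (fun x ↦ s x - c x * y x) := by
    refine ⟨hs.continuousOn.sub (hc.continuousOn.mul hy.continuousOn), fun x hx ↦ ?_⟩
    refine ((hderiv hs x hx.1).sub
      ((hderiv hc x hx.1).mul (hy.hasDerivAt x hx))).congr_deriv ?_
    have := H.ne_zero x hx
    field_simp
    ring
  have hmul : IsSol U x₀ h c (fun x ↦ h x * (deriv s x - deriv c x * y x))
      (fun x ↦ h x * z x) := by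
    refine ⟨H.contDiffOn.continuousOn.mul hz.continuousOn, fun x hx ↦ ?_⟩
    refine ((hderiv H.contDiffOn x hx.1).mul (hz.hasDerivAt x hx)).congr_deriv ?_
    have := H.ne_zero x hx
    field_simp
    ring
  have heq : EqOn (fun x ↦ h x * z x) (fun x ↦ s x - c x * y x) U :=
    H.eqOn_of_isSol hc.continuousOn hc₀ hmul hsub
  refine ⟨z, hz, fun x hx ↦ hasDerivAt_of_forall_mem_diff_singleton H.isOpen hy.continuousOn
    hz.continuousOn (fun x hx ↦ (hy.hasDerivAt x hx).congr_deriv ?_) hx⟩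
  exact (div_eq_iff (H.ne_zero x hx)).2 ((heq hx.1).symm.trans (mul_comm _ _))

theorem IsSol.contDiffOn_nat (H : IsSimpleSingular U x₀ h) (n : ℕ) (hh : ContDiffOn ℝ n h U)
    (hc : ContDiffOn ℝ n c U) (hc₀ : 0 < c x₀) (hs : ContDiffOn ℝ n s U)
    (hy : IsSol U x₀ h c s y) : ContDiffOn ℝ n y U := by
  induction n generalizing c s y with
  | zero => exact contDiffOn_zero.2 hy.continuousOn
  | succ n ih =>
    push_cast at hh hc hs ⊢
    have hle : (n : WithTop ℕ∞) ≤ n + 1 := le_self_add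
    have hone : (1 : WithTop ℕ∞) ≤ n + 1 := le_add_self
    have hderiv : ∀ {f : ℝ → ℝ}, ContDiffOn ℝ (n + 1) f U → ContDiffOn ℝ n (deriv f) U :=
      fun hf ↦ hf.deriv_of_isOpen H.isOpen le_rfl
    obtain ⟨z, hz, hyz⟩ := hy.exists_deriv_isSol H (hc.of_le hone) hc₀ (hs.of_le hone)
    have hyn : ContDiffOn ℝ n y U := ih (hh.of_le hle) (hc.of_le hle) hc₀ (hs.of_le hle) hy
    have hzn : ContDiffOn ℝ n z U :=
      ih (hh.of_le hle) ((hc.of_le hle).add (hderiv hh)) (add_pos hc₀ H.deriv_pos)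
        ((hderiv hs).sub ((hderiv hc).mul hyn)) hz
    exact (contDiffOn_succ_iff_deriv_of_isOpen H.isOpen).2
      ⟨fun x hx ↦ (hyz x hx).differentiableAt.differentiableWithinAt,
        fun htop ↦ absurd htop (by simp), hzn.congr fun x hx ↦ (hyz x hx).deriv⟩

theorem IsSol.contDiffOn (H : IsSimpleSingular U x₀ h) {n : ℕ∞} (hh : ContDiffOn ℝ n h U)
    (hc : ContDiffOn ℝ n c U) (hc₀ : 0 < c x₀) (hs : ContDiffOn ℝ n s U)
    (hy : IsSol U x₀ h c s y) : ContDiffOn ℝ n y U :=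
  contDiffOn_iff_forall_nat_le.2 fun k hk ↦
    have hk' : (k : WithTop ℕ∞) ≤ n := mod_cast hk
    hy.contDiffOn_nat H k (hh.of_le hk') (hc.of_le hk') hc₀ (hs.of_le hk')

theorem isSimpleSingular_sub (hU : IsOpen U) (hU' : U.OrdConnected) (hx₀ : x₀ ∈ U) :
    IsSimpleSingular U x₀ (fun x ↦ x - x₀) where
  isOpen := hU
  ordConnected := hU'
  mem := hx₀
  contDiffOn := by fun_prop
  eq_zero := sub_self x₀
  ne_zero _ hx := sub_ne_zero.2 hx.2
  deriv_pos := by simp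

theorem contDiffOn_dslope (hU : IsOpen U) [U.OrdConnected] (hx₀ : x₀ ∈ U) {f : ℝ → ℝ} {n : ℕ∞}
    (hf : ContDiffOn ℝ (n + 1) f U) : ContDiffOn ℝ n (dslope f x₀) U := by
  have hdiff : ∀ x ∈ U, DifferentiableAt ℝ f x := fun x hx ↦
    (hf.differentiableOn (by simp)).differentiableAt (hU.mem_nhds hx)
  have hsol : IsSol U x₀ (fun x ↦ x - x₀) (fun _ ↦ 1) (deriv f) (dslope f x₀) := by
    refine ⟨(continuousOn_dslope (hU.mem_nhds hx₀)).2 ⟨hf.continuousOn, hdiff x₀ hx₀⟩,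
      fun x hx ↦ ?_⟩
    have hsub : x - x₀ ≠ 0 := sub_ne_zero.2 hx.2
    refine ((((hdiff x hx.1).hasDerivAt.sub_const (f x₀)).div ((hasDerivAt_id' x).sub_const x₀)
      hsub).congr_of_eventuallyEq ?_).congr_deriv ?_
    · filter_upwards [isOpen_ne.mem_nhds hx.2] with z hz
      rw [dslope_of_ne _ hz, slope_def_field]
      rfl
    · rw [dslope_of_ne _ hx.2, slope_def_field]
      field_simp
  exact hsol.contDiffOn (isSimpleSingular_sub hU ‹_› hx₀) (by fun_prop) contDiffOn_const one_pos
    (hf.deriv_of_isOpen hU le_rfl)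

open scoped Nat in
theorem iteratedDeriv_eq_factorial_mul_of_eq_pow_mul (hU : IsOpen U) [U.OrdConnected]
    (hx₀ : x₀ ∈ U) {f F : ℝ → ℝ} {l : ℕ} (hf : ContDiffOn ℝ l f U)
    (hf₀ : ∀ k < l, iteratedDeriv k f x₀ = 0) (hF : ContinuousAt F x₀)
    (hfF : ∀ x ∈ U, f x = (x - x₀) ^ l * F x) : iteratedDeriv l f x₀ = l ! * F x₀ := by
  have htaylor : ∀ x, taylorWithinEval f l U x₀ x =
      (x - x₀) ^ l * (iteratedDeriv l f x₀ / l !) := by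
    intro x
    rw [taylor_within_apply, Finset.sum_range_succ, Finset.sum_eq_zero, zero_add,
      iteratedDerivWithin_of_isOpen hU hx₀, smul_eq_mul]
    · ring
    · intro k hk
      rw [iteratedDerivWithin_of_isOpen hU hx₀, hf₀ k (Finset.mem_range.1 hk), smul_zero]
  have hlittle := taylor_isLittleO (Set.OrdConnected.convex ‹_›) hx₀ hf
  rw [hU.nhdsWithin_eq hx₀] at hlittle
  have hlim : Tendsto F (𝓝[≠] x₀) (𝓝 (iteratedDeriv l f x₀ / l !)) := by
    rw [← tendsto_sub_nhds_zero_iff]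
    refine ((hlittle.mono nhdsWithin_le_nhds).tendsto_div_nhds_zero).congr' ?_
    filter_upwards [self_mem_nhdsWithin, nhdsWithin_le_nhds (hU.mem_nhds hx₀)] with x hne hx
    rw [htaylor, hfF x hx, ← mul_sub, mul_div_cancel_left₀ _ (pow_ne_zero _ (sub_ne_zero.2 hne))]
  rw [tendsto_nhds_unique (hF.mono_left nhdsWithin_le_nhds) hlim]
  field_simp

theorem exists_contDiffOn_eq_pow_mul (hU : IsOpen U) [U.OrdConnected] (hx₀ : x₀ ∈ U)
    {f : ℝ → ℝ} (l : ℕ) {n : ℕ∞} (hf : ContDiffOn ℝ (n + l) f U)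
    (hf₀ : ∀ k < l, iteratedDeriv k f x₀ = 0) :
    ∃ F, ContDiffOn ℝ n F U ∧ ∀ x, f x = (x - x₀) ^ l * F x := by
  induction l generalizing n with
  | zero => exact ⟨f, by simpa using hf, by simp⟩
  | succ l ih =>
    obtain ⟨F, hFC, hfF⟩ := ih (n := n + 1) (by convert hf using 1; push_cast; ring)
      fun k hk ↦ hf₀ k (by omega)
    have hF₀ : F x₀ = 0 := by
      have hle : (l : WithTop ℕ∞) ≤ n + (l + 1 : ℕ) := by
        rw [Nat.cast_succ, ← add_assoc, add_right_comm]
        exact le_add_self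
      have := iteratedDeriv_eq_factorial_mul_of_eq_pow_mul hU hx₀
        (hf.of_le hle) (fun k hk ↦ hf₀ k (by omega))
        (hFC.continuousOn.continuousAt (hU.mem_nhds hx₀)) fun x _ ↦ hfF x
      rw [hf₀ l l.lt_succ_self, eq_comm] at this
      exact (mul_eq_zero.1 this).resolve_left (by positivity)
    refine ⟨dslope F x₀, contDiffOn_dslope hU hx₀ (mod_cast hFC), fun x ↦ ?_⟩
    rw [hfF x, pow_succ, mul_assoc, ← smul_eq_mul (x - x₀), sub_smul_dslope, hF₀, sub_zero]

theorem HasZeroOfOrder.exists_contDiffOn_eq_mul (hU : IsOpen U) [U.OrdConnected] (hx₀ : x₀ ∈ U)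
    {f q : ℝ → ℝ} {l : ℕ} {n : ℕ∞} (hq : HasZeroOfOrder q x₀ l)
    (hqC : ContDiffOn ℝ (n + l) q U) (hq_ne : ∀ x ∈ U \ {x₀}, q x ≠ 0)
    (hfC : ContDiffOn ℝ (n + l) f U) (hf₀ : ∀ k < l, iteratedDeriv k f x₀ = 0) :
    ∃ g, ContDiffOn ℝ n g U ∧ ∀ x ∈ U, f x = q x * g x := by
  obtain ⟨F, hFC, hF⟩ := exists_contDiffOn_eq_pow_mul hU hx₀ l hfC hf₀
  obtain ⟨Q, hQC, hQ⟩ := exists_contDiffOn_eq_pow_mul hU hx₀ l hqC hq.1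
  have hQ_ne : ∀ x ∈ U, Q x ≠ 0 := by
    intro x hx hQx
    obtain rfl | hne := eq_or_ne x x₀
    · refine hq.2 ?_
      rw [iteratedDeriv_eq_factorial_mul_of_eq_pow_mul hU hx (hqC.of_le le_add_self) hq.1
        (hQC.continuousOn.continuousAt (hU.mem_nhds hx)) fun z _ ↦ hQ z, hQx, mul_zero]
    · exact hq_ne x ⟨hx, hne⟩ (by rw [hQ, hQx, mul_zero])
  refine ⟨fun x ↦ F x / Q x, hFC.div hQC hQ_ne, fun x hx ↦ ?_⟩
  rw [hF, hQ, mul_assoc, mul_div_cancel₀ _ (hQ_ne x hx)]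

theorem isSimpleSingular_of_eqOn (hU : IsOpen U) (hU' : U.OrdConnected) (hx₀ : x₀ ∈ U)
    {g : ℝ → ℝ} (hg : ContDiffOn ℝ 1 g U) (hg_ne : ∀ x ∈ U \ {x₀}, g x ≠ 0)
    (hhg : EqOn h g (U \ {x₀})) (hh₀ : h x₀ = 0) (hh' : 0 < deriv h x₀) :
    IsSimpleSingular U x₀ g := by
  have hh_cont : ContinuousAt h x₀ := (differentiableAt_of_deriv_ne_zero hh'.ne').continuousAt
  have hhg_nhds : h =ᶠ[𝓝 x₀] g :=
    (hh_cont.eventuallyEq_nhds_iff_eventuallyEq_nhdsNE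
      (hg.continuousOn.continuousAt (hU.mem_nhds hx₀))).1
      (mem_of_superset (sdiff_mem_nhdsWithin_compl (hU.mem_nhds hx₀) _) hhg)
  exact ⟨hU, hU', hx₀, hg, hhg_nhds.eq_of_nhds ▸ hh₀, hg_ne, hhg_nhds.deriv_eq ▸ hh'⟩

theorem exists_normalForm (hU : IsOpen U) [U.OrdConnected] (hx₀ : x₀ ∈ U) {n : ℕ∞} {l : ℕ}
    (hn : 1 ≤ n) {p q r : ℝ → ℝ} (hpC : ContDiffOn ℝ (n + l) p U)
    (hqC : ContDiffOn ℝ (n + l) q U) (hrC : ContDiffOn ℝ (n + l) r U)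
    (hp : ∀ k < l, iteratedDeriv k p x₀ = 0) (hq : HasZeroOfOrder q x₀ l)
    (hr : ∀ k < l, iteratedDeriv k r x₀ = 0) (hp_ne : ∀ x ∈ U \ {x₀}, p x ≠ 0)
    (hq_ne : ∀ x ∈ U \ {x₀}, q x ≠ 0) (hh : ∀ x ∈ U \ {x₀}, h x = p x / q x) (hh₀ : h x₀ = 0)
    (hh' : 0 < deriv h x₀) :
    ∃ g s : ℝ → ℝ, ContDiffOn ℝ n g U ∧ ContDiffOn ℝ n s U ∧ IsSimpleSingular U x₀ g ∧
      ∀ x ∈ U \ {x₀}, ∀ v w, p x * w + q x * v = r x ↔ w = (s x - 1 * v) / g x := by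
  obtain ⟨g, hgC, hpg⟩ := hq.exists_contDiffOn_eq_mul hU hx₀ hqC hq_ne hpC hp
  obtain ⟨s, hsC, hrs⟩ := hq.exists_contDiffOn_eq_mul hU hx₀ hqC hq_ne hrC hr
  have hg_ne : ∀ x ∈ U \ {x₀}, g x ≠ 0 := fun x hx ↦
    right_ne_zero_of_mul (hpg x hx.1 ▸ hp_ne x hx)
  have hhg : EqOn h g (U \ {x₀}) := fun x hx ↦ by
    rw [hh x hx, hpg x hx.1, mul_div_cancel_left₀ _ (hq_ne x hx)]
  refine ⟨g, s, hgC, hsC, isSimpleSingular_of_eqOn hU ‹_› hx₀ (hgC.of_le (mod_cast hn)) hg_ne hhg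
    hh₀ hh', fun x hx v w ↦ ?_⟩
  rw [hpg x hx.1, hrs x hx.1, mul_assoc, ← mul_add, mul_right_inj' (hq_ne x hx),
    eq_div_iff (hg_ne x hx), one_mul, eq_sub_iff_add_eq, mul_comm]

theorem unique_solution_general (hU : IsOpen U) [U.OrdConnected] (hx₀ : x₀ ∈ U) {m : ℕ∞} {l : ℕ}
    (hlm : (l : ℕ∞) < m) {p q r : ℝ → ℝ} (hpC : ContDiffOn ℝ m p U) (hqC : ContDiffOn ℝ m q U)
    (hrC : ContDiffOn ℝ m r U) (hp : ∀ k < l, iteratedDeriv k p x₀ = 0)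
    (hq : HasZeroOfOrder q x₀ l) (hr : ∀ k < l, iteratedDeriv k r x₀ = 0)
    (hp_ne : ∀ x ∈ U \ {x₀}, p x ≠ 0) (hq_ne : ∀ x ∈ U \ {x₀}, q x ≠ 0)
    (hh : ∀ x ∈ U \ {x₀}, h x = p x / q x) (hh₀ : h x₀ = 0) (hh' : 0 < deriv h x₀) :
    ∃ y : ℝ → ℝ,
      (ContDiffOn ℝ (m - l) y U ∧ ∀ x ∈ U, p x * deriv y x + q x * y x = r x) ∧
      ∀ u : ℝ → ℝ, ContinuousOn u U →
        (∀ x ∈ U \ {x₀}, DifferentiableAt ℝ u x ∧ p x * deriv u x + q x * u x = r x) →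
        EqOn u y U := by
  obtain ⟨n, rfl⟩ : ∃ n, m = n + l := ⟨m - l, (tsub_add_cancel_of_le hlm.le).symm⟩
  have hn : 1 ≤ n := Order.one_le_iff_pos.2 (pos_of_lt_add_left hlm)
  have hsub : ((n + l : ℕ∞) : WithTop ℕ∞) - l = n :=
    mod_cast (ENat.addLECancellable_natCast l).add_tsub_cancel_right
  rw [hsub]
  push_cast at hpC hqC hrC
  obtain ⟨g, s, hgC, hsC, H, hode⟩ :=
    exists_normalForm hU hx₀ hn hpC hqC hrC hp hq hr hp_ne hq_ne hh hh₀ hh'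
  obtain ⟨y, hy⟩ := H.exists_isSol continuousOn_const one_pos hsC.continuousOn
  have hyC : ContDiffOn ℝ n y U := hy.contDiffOn H hgC contDiffOn_const one_pos hsC
  have hlhs : ContinuousOn (fun x ↦ p x * deriv y x + q x * y x) U :=
    (hpC.continuousOn.mul (hyC.continuousOn_deriv_of_isOpen hU (mod_cast hn))).add
      (hqC.continuousOn.mul hyC.continuousOn)
  have hy_ode : EqOn (fun x ↦ p x * deriv y x + q x * y x) r U :=
    eqOn_of_eqOn_diff_singleton hU hlhs hrC.continuousOn fun x hx ↦
      (hode x hx _ _).2 (hy.hasDerivAt x hx).deriv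
  refine ⟨y, ⟨hyC, hy_ode⟩, fun u hu hu_ode ↦ ?_⟩
  have hu_sol : IsSol U x₀ g (fun _ ↦ 1) s u := ⟨hu, fun x hx ↦
    (hu_ode x hx).1.hasDerivAt.congr_deriv ((hode x hx _ _).1 (hu_ode x hx).2)⟩
  exact H.eqOn_of_isSol continuousOn_const one_pos hu_sol hy

/-- **Proposition B(ii).** -/
theorem unique_solution
    (a b xh : ℝ) (hx : xh ∈ Ioo a b) (m : ℕ∞)
    (p q r : ℝ → ℝ) (lp lq lr : ℕ)
    (hpC : ContDiffOn ℝ m p (Ioo a b))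
    (hqC : ContDiffOn ℝ m q (Ioo a b))
    (hrC : ContDiffOn ℝ m r (Ioo a b))
    (hlpm : (lp : ℕ∞) < m) (hlqm : (lq : ℕ∞) < m)
    (hzp : HasZeroOfOrder p xh lp)
    (hzq : HasZeroOfOrder q xh lq)
    (hzr : HasZeroOfOrder r xh lr)
    (hnop : ∀ x ∈ Ioo a b, x ≠ xh → p x ≠ 0)
    (hnoq : ∀ x ∈ Ioo a b, x ≠ xh → q x ≠ 0)
    (hl : lp = lq + 1) (hlr : lq ≤ lr)
    -- the C¹ extension `h` of `p/q` near `xh`, with `h(xh) = 0`: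
    (h : ℝ → ℝ)
    (hhC : ContDiffOn ℝ 1 h (Ioo a b))
    (hhq : ∀ x ∈ Ioo a b, q x ≠ 0 → h x = p x / q x)
    (hh0 : h xh = 0)
    -- positive derivative at the singular point:
    (hh' : 0 < deriv h xh) :
    ∃ y : ℝ → ℝ,
      (ContDiffOn ℝ (m - lq) y (Ioo a b) ∧
        ∀ x ∈ Ioo a b, p x * deriv y x + q x * y x = r x) ∧
      ∀ y' : ℝ → ℝ, ContDiffOn ℝ (m - lq) y' (Ioo a b) →
        (∀ x ∈ Ioo a b, p x * deriv y' x + q x * y' x = r x) →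
        EqOn y' y (Ioo a b) := by
  obtain ⟨y, hy, huniq⟩ := unique_solution_general isOpen_Ioo hx hlqm hpC hqC hrC
    (fun k hk ↦ hzp.1 k (by omega)) hzq (fun k hk ↦ hzr.1 k (by omega))
    (fun x hx ↦ hnop x hx.1 hx.2) (fun x hx ↦ hnoq x hx.1 hx.2)
    (fun x hx ↦ hhq x hx.1 (hnoq x hx.1 hx.2)) hh0 hh'
  have hne : (m : WithTop ℕ∞) - lq ≠ 0 := mod_cast (tsub_pos_of_lt hlqm).ne'
  exact ⟨y, hy, fun u hu hode ↦ huniq u hu.continuousOn fun x hx ↦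
    ⟨(hu.differentiableOn hne).differentiableAt (isOpen_Ioo.mem_nhds hx.1), hode x hx.1⟩⟩

end SingularODE17
end

section
/- (Proposition B(iv)-(v), even-order singular case.) Consider the ODE p y′ + q y = r on U = (a,b), where p, q, r ∈ C^m(U), p has a zero of order l_p at x̂ ∈ U and q a zero of order l_q at x̂ with l := l_p − l_q ≥ 2 even (l_p, l_q < m), p and q have no other zeros in U, and r has a zero of order l_r ≥ l_q at x̂. The quotient p/q extends to a C^l function h near x̂ with a zero of order l at x̂. If h^{(l)}(x̂) > 0, then: (a) there exists a solution y ∈ C^{m−l_q}(U) of the ODE; (b) any two solutions in C^{m−l_q}(U) coincide on [x̂, b); (c) the restrictions to (a, x̂] of the C^{m−l_q}(U) solutions form a one-parameter family; and (d) every solution of the ODE on U∖{x̂} that does not extend to a continuous solution on U fails to be locally Lebesgue-integrable at x̂. If h^{(l)}(x̂) < 0, the same statements hold with the two sides of x̂ interchanged: solutions in C^{m−l_q}(U) are unique on (a, x̂] and form a one-parameter family on [x̂, b). -/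
/- Statement 19 (Proposition B(iv)-(v), even-order singular case): if l = l_p - l_q ≥ 2
is even, solutions y ∈ C^{m-l_q}(U) of p y' + q y = r exist; they are unique on one
side of x̂ (depending on the sign of h^{(l)}(x̂), h the extension of p/q) and form a
one-parameter family on the other side; any solution on U∖{x̂} not extending
continuously to U is not locally Lebesgue-integrable at x̂. -/

open Set MeasureTheory

namespace SingularODE19

/-- `g` has a zero of order `l` at `xh`. -/
def HasZeroOfOrder (g : ℝ → ℝ) (xh : ℝ) (l : ℕ) : Prop :=
  (∀ k < l, iteratedDeriv k g xh = 0) ∧ iteratedDeriv l g xh ≠ 0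

/-- A solution of `p y' + q y = r` on `(a,b)` of class `C^{m-l_q}`. -/
def IsSol (a b : ℝ) (ν : ℕ∞) (p q r y : ℝ → ℝ) : Prop :=
  ContDiffOn ℝ ν y (Ioo a b) ∧ ∀ x ∈ Ioo a b, p x * deriv y x + q x * y x = r x

/-! Dividing by `(x - x₀) ^ l_q`, with the integral form of the Taylor remainder to control the
smoothness of the quotients, and then by the nonvanishing factor that remains of `q`, one obtains
`h y' + y = ρ` with `h = p / q`. Suppose `h > 0` off `x₀`, so that `h' x₀ = 0` and `h = o(x - x₀)`,
and let `E` be an integrating factor, `E' = E / h`. As `1 / h ≥ 1 / |x - x₀|` near `x₀`, on the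
right `E = O(x - x₀)`, so the homogeneous solutions `1 / E` grow at least like `1 / (x - x₀)`: all
solutions but one are non-integrable at `x₀`. On the left `E → ∞`, so all solutions tend to `ρ x₀`.

Smoothness at `x₀` follows by induction: if `y` solves `h y' + g y = σ` with `g x₀ > 0`, then
`z = y'` solves `h z' + (g + h') z = σ' - g' y`, an equation of the same kind, and `z` cannot grow
like `1 / (x - x₀)` because `y` converges. The case `h < 0` reduces to `h > 0` by the reflection
`x ↦ -x`. -/

section

open Filter Topology Asymptotics

section Division

variable {s : Set ℝ} {c : ℝ} {w G : ℝ → ℝ}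

/-- The average of `G` over the segment from `c` to `x` with weight `w`; the Taylor remainder at
`c` is a multiple of such an average of the highest derivative. -/
noncomputable def segmentMean (c : ℝ) (w G : ℝ → ℝ) (x : ℝ) : ℝ :=
  ∫ t in (0 : ℝ)..1, w t * G (c + t * (x - c))

lemma add_mul_sub_mem (hs : Convex ℝ s) (hc : c ∈ s) {x t : ℝ} (hx : x ∈ s)
    (ht : t ∈ Icc (0 : ℝ) 1) : c + t * (x - c) ∈ s := by
  simpa using hs.add_smul_sub_mem hc hx ht

lemma continuousOn_comp_segment (hs : Convex ℝ s) (hc : c ∈ s) (hG : ContinuousOn G s) {x : ℝ}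
    (hx : x ∈ s) : ContinuousOn (fun t => G (c + t * (x - c))) (Icc 0 1) :=
  hG.comp (by fun_prop) fun _ ht => add_mul_sub_mem hs hc hx ht

lemma exists_eventually_abs_comp_segment_le (hso : IsOpen s) (hs : Convex ℝ s) (hc : c ∈ s)
    (hG : ContinuousOn G s) {x₀ : ℝ} (hx₀ : x₀ ∈ s) :
    ∃ M, ∀ᶠ x in 𝓝 x₀, ∀ t ∈ Icc (0 : ℝ) 1, |G (c + t * (x - c))| ≤ M := by
  obtain ⟨K, hK, hx₀K, hKs⟩ := exists_compact_subset hso hx₀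
  have hcompact : IsCompact ((fun z : ℝ × ℝ => c + z.2 * (z.1 - c)) '' K ×ˢ Icc 0 1) :=
    (hK.prod isCompact_Icc).image (by fun_prop)
  obtain ⟨M, hM⟩ := hcompact.exists_bound_of_continuousOn (f := G) <| hG.mono <| by
    rintro _ ⟨z, ⟨hzK, hzt⟩, rfl⟩
    exact add_mul_sub_mem hs hc (hKs hzK) hzt
  refine ⟨M, mem_of_superset (mem_interior_iff_mem_nhds.1 hx₀K) fun x hx t ht => ?_⟩
  exact hM _ ⟨(x, t), ⟨hx, ht⟩, rfl⟩

lemma aestronglyMeasurable_weighted_comp_segment (hs : Convex ℝ s) (hc : c ∈ s)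
    (hw : Continuous w) (hG : ContinuousOn G s) {x : ℝ} (hx : x ∈ s) :
    AEStronglyMeasurable (fun t => w t * G (c + t * (x - c))) (volume.restrict (uIoc 0 1)) := by
  rw [uIoc_of_le zero_le_one]
  exact ((hw.continuousOn.mul (continuousOn_comp_segment hs hc hG hx)).mono
    Ioc_subset_Icc_self).aestronglyMeasurable measurableSet_Ioc

lemma continuousOn_segmentMean (hso : IsOpen s) (hs : Convex ℝ s) (hc : c ∈ s)
    (hw : Continuous w) (hG : ContinuousOn G s) : ContinuousOn (segmentMean c w G) s := by
  intro x₀ hx₀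
  obtain ⟨M, hM⟩ := exists_eventually_abs_comp_segment_le hso hs hc hG hx₀
  refine (intervalIntegral.continuousAt_of_dominated_interval (bound := fun t => |w t| * M)
    ?_ ?_ ?_ ?_).continuousWithinAt
  · filter_upwards [hso.mem_nhds hx₀] with x hx
    exact aestronglyMeasurable_weighted_comp_segment hs hc hw hG hx
  · filter_upwards [hM] with x hx
    refine ae_of_all _ fun t ht => ?_
    rw [uIoc_of_le zero_le_one] at ht
    rw [norm_mul, Real.norm_eq_abs, Real.norm_eq_abs]
    gcongr
    exact hx t (Ioc_subset_Icc_self ht)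
  · exact (hw.abs.mul continuous_const).intervalIntegrable 0 1
  · refine ae_of_all _ fun t ht => ?_
    rw [uIoc_of_le zero_le_one] at ht
    have hmem := add_mul_sub_mem hs hc hx₀ (Ioc_subset_Icc_self ht)
    exact continuousAt_const.mul
      ((hG.continuousAt (hso.mem_nhds hmem)).comp (f := fun x => c + t * (x - c)) (by fun_prop))

lemma hasDerivAt_segmentMean (hso : IsOpen s) (hs : Convex ℝ s) (hc : c ∈ s)
    (hw : Continuous w) (hG : ContDiffOn ℝ 1 G s) {x₀ : ℝ} (hx₀ : x₀ ∈ s) :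
    HasDerivAt (segmentMean c w G) (segmentMean c (fun t => w t * t) (deriv G) x₀) x₀ := by
  have hG' : ContinuousOn (deriv G) s := hG.continuousOn_deriv_of_isOpen hso le_rfl
  obtain ⟨M, hM⟩ := exists_eventually_abs_comp_segment_le hso hs hc hG' hx₀
  refine (intervalIntegral.hasDerivAt_integral_of_dominated_loc_of_deriv_le
    (F := fun x t => w t * G (c + t * (x - c)))
    (F' := fun x t => w t * t * deriv G (c + t * (x - c)))
    (bound := fun t => |w t * t| * M) (hM.and (hso.mem_nhds hx₀)) ?_ ?_ ?_ ?_ ?_ ?_).2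
  · filter_upwards [hso.mem_nhds hx₀] with x hx
    exact aestronglyMeasurable_weighted_comp_segment hs hc hw hG.continuousOn hx
  · refine ContinuousOn.intervalIntegrable ?_
    rw [uIcc_of_le zero_le_one]
    exact hw.continuousOn.mul (continuousOn_comp_segment hs hc hG.continuousOn hx₀)
  · exact aestronglyMeasurable_weighted_comp_segment hs hc (hw.mul continuous_id) hG' hx₀
  · refine ae_of_all _ fun t ht x hx => ?_
    rw [uIoc_of_le zero_le_one] at ht
    rw [norm_mul, Real.norm_eq_abs, Real.norm_eq_abs]
    gcongr
    exact hx.1 t (Ioc_subset_Icc_self ht)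
  · exact ((hw.mul continuous_id).abs.mul continuous_const).intervalIntegrable 0 1
  · refine ae_of_all _ fun t ht x hx => ?_
    rw [uIoc_of_le zero_le_one] at ht
    have hmem := add_mul_sub_mem hs hc hx.2 (Ioc_subset_Icc_self ht)
    have hGd := ((hG.contDiffAt (hso.mem_nhds hmem)).differentiableAt one_ne_zero).hasDerivAt
    have hlin : HasDerivAt (fun x => c + t * (x - c)) t x := by
      simpa using (((hasDerivAt_id x).sub_const c).const_mul t).const_add c
    rw [mul_assoc, mul_comm t]
    exact (hGd.comp x hlin).const_mul (w t)

lemma contDiffOn_segmentMean (hso : IsOpen s) (hs : Convex ℝ s) (hc : c ∈ s) {n : ℕ∞}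
    (hw : Continuous w) (hG : ContDiffOn ℝ n G s) : ContDiffOn ℝ n (segmentMean c w G) s := by
  refine contDiffOn_iff_forall_nat_le.2 fun k hk => ?_
  replace hG := hG.of_le (m := k) (by exact_mod_cast hk)
  clear hk
  induction k generalizing w G with
  | zero => simpa using continuousOn_segmentMean hso hs hc hw (by simpa using hG)
  | succ n ih =>
    push_cast at hG ⊢
    have hder := fun x => hasDerivAt_segmentMean (x₀ := x) hso hs hc hw (hG.of_le (by simp))
    refine (contDiffOn_succ_iff_deriv_of_isOpen hso).2
      ⟨fun x hx => (hder x hx).differentiableAt.differentiableWithinAt, by simp, ?_⟩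
    exact (ih (hw.mul continuous_id) ((contDiffOn_succ_iff_deriv_of_isOpen hso).1 hG).2.2).congr
      fun x hx => (hder x hx).deriv

lemma eq_sum_add_segmentMean (hso : IsOpen s) (hs : Convex ℝ s) (hc : c ∈ s) {f : ℝ → ℝ} {k : ℕ}
    (hf : ContDiffOn ℝ (k + 1) f s) {x : ℝ} (hx : x ∈ s) :
    f x = ∑ j ∈ Finset.range (k + 1), ((j.factorial : ℝ)⁻¹ * ((x - c) ^ j * iteratedDeriv j f c)) +
      (x - c) ^ (k + 1) * ((k.factorial : ℝ)⁻¹ *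
        segmentMean c (fun t => (1 - t) ^ k) (iteratedDeriv (k + 1) f) x) := by
  have taylor := map_add_eq_sum_add_integral_iteratedFDeriv (f := f) (x := c) (y := x - c) (n := k)
    fun t ht => hf.contDiffAt (hso.mem_nhds (add_mul_sub_mem hs hc hx ht))
  rw [add_sub_cancel] at taylor
  simpa only [segmentMean, iteratedFDeriv_apply_eq_iteratedDeriv_mul_prod, Finset.prod_const,
    Finset.card_univ, Fintype.card_fin, smul_eq_mul, mul_left_comm _ ((x - c) ^ (k + 1)),
    intervalIntegral.integral_const_mul] using taylor

lemma segmentMean_self : segmentMean c w G c = (∫ t in (0 : ℝ)..1, w t) * G c := by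
  simp [segmentMean]

lemma contDiffOn_iteratedDeriv (hso : IsOpen s) {f : ℝ → ℝ} {n : ℕ∞} {k : ℕ}
    (hf : ContDiffOn ℝ (n + k : ℕ∞) f s) : ContDiffOn ℝ n (iteratedDeriv k f) s := by
  induction k generalizing f with
  | zero => simpa using hf
  | succ k ih =>
    rw [iteratedDeriv_succ']
    refine ih (((contDiffOn_succ_iff_deriv_of_isOpen hso).1 (hf.of_le ?_)).2.2)
    push_cast
    rw [add_assoc]

lemma exists_eq_pow_mul (hso : IsOpen s) (hs : Convex ℝ s) (hc : c ∈ s) {f : ℝ → ℝ} {n : ℕ∞}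
    {k : ℕ} (hf : ContDiffOn ℝ (n + k : ℕ∞) f s) (hz : ∀ j < k, iteratedDeriv j f c = 0) :
    ∃ F : ℝ → ℝ, ContDiffOn ℝ n F s ∧ (∀ x ∈ s, f x = (x - c) ^ k * F x) ∧
      k.factorial * F c = iteratedDeriv k f c := by
  cases k with
  | zero => exact ⟨f, by simpa using hf, by simp, by simp⟩
  | succ k =>
    refine ⟨fun x => (k.factorial : ℝ)⁻¹ *
      segmentMean c (fun t => (1 - t) ^ k) (iteratedDeriv (k + 1) f) x, ?_, fun x hx => ?_, ?_⟩
    · exact contDiffOn_const.mul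
        (contDiffOn_segmentMean hso hs hc (by fun_prop) (contDiffOn_iteratedDeriv hso hf))
    · rw [eq_sum_add_segmentMean hso hs hc (k := k) (hf.of_le (by simp)) hx,
        Finset.sum_eq_zero fun j hj => by rw [hz j (Finset.mem_range.1 hj), mul_zero, mul_zero],
        zero_add]
    · simp only [segmentMean_self]
      have hint : ∫ t in (0 : ℝ)..1, (1 - t) ^ k = ((k : ℝ) + 1)⁻¹ := by
        rw [intervalIntegral.integral_comp_sub_left (fun t => t ^ k)]
        simp
      rw [hint, Nat.factorial_succ]
      push_cast
      field_simp

end Division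

section DominatedDerivative

variable {f f' g g' : ℝ → ℝ} {c d : ℝ}

lemma abs_sub_le_sub_of_abs_deriv_le (hf : ∀ x ∈ Ioo c d, HasDerivAt f (f' x) x)
    (hg : ∀ x ∈ Ioo c d, HasDerivAt g (g' x) x) (hfg : ∀ x ∈ Ioo c d, |f' x| ≤ g' x) {x y : ℝ}
    (hx : x ∈ Ioo c d) (hy : y ∈ Ioo c d) (hxy : x ≤ y) : |f y - f x| ≤ g y - g x := by
  have mono {k k' : ℝ → ℝ} (hk : ∀ x ∈ Ioo c d, HasDerivAt k (k' x) x)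
      (hk' : ∀ x ∈ Ioo c d, 0 ≤ k' x) : k x ≤ k y :=
    monotoneOn_of_hasDerivWithinAt_nonneg (convex_Ioo c d)
      (fun x hx => (hk x hx).continuousAt.continuousWithinAt)
      (fun x hx => (hk x (interior_subset hx)).hasDerivWithinAt)
      (fun x hx => hk' x (interior_subset hx)) hx hy hxy
  have hsub := mono (fun x hx => (hg x hx).fun_sub (hf x hx))
    fun x hx => sub_nonneg.2 (le_of_abs_le (hfg x hx))
  have hadd := mono (fun x hx => (hg x hx).fun_add (hf x hx))
    fun x hx => neg_le_iff_add_nonneg'.1 (neg_le_of_abs_le (hfg x hx))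
  rw [abs_le]
  constructor <;> linarith

lemma isLittleO_of_hasDerivAt_nhdsLT (hf : ∀ᶠ x in 𝓝[<] c, HasDerivAt f (f' x) x)
    (hg : ∀ᶠ x in 𝓝[<] c, HasDerivAt g (g' x) x) (hg' : ∀ᶠ x in 𝓝[<] c, 0 ≤ g' x)
    (hfg : f' =o[𝓝[<] c] g') (htop : Tendsto g (𝓝[<] c) atTop) : f =o[𝓝[<] c] g := by
  refine isLittleO_iff.2 fun ε hε => ?_
  obtain ⟨d, hd, hsub⟩ := mem_nhdsLT_iff_exists_Ioo_subset.1
    (((hf.and hg).and hg').and (isLittleO_iff.1 hfg (half_pos hε)))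
  obtain ⟨x, hx⟩ := nonempty_Ioo.2 (mem_Iio.1 hd)
  have sub_le {y : ℝ} (hy : y ∈ Ioo d c) (hxy : x ≤ y) : |f y - f x| ≤ ε / 2 * g y - ε / 2 * g x :=
    abs_sub_le_sub_of_abs_deriv_le (fun z hz => (hsub hz).1.1.1)
      (fun z hz => (hsub hz).1.1.2.const_mul _)
      (fun z hz => by simpa [abs_of_nonneg (hsub hz).1.2] using (hsub hz).2) hx hy hxy
  filter_upwards [htop.eventually_ge_atTop ((|f x| - ε / 2 * g x) / (ε / 2)),
    htop.eventually_ge_atTop 0, Ioo_mem_nhdsLT hx.2] with y hy hy₀ hmem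
  rw [div_le_iff₀ (half_pos hε)] at hy
  have := sub_le ⟨hx.1.trans hmem.1, hmem.2⟩ hmem.1.le
  have := abs_sub_abs_le_abs_sub (f y) (f x)
  rw [Real.norm_eq_abs, Real.norm_of_nonneg hy₀]
  linarith

lemma exists_tendsto_of_hasDerivAt_nhdsGT {e : ℝ} (hf : ∀ᶠ x in 𝓝[>] c, HasDerivAt f (f' x) x)
    (hg : ∀ᶠ x in 𝓝[>] c, HasDerivAt g (g' x) x) (hfg : ∀ᶠ x in 𝓝[>] c, |f' x| ≤ g' x)
    (he : Tendsto g (𝓝[>] c) (𝓝 e)) : ∃ k, Tendsto f (𝓝[>] c) (𝓝 k) := by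
  obtain ⟨d, hd, hsub⟩ := mem_nhdsGT_iff_exists_Ioo_subset.1 ((hf.and hg).and hfg)
  have dist_le {x y : ℝ} (hx : x ∈ Ioo c d) (hy : y ∈ Ioo c d) :
      dist (f x) (f y) ≤ dist (g x) (g y) := by
    have le {x y : ℝ} (hx : x ∈ Ioo c d) (hy : y ∈ Ioo c d) (hxy : x ≤ y) :=
      abs_sub_le_sub_of_abs_deriv_le (fun z hz => (hsub hz).1.1) (fun z hz => (hsub hz).1.2)
        (fun z hz => (hsub hz).2) hx hy hxy
    rcases le_total x y with hxy | hxy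
    · rw [dist_comm, dist_comm (g x)]
      exact (le hx hy hxy).trans (le_abs_self _)
    · exact (le hy hx hxy).trans (le_abs_self _)
  refine cauchy_map_iff_exists_tendsto.1 (Metric.cauchy_iff.2 ⟨inferInstance, fun ε hε => ?_⟩)
  obtain ⟨t, ht, hdist⟩ := (Metric.cauchy_iff.1 he.cauchy_map).2 ε hε
  refine ⟨f '' (g ⁻¹' t ∩ Ioo c d), image_mem_map (inter_mem ht (Ioo_mem_nhdsGT hd)), ?_⟩
  rintro _ ⟨x, hx, rfl⟩ _ ⟨y, hy, rfl⟩
  exact (dist_le hx.2 hy.2).trans_lt (hdist _ hx.1 _ hy.1)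

lemma isLittleO_of_hasDerivAt_nhdsGT (hf : ∀ᶠ x in 𝓝[>] c, HasDerivAt f (f' x) x)
    (hg : ∀ᶠ x in 𝓝[>] c, HasDerivAt g (g' x) x) (hg' : ∀ᶠ x in 𝓝[>] c, 0 ≤ g' x)
    (hfg : f' =o[𝓝[>] c] g') (hf₀ : Tendsto f (𝓝[>] c) (𝓝 0)) (hg₀ : Tendsto g (𝓝[>] c) (𝓝 0)) :
    f =o[𝓝[>] c] g := by
  refine isLittleO_iff.2 fun ε hε => ?_
  obtain ⟨d, hd, hsub⟩ := mem_nhdsGT_iff_exists_Ioo_subset.1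
    (((hf.and hg).and hg').and (isLittleO_iff.1 hfg hε))
  filter_upwards [Ioo_mem_nhdsGT hd] with y hy
  have hle : ∀ᶠ x in 𝓝[>] c, |f y - f x| ≤ ε * g y - ε * g x := by
    filter_upwards [Ioo_mem_nhdsGT hy.1] with x hx
    exact abs_sub_le_sub_of_abs_deriv_le (fun z hz => (hsub hz).1.1.1)
      (fun z hz => (hsub hz).1.1.2.const_mul _)
      (fun z hz => by simpa [abs_of_nonneg (hsub hz).1.2] using (hsub hz).2)
      ⟨hx.1, hx.2.trans hy.2⟩ hy hx.2.le
  have hlim := le_of_tendsto_of_tendsto (tendsto_const_nhds.sub hf₀).abs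
    (tendsto_const_nhds.sub (hg₀.const_mul ε)) hle
  rw [sub_zero, mul_zero, sub_zero] at hlim
  exact hlim.trans (by gcongr; exact le_abs_self _)

lemma tendsto_add_mul_nhdsGT {k : ℝ} (hk : 0 < k) :
    Tendsto (fun s => c + k * s) (𝓝[>] 0) (𝓝[>] c) := by
  refine tendsto_nhdsWithin_iff.2 ⟨Tendsto.mono_left ?_ nhdsWithin_le_nhds, ?_⟩
  · exact Continuous.tendsto' (by fun_prop) _ _ (by simp)
  · filter_upwards [self_mem_nhdsWithin] with s hs
    exact lt_add_of_pos_right _ (mul_pos hk hs)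

/- If `|f'| ≥ 1 / (C (x - c))`, the increment of `f` over `[c + s, c + 2 s]` is at least
`1 / (2 C)` for every small `s`. -/
lemma not_isBigO_inv_deriv_of_tendsto {e : ℝ} (hf : ∀ᶠ x in 𝓝[>] c, DifferentiableAt ℝ f x)
    (he : Tendsto f (𝓝[>] c) (𝓝 e)) : ¬ (fun x => (x - c)⁻¹) =O[𝓝[>] c] deriv f := by
  intro hO
  obtain ⟨C, hC, hO⟩ := hO.exists_pos
  obtain ⟨d, hd, hsub⟩ := mem_nhdsGT_iff_exists_Ioo_subset.1 (hf.and hO.bound)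
  have hlim : Tendsto (fun s => |f (c + 2 * s) - f (c + 1 * s)|) (𝓝[>] 0) (𝓝 0) := by
    simpa using ((he.comp (tendsto_add_mul_nhdsGT two_pos)).sub
      (he.comp (tendsto_add_mul_nhdsGT one_pos))).abs
  have hge : ∀ᶠ s in 𝓝[>] (0 : ℝ), (2 * C)⁻¹ ≤ |f (c + 2 * s) - f (c + 1 * s)| := by
    filter_upwards [self_mem_nhdsWithin, tendsto_add_mul_nhdsGT two_pos (Ioo_mem_nhdsGT hd)]
      with s hs hsd
    have hs : 0 < s := hs
    have hsub' : Icc (c + 1 * s) (c + 2 * s) ⊆ Ioo c d := fun x hx =>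
      ⟨by linarith [hx.1], hx.2.trans_lt hsd.2⟩
    obtain ⟨ξ, hξ, hslope⟩ := exists_deriv_eq_slope f (show c + 1 * s < c + 2 * s by linarith)
      (fun x hx => (hsub (hsub' hx)).1.continuousAt.continuousWithinAt)
      (fun x hx => (hsub (hsub' (Ioo_subset_Icc_self hx))).1.differentiableWithinAt)
    have hbound := (hsub (hsub' (Ioo_subset_Icc_self hξ))).2
    have hξ₀ : 0 < ξ - c := by linarith [hξ.1]
    rw [hslope, show c + 2 * s - (c + 1 * s) = s by ring, norm_div, norm_inv,
      Real.norm_of_nonneg hs.le, Real.norm_of_nonneg hξ₀.le, Real.norm_eq_abs] at hbound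
    have hle : s / (ξ - c) ≤ C * |f (c + 2 * s) - f (c + 1 * s)| := by
      rw [div_eq_mul_inv]
      calc s * (ξ - c)⁻¹ ≤ s * (C * (|f (c + 2 * s) - f (c + 1 * s)| / s)) := by gcongr
        _ = _ := by field_simp
    have hhalf : 1 / 2 ≤ s / (ξ - c) := by
      rw [div_le_div_iff₀ two_pos hξ₀]
      linarith [hξ.2]
    rw [mul_inv, inv_mul_le_iff₀ two_pos, inv_le_iff_one_le_mul₀ hC]
    linarith
  exact absurd (ge_of_tendsto hlim hge) (not_le.2 (by positivity))

lemma not_integrableAtFilter_of_inv_isBigO (hO : (fun x => (x - c)⁻¹) =O[𝓝[>] c] f) :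
    ¬ IntegrableAtFilter f (𝓝[>] c) := by
  intro hint
  have hmeas : StronglyMeasurableAtFilter (fun x => (x - c)⁻¹) (𝓝[>] c) :=
    (by fun_prop : Measurable fun x : ℝ => (x - c)⁻¹).stronglyMeasurable.stronglyMeasurableAtFilter
  obtain ⟨s, hs, hints⟩ := hO.integrableAtFilter hmeas hint
  obtain ⟨d, hd, hsub⟩ := mem_nhdsGT_iff_exists_Ioc_subset.1 hs
  have := intervalIntegrable_sub_inv_iff.1
    ((intervalIntegrable_iff_integrableOn_Ioc_of_le (le_of_lt hd)).2 (hints.mono_set hsub))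
  exact this.elim (ne_of_lt hd) fun h => h left_mem_uIcc

lemma hasDerivAt_of_tendsto_deriv {e : ℝ} (hf : ∀ᶠ x in 𝓝[≠] c, DifferentiableAt ℝ f x)
    (hc : ContinuousAt f c) (he : Tendsto (deriv f) (𝓝[≠] c) (𝓝 e)) : HasDerivAt f e c := by
  have hright : HasDerivWithinAt f e (Ici c) c :=
    hasDerivWithinAt_Ici_of_tendsto_deriv (fun x hx => hx.differentiableWithinAt)
      hc.continuousWithinAt (hf.filter_mono (nhdsGT_le_nhdsNE c))
      (he.mono_left (nhdsGT_le_nhdsNE c))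
  have hleft : HasDerivWithinAt f e (Iic c) c :=
    hasDerivWithinAt_Iic_of_tendsto_deriv (fun x hx => hx.differentiableWithinAt)
      hc.continuousWithinAt (hf.filter_mono (nhdsLT_le_nhdsNE c))
      (he.mono_left (nhdsLT_le_nhdsNE c))
  simpa using hleft.union hright

lemma exists_hasDerivAt_of_continuousOn_Ioo (hf : ContinuousOn f (Ioo c d)) :
    ∃ F : ℝ → ℝ, ∀ x ∈ Ioo c d, HasDerivAt F (f x) x := by
  rcases (Ioo c d).eq_empty_or_nonempty with hempty | ⟨x₀, hx₀⟩
  · simp [hempty]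
  refine ⟨fun x => ∫ t in x₀..x, f t, fun x hx => intervalIntegral.integral_hasDerivAt_right
    (hf.mono (ordConnected_Ioo.uIcc_subset hx₀ hx)).intervalIntegrable
    (hf.stronglyMeasurableAtFilter isOpen_Ioo x hx) (hf.continuousAt (isOpen_Ioo.mem_nhds hx))⟩

end DominatedDerivative

section LinearEquation

variable {h g σ y y' E F : ℝ → ℝ} {s : Set ℝ} {c d : ℝ}

/-- `y` is a differentiable solution of `h y' + g y = σ` at every point of `s`. -/
def IsSolOn (h g σ y : ℝ → ℝ) (s : Set ℝ) : Prop :=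
  ∀ x ∈ s, DifferentiableAt ℝ y x ∧ h x * deriv y x + g x * y x = σ x

/-- `E` is a positive solution of `E' = E g / h` on `s`, so that `(E y)' = E σ / h` for every
solution of `h y' + g y = σ` if `h` has no zeros in `s`. -/
def IsIntegratingFactor (h g E : ℝ → ℝ) (s : Set ℝ) : Prop :=
  ∀ x ∈ s, 0 < E x ∧ HasDerivAt E (E x * (g x / h x)) x

lemma IsSolOn.mono {t : Set ℝ} (hy : IsSolOn h g σ y s) (hts : t ⊆ s) : IsSolOn h g σ y t :=
  fun x hx => hy x (hts hx)

lemma IsSolOn.congr (hs : IsOpen s) (hy : IsSolOn h g σ y s) (hyy' : EqOn y' y s) :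
    IsSolOn h g σ y' s := fun x hx => by
  have heq : y' =ᶠ[𝓝 x] y := hyy'.eventuallyEq_of_mem (hs.mem_nhds hx)
  rw [heq.deriv_eq, heq.eq_of_nhds, heq.differentiableAt_iff]
  exact hy x hx

lemma IsSolOn.sub_const (hy : IsSolOn h g σ y s) (e : ℝ) :
    IsSolOn h g (fun x => σ x - e * g x) (fun x => y x - e) s := fun x hx => by
  obtain ⟨hd, heq⟩ := hy x hx
  refine ⟨hd.sub_const e, ?_⟩
  rw [deriv_sub_const]
  linear_combination heq

lemma exists_isIntegratingFactor (hh : ContinuousOn h (Ioo c d)) (hg : ContinuousOn g (Ioo c d))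
    (hne : ∀ x ∈ Ioo c d, h x ≠ 0) : ∃ E, IsIntegratingFactor h g E (Ioo c d) := by
  obtain ⟨H, hH⟩ := exists_hasDerivAt_of_continuousOn_Ioo (hg.div hh hne)
  exact ⟨fun x => Real.exp (H x), fun x hx => ⟨Real.exp_pos _, (hH x hx).exp⟩⟩

lemma IsIntegratingFactor.mono {t : Set ℝ} (hE : IsIntegratingFactor h g E s) (hts : t ⊆ s) :
    IsIntegratingFactor h g E t := fun x hx => hE x (hts hx)

lemma IsIntegratingFactor.continuousOn (hE : IsIntegratingFactor h g E s) : ContinuousOn E s :=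
  fun x hx => (hE x hx).2.continuousAt.continuousWithinAt

lemma IsIntegratingFactor.monotoneOn_div {u u' : ℝ → ℝ}
    (hE : IsIntegratingFactor h g E (Ioo c d)) (hu : ∀ x ∈ Ioo c d, 0 < u x)
    (hu' : ∀ x ∈ Ioo c d, HasDerivAt u (u' x) x)
    (hle : ∀ x ∈ Ioo c d, u' x ≤ u x * (g x / h x)) :
    MonotoneOn (fun x => E x / u x) (Ioo c d) := by
  have hder {x : ℝ} (hx : x ∈ Ioo c d) := (hE x hx).2.fun_div (hu' x hx) (hu x hx).ne'
  refine monotoneOn_of_hasDerivWithinAt_nonneg (convex_Ioo c d)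
    (fun x hx => (hder hx).continuousAt.continuousWithinAt)
    (fun x hx => (hder (interior_subset hx)).hasDerivWithinAt) fun x hx => ?_
  replace hx := interior_subset hx
  have := mul_le_mul_of_nonneg_left (hle x hx) (hE x hx).1.le
  exact div_nonneg (by linarith) (sq_nonneg _)

lemma IsIntegratingFactor.hasDerivAt_mul (hE : IsIntegratingFactor h g E s)
    (hne : ∀ x ∈ s, h x ≠ 0) (hy : IsSolOn h g σ y s) {x : ℝ} (hx : x ∈ s) :
    HasDerivAt (fun x => E x * y x) (E x * (σ x / h x)) x := by
  obtain ⟨hd, heq⟩ := hy x hx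
  refine ((hE x hx).2.fun_mul hd.hasDerivAt).congr_deriv ?_
  have := hne x hx
  rw [← heq]
  field_simp
  ring

lemma IsIntegratingFactor.isSolOn_div (hE : IsIntegratingFactor h g E s) (hne : ∀ x ∈ s, h x ≠ 0)
    (hF : ∀ x ∈ s, HasDerivAt F (E x * (σ x / h x)) x) :
    IsSolOn h g σ (fun x => F x / E x) s := fun x hx => by
  have hEx := (hE x hx).1.ne'
  have hd := (hF x hx).fun_div (hE x hx).2 hEx
  refine ⟨hd.differentiableAt, ?_⟩
  have := hne x hx
  rw [hd.deriv]
  field_simp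
  ring

lemma IsIntegratingFactor.exists_primitive (hE : IsIntegratingFactor h g E (Ioo c d))
    (hh : ContinuousOn h (Ioo c d)) (hσ : ContinuousOn σ (Ioo c d))
    (hne : ∀ x ∈ Ioo c d, h x ≠ 0) :
    ∃ F : ℝ → ℝ, ∀ x ∈ Ioo c d, HasDerivAt F (E x * (σ x / h x)) x :=
  exists_hasDerivAt_of_continuousOn_Ioo (hE.continuousOn.mul (hσ.div hh hne))

lemma IsIntegratingFactor.exists_eqOn_add_div (hE : IsIntegratingFactor h g E (Ioo c d))
    (hne : ∀ x ∈ Ioo c d, h x ≠ 0) (hy : IsSolOn h g σ y (Ioo c d))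
    (hy' : IsSolOn h g σ y' (Ioo c d)) :
    ∃ k : ℝ, EqOn y (fun x => y' x + k * (E x)⁻¹) (Ioo c d) := by
  have hder : ∀ x ∈ Ioo c d, HasDerivAt (fun x => E x * y x - E x * y' x) 0 x := fun x hx => by
    simpa using (hE.hasDerivAt_mul hne hy hx).fun_sub (hE.hasDerivAt_mul hne hy' hx)
  obtain ⟨k, hk⟩ := isOpen_Ioo.exists_is_const_of_deriv_eq_zero isPreconnected_Ioo
    (fun x hx => (hder x hx).differentiableAt.differentiableWithinAt) fun x hx => (hder x hx).deriv
  refine ⟨k, fun x hx => ?_⟩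
  have := (hE x hx).1.ne'
  rw [← hk x hx]
  field_simp
  ring

lemma IsSolOn.add_mul_inv (hy : IsSolOn h g σ y s) (hE : IsIntegratingFactor h g E s)
    (hne : ∀ x ∈ s, h x ≠ 0) (k : ℝ) : IsSolOn h g σ (fun x => y x + k * (E x)⁻¹) s := by
  intro x hx
  obtain ⟨hd, heq⟩ := hy x hx
  have hEx := (hE x hx).1.ne'
  have hder := hd.hasDerivAt.fun_add (((hE x hx).2.fun_inv hEx).const_mul k)
  refine ⟨hder.differentiableAt, ?_⟩
  have := hne x hx
  rw [hder.deriv, ← heq]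
  field_simp
  ring

end LinearEquation

section NormalForm

/-- The equation `h y' + g y = σ` has a singular point at `x₀` of the kind studied here: `h`
and `h'` vanish at `x₀` and `h` is positive on both sides, whereas `g x₀` is positive. -/
structure IsNormalForm (a b x₀ : ℝ) (h g : ℝ → ℝ) : Prop where
  mem : x₀ ∈ Ioo a b
  continuousOn : ContinuousOn h (Ioo a b)
  continuousOn_coeff : ContinuousOn g (Ioo a b)
  pos : ∀ x ∈ Ioo a b \ {x₀}, 0 < h x
  eq_zero : h x₀ = 0
  hasDerivAt : HasDerivAt h 0 x₀
  coeff_pos : 0 < g x₀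

variable {a b x₀ : ℝ} {h g σ y y' E : ℝ → ℝ}

lemma Ioo_lt_subset_diff (hx₀ : x₀ ∈ Ioo a b) : Ioo a x₀ ⊆ Ioo a b \ {x₀} :=
  fun _ hx => ⟨⟨hx.1, hx.2.trans hx₀.2⟩, hx.2.ne⟩

lemma Ioo_gt_subset_diff (hx₀ : x₀ ∈ Ioo a b) : Ioo x₀ b ⊆ Ioo a b \ {x₀} :=
  fun _ hx => ⟨⟨hx₀.1.trans hx.1, hx.2⟩, hx.1.ne'⟩

namespace IsNormalForm

variable (N : IsNormalForm a b x₀ h g)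
include N

lemma ne_zero_left : ∀ x ∈ Ioo a x₀, h x ≠ 0 :=
  fun x hx => (N.pos x (Ioo_lt_subset_diff N.mem hx)).ne'

lemma ne_zero_right : ∀ x ∈ Ioo x₀ b, h x ≠ 0 :=
  fun x hx => (N.pos x (Ioo_gt_subset_diff N.mem hx)).ne'

lemma mem_nhds : Ioo a b ∈ 𝓝 x₀ := isOpen_Ioo.mem_nhds N.mem

lemma eventually_mem : ∀ᶠ x in 𝓝[≠] x₀, x ∈ Ioo a b \ {x₀} :=
  inter_mem (mem_nhdsWithin_of_mem_nhds N.mem_nhds) self_mem_nhdsWithin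

lemma tendsto_coeff : Tendsto g (𝓝[≠] x₀) (𝓝 (g x₀)) :=
  (N.continuousOn_coeff.continuousAt N.mem_nhds).tendsto.mono_left nhdsWithin_le_nhds

lemma eventually_inv_le_div : ∀ᶠ x in 𝓝[≠] x₀, |x - x₀|⁻¹ ≤ g x / h x := by
  have hlittle := (hasDerivAt_iff_isLittleO.1 N.hasDerivAt).bound (half_pos N.coeff_pos)
  filter_upwards [hlittle.filter_mono nhdsWithin_le_nhds, N.eventually_mem,
    N.tendsto_coeff.eventually_const_le (half_lt_self N.coeff_pos)] with x hx hmem hg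
  have hhx := N.pos x hmem
  simp only [N.eq_zero, smul_zero, sub_zero, Real.norm_eq_abs, abs_of_pos hhx] at hx
  have habs : 0 < |x - x₀| := abs_pos.2 (sub_ne_zero.2 hmem.2)
  rw [inv_eq_one_div, div_le_div_iff₀ habs hhx, one_mul]
  exact hx.trans (by gcongr)

lemma isLittleO_integrand (hσ : ContinuousAt σ x₀) :
    (fun x => E x * ((σ x - σ x₀ / g x₀ * g x) / h x)) =o[𝓝[≠] x₀] fun x => E x * (g x / h x) := by
  have hg₀ := N.coeff_pos.ne'
  have hzero : Tendsto (fun x => σ x - σ x₀ / g x₀ * g x) (𝓝[≠] x₀) (𝓝 0) := by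
    have := (hσ.tendsto.mono_left nhdsWithin_le_nhds).sub (N.tendsto_coeff.const_mul (σ x₀ / g x₀))
    rwa [div_mul_cancel₀ _ hg₀, sub_self] at this
  have hnum : (fun x => σ x - σ x₀ / g x₀ * g x) =o[𝓝[≠] x₀] g :=
    ((isLittleO_const_iff hg₀).2 hzero).trans_isBigO
      ((isEquivalent_const_iff_tendsto hg₀).2 N.tendsto_coeff).isBigO_symm
  simp only [div_eq_mul_inv]
  exact (isBigO_refl E _).mul_isLittleO (hnum.mul_isBigO (isBigO_refl (fun x => (h x)⁻¹) _))

lemma eventually_deriv_nonneg {s : Set ℝ} {l : Filter ℝ} (hl : l ≤ 𝓝[≠] x₀) (hs : s ∈ l)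
    (hE : IsIntegratingFactor h g E s) : ∀ᶠ x in l, 0 ≤ E x * (g x / h x) := by
  filter_upwards [hs, hl N.eventually_inv_le_div] with x hx hle
  exact mul_nonneg (hE x hx).1.le ((inv_nonneg.2 (abs_nonneg _)).trans hle)

lemma exists_isIntegratingFactor_left : ∃ E, IsIntegratingFactor h g E (Ioo a x₀) :=
  have hsub : Ioo a x₀ ⊆ Ioo a b := Ioo_subset_Ioo_right N.mem.2.le
  exists_isIntegratingFactor (N.continuousOn.mono hsub) (N.continuousOn_coeff.mono hsub)
    N.ne_zero_left

lemma exists_isIntegratingFactor_right : ∃ E, IsIntegratingFactor h g E (Ioo x₀ b) :=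
  have hsub : Ioo x₀ b ⊆ Ioo a b := Ioo_subset_Ioo_left N.mem.1.le
  exists_isIntegratingFactor (N.continuousOn.mono hsub) (N.continuousOn_coeff.mono hsub)
    N.ne_zero_right

lemma tendsto_atTop_left (hE : IsIntegratingFactor h g E (Ioo a x₀)) :
    Tendsto E (𝓝[<] x₀) atTop := by
  obtain ⟨d, hd, hsub⟩ := mem_nhdsLT_iff_exists_Ioo_subset.1
    (inter_mem (nhdsLT_le_nhdsNE x₀ N.eventually_inv_le_div) (Ioo_mem_nhdsLT N.mem.1))
  have hmono : MonotoneOn (fun x => E x / (x₀ - x)⁻¹) (Ioo d x₀) := by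
    have hpos {x : ℝ} (hx : x ∈ Ioo d x₀) : 0 < x₀ - x := sub_pos.2 hx.2
    refine (hE.mono fun x hx => (hsub hx).2).monotoneOn_div (fun x hx => inv_pos.2 (hpos hx))
      (fun x hx => ((hasDerivAt_id x).const_sub x₀).fun_inv (hpos hx).ne') fun x hx => ?_
    have hle : |x - x₀|⁻¹ ≤ g x / h x := (hsub hx).1
    rw [abs_sub_comm, abs_of_pos (hpos hx)] at hle
    rw [neg_neg, one_div, sq, mul_inv]
    exact mul_le_mul_of_nonneg_left hle (inv_pos.2 (hpos hx)).le
  obtain ⟨x₁, hx₁⟩ := nonempty_Ioo.2 (mem_Iio.1 hd)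
  have hlim : Tendsto (fun x => E x₁ / (x₀ - x₁)⁻¹ * (x₀ - x)⁻¹) (𝓝[<] x₀) atTop := by
    refine Tendsto.const_mul_atTop
      (div_pos (hE x₁ (hsub hx₁).2).1 (inv_pos.2 (sub_pos.2 hx₁.2))) ?_
    refine tendsto_inv_nhdsGT_zero.comp (tendsto_nhdsWithin_iff.2 ⟨?_, ?_⟩)
    · exact (Continuous.tendsto' (by fun_prop) _ _ (sub_self x₀)).mono_left nhdsWithin_le_nhds
    · filter_upwards [self_mem_nhdsWithin] with x hx using sub_pos.2 (mem_Iio.1 hx)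
  refine tendsto_atTop_mono' _ ?_ hlim
  filter_upwards [Ioo_mem_nhdsLT hx₁.2] with x hx
  rw [← le_div_iff₀ (inv_pos.2 (sub_pos.2 hx.2))]
  exact hmono hx₁ ⟨hx₁.1.trans hx.1, hx.2⟩ hx.1.le

lemma isBigO_sub_right (hE : IsIntegratingFactor h g E (Ioo x₀ b)) :
    E =O[𝓝[>] x₀] fun x => x - x₀ := by
  obtain ⟨d, hd, hsub⟩ := mem_nhdsGT_iff_exists_Ioo_subset.1
    (inter_mem (nhdsGT_le_nhdsNE x₀ N.eventually_inv_le_div) (Ioo_mem_nhdsGT N.mem.2))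
  have hpos {x : ℝ} (hx : x ∈ Ioo x₀ d) : 0 < x - x₀ := sub_pos.2 hx.1
  have hmono : MonotoneOn (fun x => E x / (x - x₀)) (Ioo x₀ d) := by
    refine (hE.mono fun x hx => (hsub hx).2).monotoneOn_div (fun x => hpos)
      (fun x _ => (hasDerivAt_id x).sub_const x₀) fun x hx => ?_
    have hle : |x - x₀|⁻¹ ≤ g x / h x := (hsub hx).1
    rwa [abs_of_pos (hpos hx), inv_le_iff_one_le_mul₀' (hpos hx)] at hle
  obtain ⟨x₁, hx₁⟩ := nonempty_Ioo.2 (mem_Ioi.1 hd)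
  refine IsBigO.of_bound (E x₁ / (x₁ - x₀)) ?_
  filter_upwards [Ioo_mem_nhdsGT hx₁.1] with x hx
  have hxd : x ∈ Ioo x₀ d := ⟨hx.1, hx.2.trans hx₁.2⟩
  rw [Real.norm_of_nonneg (hE x (hsub hxd).2).1.le, Real.norm_of_nonneg (hpos hxd).le,
    ← div_le_iff₀ (hpos hxd)]
  exact hmono hxd hx₁ hx.2.le

lemma tendsto_zero_right (hE : IsIntegratingFactor h g E (Ioo x₀ b)) :
    Tendsto E (𝓝[>] x₀) (𝓝 0) :=
  (N.isBigO_sub_right hE).trans_tendsto <| tendsto_sub_nhds_zero_iff.2 <|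
    tendsto_id.mono_left nhdsWithin_le_nhds

theorem tendsto_left (hσ : ContinuousAt σ x₀) (hy : IsSolOn h g σ y (Ioo a x₀)) :
    Tendsto y (𝓝[<] x₀) (𝓝 (σ x₀ / g x₀)) := by
  have hIoo : Ioo a x₀ ∈ 𝓝[<] x₀ := Ioo_mem_nhdsLT N.mem.1
  obtain ⟨E, hE⟩ := N.exists_isIntegratingFactor_left
  have hlittle : (fun x => E x * (y x - σ x₀ / g x₀)) =o[𝓝[<] x₀] E :=
    isLittleO_of_hasDerivAt_nhdsLT
      (mem_of_superset hIoo fun x => hE.hasDerivAt_mul N.ne_zero_left (hy.sub_const _))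
      (mem_of_superset hIoo fun x hx => (hE x hx).2)
      (N.eventually_deriv_nonneg (nhdsLT_le_nhdsNE x₀) hIoo hE)
      ((N.isLittleO_integrand hσ).mono (nhdsLT_le_nhdsNE x₀)) (N.tendsto_atTop_left hE)
  refine tendsto_sub_nhds_zero_iff.1 (hlittle.tendsto_div_nhds_zero.congr' ?_)
  filter_upwards [hIoo] with x hx
  rw [mul_div_cancel_left₀ _ (hE x hx).1.ne']

theorem exists_isSolOn_tendsto_right (hσ : ContinuousOn σ (Ioo a b)) :
    ∃ y, IsSolOn h g σ y (Ioo x₀ b) ∧ Tendsto y (𝓝[>] x₀) (𝓝 (σ x₀ / g x₀)) := by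
  set e := σ x₀ / g x₀ with he
  have hIoo : Ioo x₀ b ∈ 𝓝[>] x₀ := Ioo_mem_nhdsGT N.mem.2
  have hsub : Ioo x₀ b ⊆ Ioo a b := Ioo_subset_Ioo_left N.mem.1.le
  obtain ⟨E, hE⟩ := N.exists_isIntegratingFactor_right
  -- `F' = E (σ - e g) / h` is `o(E')`, so `F` has a limit `k` at `x₀`, and then `F - k = o(E)`.
  obtain ⟨F, hF⟩ := hE.exists_primitive (σ := fun x => σ x - e * g x) (N.continuousOn.mono hsub)
    ((hσ.sub (N.continuousOn_coeff.const_mul e)).mono hsub) N.ne_zero_right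
  have hlittle := (N.isLittleO_integrand (E := E) (hσ.continuousAt N.mem_nhds)).mono
    (nhdsGT_le_nhdsNE x₀)
  have hF' : ∀ᶠ x in 𝓝[>] x₀, HasDerivAt F (E x * ((σ x - e * g x) / h x)) x :=
    mem_of_superset hIoo hF
  have hE' := mem_of_superset hIoo fun x hx => (hE x hx).2
  have hnonneg := N.eventually_deriv_nonneg (nhdsGT_le_nhdsNE x₀) hIoo hE
  obtain ⟨k, hk⟩ : ∃ k, Tendsto F (𝓝[>] x₀) (𝓝 k) :=
    exists_tendsto_of_hasDerivAt_nhdsGT hF' hE' (by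
      filter_upwards [hlittle.bound one_pos, hnonneg] with x hx hx'
      rwa [one_mul, Real.norm_eq_abs, Real.norm_of_nonneg hx'] at hx) (N.tendsto_zero_right hE)
  have hFE : (fun x => F x - k) =o[𝓝[>] x₀] E :=
    isLittleO_of_hasDerivAt_nhdsGT (hF'.mono fun x hx => hx.sub_const k) hE' hnonneg hlittle
      (tendsto_sub_nhds_zero_iff.2 hk) (N.tendsto_zero_right hE)
  refine ⟨fun x => (F x - k) / E x - -e, ?_, ?_⟩
  · simpa [he] using
      (hE.isSolOn_div N.ne_zero_right fun x hx => (hF x hx).sub_const k).sub_const (-e)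
  · simpa using hFE.tendsto_div_nhds_zero.sub_const (-e)

theorem eqOn_or_inv_isBigO_right {e : ℝ} (hy : IsSolOn h g σ y (Ioo x₀ b))
    (hy' : IsSolOn h g σ y' (Ioo x₀ b)) (he : Tendsto y' (𝓝[>] x₀) (𝓝 e)) :
    EqOn y y' (Ioo x₀ b) ∨ (fun x => (x - x₀)⁻¹) =O[𝓝[>] x₀] y := by
  have hIoo : Ioo x₀ b ∈ 𝓝[>] x₀ := Ioo_mem_nhdsGT N.mem.2
  obtain ⟨E, hE⟩ := N.exists_isIntegratingFactor_right
  obtain ⟨k, hk⟩ := hE.exists_eqOn_add_div N.ne_zero_right hy hy'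
  rcases eq_or_ne k 0 with rfl | hk₀
  · exact Or.inl fun x hx => by simpa using hk hx
  have hlim : Tendsto (fun x => E x * y x) (𝓝[>] x₀) (𝓝 k) := by
    have := ((N.tendsto_zero_right hE).mul he).add_const k
    rw [zero_mul, zero_add] at this
    refine this.congr' ?_
    filter_upwards [hIoo] with x hx
    have := (hE x hx).1.ne'
    rw [hk hx]
    field_simp
  have hinv : (fun x => (x - x₀)⁻¹) =O[𝓝[>] x₀] fun x => (E x)⁻¹ :=
    (N.isBigO_sub_right hE).inv_rev <| mem_of_superset hIoo fun x hx h₀ => absurd h₀ (hE x hx).1.ne'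
  have hone : (fun _ => (1 : ℝ)) =O[𝓝[>] x₀] fun x => E x * y x :=
    (isBigO_const_const 1 hk₀ _).trans ((isEquivalent_const_iff_tendsto hk₀).2 hlim).isBigO_symm
  refine Or.inr ((hinv.mul hone).congr' (by simp) ?_)
  filter_upwards [hIoo] with x hx
  rw [inv_mul_cancel_left₀ (hE x hx).1.ne']

lemma tendsto_or_inv_isBigO_right (hσ : ContinuousOn σ (Ioo a b))
    (hy : IsSolOn h g σ y (Ioo x₀ b)) : Tendsto y (𝓝[>] x₀) (𝓝 (σ x₀ / g x₀)) ∨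
      (fun x => (x - x₀)⁻¹) =O[𝓝[>] x₀] y := by
  obtain ⟨y', hy', hlim⟩ := N.exists_isSolOn_tendsto_right hσ
  refine (N.eqOn_or_inv_isBigO_right hy hy' hlim).imp_left fun heq => hlim.congr' ?_
  filter_upwards [Ioo_mem_nhdsGT N.mem.2] with x hx using (heq hx).symm

lemma tendsto_of_not_inv_isBigO (hσ : ContinuousOn σ (Ioo a b))
    (hy : IsSolOn h g σ y (Ioo a b \ {x₀})) (hO : ¬ (fun x => (x - x₀)⁻¹) =O[𝓝[>] x₀] y) :
    Tendsto y (𝓝[≠] x₀) (𝓝 (σ x₀ / g x₀)) := by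
  rw [← nhdsLT_sup_nhdsGT]
  exact (N.tendsto_left (hσ.continuousAt N.mem_nhds) (hy.mono (Ioo_lt_subset_diff N.mem))).sup
    ((N.tendsto_or_inv_isBigO_right hσ (hy.mono (Ioo_gt_subset_diff N.mem))).resolve_right hO)

theorem tendsto_of_integrableAtFilter (hσ : ContinuousOn σ (Ioo a b))
    (hy : IsSolOn h g σ y (Ioo a b \ {x₀})) (hint : IntegrableAtFilter y (𝓝[≠] x₀)) :
    Tendsto y (𝓝[≠] x₀) (𝓝 (σ x₀ / g x₀)) :=
  N.tendsto_of_not_inv_isBigO hσ hy fun hO => not_integrableAtFilter_of_inv_isBigO hO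
    (hint.filter_mono (nhdsGT_le_nhdsNE x₀))

lemma differentiableAt_deriv (hh : ContDiffOn ℝ 1 h (Ioo a b)) (hg : ContDiffOn ℝ 1 g (Ioo a b))
    (hσ : ContDiffOn ℝ 1 σ (Ioo a b)) (hy : IsSolOn h g σ y (Ioo a b \ {x₀})) {x : ℝ}
    (hx : x ∈ Ioo a b \ {x₀}) : DifferentiableAt ℝ (deriv y) x := by
  have hdiff {k : ℝ → ℝ} (hk : ContDiffOn ℝ 1 k (Ioo a b)) : DifferentiableAt ℝ k x :=
    (hk.contDiffAt (isOpen_Ioo.mem_nhds hx.1)).differentiableAt one_ne_zero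
  have hquot := ((hdiff hσ).sub ((hdiff hg).mul (hy x hx).1)).div (hdiff hh) (N.pos x hx).ne'
  refine hquot.congr_of_eventuallyEq ?_
  filter_upwards [(isOpen_Ioo.sdiff isClosed_singleton).mem_nhds hx] with z hz
  have := (N.pos z hz).ne'
  simp only [Pi.div_apply, Pi.sub_apply, Pi.mul_apply, ← (hy z hz).2]
  field_simp
  ring

lemma isSolOn_deriv (hh : ContDiffOn ℝ 1 h (Ioo a b)) (hg : ContDiffOn ℝ 1 g (Ioo a b))
    (hσ : ContDiffOn ℝ 1 σ (Ioo a b)) (hy : IsSolOn h g σ y (Ioo a b \ {x₀})) :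
    IsSolOn h (fun x => g x + deriv h x) (fun x => deriv σ x - deriv g x * y x) (deriv y)
      (Ioo a b \ {x₀}) := fun x hx => by
  have hder {k : ℝ → ℝ} (hk : ContDiffOn ℝ 1 k (Ioo a b)) : HasDerivAt k (deriv k x) x :=
    ((hk.contDiffAt (isOpen_Ioo.mem_nhds hx.1)).differentiableAt one_ne_zero).hasDerivAt
  have hd := N.differentiableAt_deriv hh hg hσ hy hx
  have hlhs := ((hder hh).fun_mul hd.hasDerivAt).fun_add ((hder hg).fun_mul (hy x hx).1.hasDerivAt)
  have heq : (fun z => h z * deriv y z + g z * y z) =ᶠ[𝓝 x] σ := by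
    filter_upwards [(isOpen_Ioo.sdiff isClosed_singleton).mem_nhds hx] with z hz using (hy z hz).2
  refine ⟨hd, ?_⟩
  linear_combination hlhs.unique ((hder hσ).congr_of_eventuallyEq heq)

lemma add_deriv (hh : ContDiffOn ℝ 1 h (Ioo a b)) :
    IsNormalForm a b x₀ h (fun x => g x + deriv h x) where
  mem := N.mem
  continuousOn := N.continuousOn
  continuousOn_coeff := N.continuousOn_coeff.add (hh.continuousOn_deriv_of_isOpen isOpen_Ioo le_rfl)
  pos := N.pos
  eq_zero := N.eq_zero
  hasDerivAt := N.hasDerivAt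
  coeff_pos := by simpa [N.hasDerivAt.deriv] using N.coeff_pos

lemma continuousOn_deriv_of_isSolOn (hh : ContDiffOn ℝ 1 h (Ioo a b))
    (hg : ContDiffOn ℝ 1 g (Ioo a b)) (hσ : ContDiffOn ℝ 1 σ (Ioo a b))
    (hyc : ContinuousOn y (Ioo a b)) (hy : IsSolOn h g σ y (Ioo a b \ {x₀})) :
    ContinuousOn (deriv y) (Ioo a b) ∧ DifferentiableOn ℝ y (Ioo a b) := by
  have hσ' : ContinuousOn (fun x => deriv σ x - deriv g x * y x) (Ioo a b) :=
    (hσ.continuousOn_deriv_of_isOpen isOpen_Ioo le_rfl).sub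
      ((hg.continuousOn_deriv_of_isOpen isOpen_Ioo le_rfl).mul hyc)
  have hdiff : ∀ᶠ x in 𝓝[≠] x₀, DifferentiableAt ℝ y x :=
    N.eventually_mem.mono fun x hx => (hy x hx).1
  have hy₀ := hyc.continuousAt N.mem_nhds
  have hlim := (N.add_deriv hh).tendsto_of_not_inv_isBigO hσ' (N.isSolOn_deriv hh hg hσ hy)
    (not_isBigO_inv_deriv_of_tendsto (hdiff.filter_mono (nhdsGT_le_nhdsNE x₀))
      (hy₀.tendsto.mono_left nhdsWithin_le_nhds))
  have hder := hasDerivAt_of_tendsto_deriv hdiff hy₀ hlim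
  rw [← hder.deriv] at hlim
  constructor <;> intro x hx <;> rcases eq_or_ne x x₀ with rfl | hne
  · exact (continuousAt_iff_punctured_nhds.2 hlim).continuousWithinAt
  · exact (N.differentiableAt_deriv hh hg hσ hy ⟨hx, hne⟩).continuousAt.continuousWithinAt
  · exact hder.differentiableAt.differentiableWithinAt
  · exact (hy x ⟨hx, hne⟩).1.differentiableWithinAt

theorem contDiffOn_of_isSolOn {n : ℕ∞} (hh : ContDiffOn ℝ n h (Ioo a b))
    (hg : ContDiffOn ℝ n g (Ioo a b)) (hσ : ContDiffOn ℝ n σ (Ioo a b))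
    (hyc : ContinuousOn y (Ioo a b)) (hy : IsSolOn h g σ y (Ioo a b \ {x₀})) :
    ContDiffOn ℝ n y (Ioo a b) := by
  refine contDiffOn_iff_forall_nat_le.2 fun k hk => ?_
  have hk' : ((k : ℕ∞) : WithTop ℕ∞) ≤ n := by exact_mod_cast hk
  replace hh := hh.of_le hk'
  replace hg := hg.of_le hk'
  replace hσ := hσ.of_le hk'
  clear hk hk'
  induction k generalizing g σ y with
  | zero => simpa using hyc
  | succ k ih =>
    push_cast at hh hg hσ ⊢
    have hle : (k : WithTop ℕ∞) ≤ k + 1 := le_self_add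
    have hle' : (1 : WithTop ℕ∞) ≤ k + 1 := by simp
    have hderiv {f : ℝ → ℝ} (hf : ContDiffOn ℝ (k + 1) f (Ioo a b)) :
        ContDiffOn ℝ k (deriv f) (Ioo a b) :=
      ((contDiffOn_succ_iff_deriv_of_isOpen isOpen_Ioo).1 hf).2.2
    have hyk := ih N hyc hy (hh.of_le hle) (hg.of_le hle) (hσ.of_le hle)
    obtain ⟨hyc', hyd⟩ := N.continuousOn_deriv_of_isSolOn (hh.of_le hle') (hg.of_le hle')
      (hσ.of_le hle') hyc hy
    refine (contDiffOn_succ_iff_deriv_of_isOpen isOpen_Ioo).2 ⟨hyd, by simp, ?_⟩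
    exact ih (N.add_deriv (hh.of_le hle')) hyc'
      (N.isSolOn_deriv (hh.of_le hle') (hg.of_le hle') (hσ.of_le hle') hy) (hh.of_le hle)
      ((hg.of_le hle).add (hderiv hh)) ((hderiv hσ).sub ((hderiv hg).mul hyk))

end IsNormalForm
end NormalForm

section OneSidedFamily

/-- There are functions satisfying `P`; any two of them agree on `A`, and their restrictions to `B`
form a one-parameter family `y₀ + c z`, where `z` does not vanish identically on `B'`. -/
def IsOneSidedFamily (P : (ℝ → ℝ) → Prop) (A B B' : Set ℝ) : Prop :=
  (∃ y, P y) ∧ (∀ y y', P y → P y' → EqOn y y' A) ∧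
    ∃ y₀ z : ℝ → ℝ, P y₀ ∧ (∃ x ∈ B', z x ≠ 0) ∧
      (∀ c : ℝ, ∃ y, P y ∧ EqOn y (fun x => y₀ x + c * z x) B) ∧
      ∀ y, P y → ∃ c : ℝ, EqOn y (fun x => y₀ x + c * z x) B

variable {a b x₀ : ℝ} {h g σ y u : ℝ → ℝ}

lemma IsSolOn.exists_continuousOn_eqOn {e : ℝ} (hy : IsSolOn h g σ y (Ioo a b \ {x₀}))
    (hlim : Tendsto y (𝓝[≠] x₀) (𝓝 e)) :
    ∃ y', ContinuousOn y' (Ioo a b) ∧ EqOn y' y (Ioo a b \ {x₀}) := by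
  refine ⟨Function.update y x₀ e, fun x hx => ContinuousAt.continuousWithinAt ?_,
    fun x hx => Function.update_of_ne hx.2 _ _⟩
  rcases eq_or_ne x x₀ with rfl | hne
  · exact continuousAt_update_same.2 hlim
  · exact (continuousAt_update_of_ne hne).2 (hy x ⟨hx, hne⟩).1.continuousAt

lemma not_inv_isBigO_of_tendsto {e : ℝ} (hy : Tendsto y (𝓝[>] x₀) (𝓝 e)) :
    ¬ (fun x => (x - x₀)⁻¹) =O[𝓝[>] x₀] y := fun hO => by
  have hone : (fun _ => (1 : ℝ)) =O[𝓝[>] x₀] fun x => x - x₀ := by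
    refine ((hO.trans (hy.isBigO_one ℝ)).inv_rev ?_).congr (fun _ => inv_one) fun _ => inv_inv _
    filter_upwards [self_mem_nhdsWithin] with x hx h₀
    exact absurd h₀ (inv_ne_zero (sub_pos.2 hx).ne')
  have hzero : Tendsto (fun x => x - x₀) (𝓝[>] x₀) (𝓝 0) :=
    tendsto_sub_nhds_zero_iff.2 (tendsto_id.mono_left nhdsWithin_le_nhds)
  exact one_ne_zero (tendsto_nhds_unique tendsto_const_nhds (hone.trans_tendsto hzero))

namespace IsNormalForm

variable (N : IsNormalForm a b x₀ h g) (hσ : ContinuousOn σ (Ioo a b))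
include N hσ

lemma exists_continuousOn_isSolOn (hu : IsSolOn h g σ u (Ioo a x₀)) :
    ∃ y, (ContinuousOn y (Ioo a b) ∧ IsSolOn h g σ y (Ioo a b \ {x₀})) ∧ EqOn y u (Ioo a x₀) := by
  obtain ⟨v, hv, hv_lim⟩ := N.exists_isSolOn_tendsto_right hσ
  set w := (Iio x₀).piecewise u v
  have hwu : EqOn w u (Ioo a x₀) := (piecewise_eqOn _ _ _).mono fun x hx => hx.2
  have hwv : EqOn w v (Ioo x₀ b) := (piecewise_eqOn_compl _ _ _).mono fun x hx => hx.1.not_gt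
  have hw_left := hu.congr isOpen_Ioo hwu
  have hw : IsSolOn h g σ w (Ioo a b \ {x₀}) := fun x hx => by
    rcases lt_or_gt_of_ne hx.2 with hlt | hgt
    · exact hw_left x ⟨hx.1.1, hlt⟩
    · exact hv.congr isOpen_Ioo hwv x ⟨hgt, hx.1.2⟩
  have hw_lim : Tendsto w (𝓝[≠] x₀) (𝓝 (σ x₀ / g x₀)) := by
    rw [← nhdsLT_sup_nhdsGT]
    refine (N.tendsto_left (hσ.continuousAt N.mem_nhds) hw_left).sup (hv_lim.congr' ?_)
    filter_upwards [Ioo_mem_nhdsGT N.mem.2] with x hx using (hwv hx).symm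
  obtain ⟨y, hyc, hyw⟩ := hw.exists_continuousOn_eqOn hw_lim
  exact ⟨y, ⟨hyc, hw.congr (isOpen_Ioo.sdiff isClosed_singleton) hyw⟩,
    (hyw.mono (Ioo_lt_subset_diff N.mem)).trans hwu⟩

variable (hyc : ContinuousOn y (Ioo a b)) (hy : IsSolOn h g σ y (Ioo a b \ {x₀}))
include hyc hy

lemma eq_div_of_continuousOn : y x₀ = σ x₀ / g x₀ :=
  tendsto_nhds_unique ((hyc.continuousAt N.mem_nhds).tendsto.mono_left nhdsWithin_le_nhds)
    (N.tendsto_left (hσ.continuousAt N.mem_nhds) (hy.mono (Ioo_lt_subset_diff N.mem)))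

lemma eqOn_Ico_of_continuousOn {y' : ℝ → ℝ} (hyc' : ContinuousOn y' (Ioo a b))
    (hy' : IsSolOn h g σ y' (Ioo a b \ {x₀})) : EqOn y y' (Ico x₀ b) := fun x hx => by
  have hlim {k : ℝ → ℝ} (hk : ContinuousOn k (Ioo a b)) : Tendsto k (𝓝[>] x₀) (𝓝 (k x₀)) :=
    (hk.continuousAt N.mem_nhds).tendsto.mono_left nhdsWithin_le_nhds
  have hsub := Ioo_gt_subset_diff N.mem
  rcases hx.1.eq_or_lt with rfl | hlt
  · rw [N.eq_div_of_continuousOn hσ hyc hy, N.eq_div_of_continuousOn hσ hyc' hy']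
  · exact (N.eqOn_or_inv_isBigO_right (hy.mono hsub) (hy'.mono hsub) (hlim hyc')).resolve_right
      (not_inv_isBigO_of_tendsto (hlim hyc)) ⟨hlt, hx.2⟩

omit hyc hy

theorem isOneSidedFamily :
    IsOneSidedFamily (fun y => ContinuousOn y (Ioo a b) ∧ IsSolOn h g σ y (Ioo a b \ {x₀}))
      (Ico x₀ b) (Ioc a x₀) (Ioo a x₀) := by
  have hsub := Ioo_lt_subset_diff N.mem
  have hsub' : Ioo a x₀ ⊆ Ioo a b := Ioo_subset_Ioo_right N.mem.2.le
  obtain ⟨E, hE⟩ := N.exists_isIntegratingFactor_left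
  obtain ⟨F, hF⟩ := hE.exists_primitive (N.continuousOn.mono hsub') (hσ.mono hsub') N.ne_zero_left
  obtain ⟨y₀, hy₀, -⟩ :=
    N.exists_continuousOn_isSolOn hσ (hE.isSolOn_div N.ne_zero_left hF)
  have hy₀_left : IsSolOn h g σ y₀ (Ioo a x₀) := hy₀.2.mono hsub
  have hfamily {y : ℝ → ℝ} {c : ℝ}
      (hy : ContinuousOn y (Ioo a b) ∧ IsSolOn h g σ y (Ioo a b \ {x₀}))
      (heq : EqOn y (fun x => y₀ x + c * (E x)⁻¹) (Ioo a x₀)) :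
      EqOn y (fun x => y₀ x + c * (Iio x₀).indicator (fun x => (E x)⁻¹) x) (Ioc a x₀) := by
    intro x hx
    rcases hx.2.eq_or_lt with rfl | hlt
    · simp [N.eq_div_of_continuousOn hσ hy.1 hy.2, N.eq_div_of_continuousOn hσ hy₀.1 hy₀.2]
    · simp [heq ⟨hx.1, hlt⟩, hlt]
  refine ⟨⟨y₀, hy₀⟩, fun y y' hy hy' => N.eqOn_Ico_of_continuousOn hσ hy.1 hy.2 hy'.1 hy'.2,
    y₀, (Iio x₀).indicator fun x => (E x)⁻¹, hy₀, ?_, fun c => ?_, fun y hy => ?_⟩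
  · obtain ⟨x, hx⟩ := nonempty_Ioo.2 N.mem.1
    exact ⟨x, hx, by simpa [hx.2] using (hE x hx).1.ne'⟩
  · obtain ⟨y, hy, heq⟩ :=
      N.exists_continuousOn_isSolOn hσ (hy₀_left.add_mul_inv hE N.ne_zero_left c)
    exact ⟨y, hy, hfamily hy heq⟩
  · obtain ⟨c, hc⟩ := hE.exists_eqOn_add_div N.ne_zero_left (hy.2.mono hsub) hy₀_left
    exact ⟨c, hfamily hy hc⟩

end IsNormalForm
end OneSidedFamily

section Quotient

variable {s : Set ℝ} {c : ℝ} {f q : ℝ → ℝ}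

lemma exists_eq_mul_of_hasZeroOfOrder {m : ℕ∞} {k : ℕ} (hso : IsOpen s) (hs : Convex ℝ s)
    (hc : c ∈ s) (hkm : k ≤ m) (hf : ContDiffOn ℝ m f s) (hq : ContDiffOn ℝ m q s)
    (hzf : ∀ j < k, iteratedDeriv j f c = 0) (hzq : HasZeroOfOrder q c k)
    (hne : ∀ x ∈ s \ {c}, q x ≠ 0) :
    ∃ F, ContDiffOn ℝ (m - k : ℕ∞) F s ∧ (∀ x ∈ s, f x = q x * F x) ∧
      iteratedDeriv k f c = iteratedDeriv k q c * F c := by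
  rw [← tsub_add_cancel_of_le hkm] at hf hq
  obtain ⟨F, hF, hfF, hFc⟩ := exists_eq_pow_mul hso hs hc hf hzf
  obtain ⟨Q, hQ, hqQ, hQc⟩ := exists_eq_pow_mul hso hs hc hq hzq.1
  have hQne : ∀ x ∈ s, Q x ≠ 0 := fun x hx => by
    rcases eq_or_ne x c with rfl | hxc
    · exact right_ne_zero_of_mul (hQc ▸ hzq.2)
    · exact right_ne_zero_of_mul (hqQ x hx ▸ hne x ⟨hx, hxc⟩)
  refine ⟨fun x => F x / Q x, hF.div hQ hQne, fun x hx => ?_, ?_⟩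
  · rw [hfF x hx, hqQ x hx, mul_assoc, mul_div_cancel₀ _ (hQne x hx)]
  · rw [← hFc, ← hQc, mul_assoc, mul_div_cancel₀ _ (hQne c hc)]

lemma HasZeroOfOrder.mul_iteratedDeriv_pos {l : ℕ} (hso : IsOpen s) (hs : Convex ℝ s) (hc : c ∈ s)
    (hl : Even l) (hf : ContDiffOn ℝ l f s) (hz : HasZeroOfOrder f c l)
    (hne : ∀ x ∈ s \ {c}, f x ≠ 0) : ∀ x ∈ s \ {c}, 0 < f x * iteratedDeriv l f c := by
  obtain ⟨K, hK, hfK, hKc⟩ := exists_eq_pow_mul (n := 0) hso hs hc (by simpa using hf) hz.1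
  have hKne : ∀ x ∈ s, K x ≠ 0 := fun x hx => by
    rcases eq_or_ne x c with rfl | hxc
    · exact right_ne_zero_of_mul (hKc ▸ hz.2)
    · exact right_ne_zero_of_mul (hfK x hx ▸ hne x ⟨hx, hxc⟩)
  intro x hx
  have hKpos : 0 < K x * K c := by
    by_contra! hle
    obtain ⟨z, hz, hz0⟩ : (0 : ℝ) ∈ K '' s := by
      have hord := (hs.isPreconnected.image K hK.continuousOn).ordConnected
      refine hord.uIcc_subset (mem_image_of_mem K hx.1) (mem_image_of_mem K hc) ?_
      rcases mul_nonpos_iff.1 hle with h | h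
      · exact mem_uIcc.2 (Or.inr h.symm)
      · exact mem_uIcc.2 (Or.inl h)
    exact hKne z hz hz0
  have hpow : 0 < (x - c) ^ l := hl.pow_pos (sub_ne_zero.2 hx.2)
  rw [hfK x hx.1, ← hKc]
  calc 0 < (x - c) ^ l * l.factorial * (K x * K c) := by positivity
    _ = _ := by ring

end Quotient

section RegularSolutions

variable {a b x₀ : ℝ} {n : ℕ∞} {h ρ p q r g σ y : ℝ → ℝ}

lemma IsSol.isSolOn (hn : n ≠ 0) (hy : IsSol a b n p q r y) : IsSolOn p q r y (Ioo a b) :=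
  fun x hx => ⟨(hy.1.contDiffAt (isOpen_Ioo.mem_nhds hx)).differentiableAt (by exact_mod_cast hn),
    hy.2 x hx⟩

lemma IsSolOn.isSol_of_contDiffOn (hn : n ≠ 0) (hp : ContinuousOn p (Ioo a b))
    (hq : ContinuousOn q (Ioo a b)) (hr : ContinuousOn r (Ioo a b))
    (hy : IsSolOn p q r y (Ioo a b \ {x₀})) (hyn : ContDiffOn ℝ n y (Ioo a b)) :
    IsSol a b n p q r y := by
  refine ⟨hyn, fun x hx => ?_⟩
  rcases eq_or_ne x x₀ with rfl | hne
  · have hn1 : (1 : WithTop ℕ∞) ≤ n := by exact_mod_cast Order.one_le_iff_ne_zero.2 hn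
    have hmem := isOpen_Ioo.mem_nhds hx
    have hlhs := (hp.mul (hyn.continuousOn_deriv_of_isOpen isOpen_Ioo hn1)).add
      (hq.mul hyn.continuousOn)
    refine tendsto_nhds_unique_of_eventuallyEq (l := 𝓝[≠] x)
      ((hlhs.continuousAt hmem).tendsto.mono_left nhdsWithin_le_nhds)
      ((hr.continuousAt hmem).tendsto.mono_left nhdsWithin_le_nhds) ?_
    filter_upwards [mem_nhdsWithin_of_mem_nhds hmem, self_mem_nhdsWithin] with z hz hzx
    exact (hy z ⟨hz, hzx⟩).2
  · exact (hy x ⟨hx, hne⟩).2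

lemma isSolOn_iff_of_eq_mul {s : Set ℝ} (hq : ∀ x ∈ s, q x ≠ 0) (hp : ∀ x ∈ s, p x = q x * h x)
    (hr : ∀ x ∈ s, r x = q x * ρ x) : IsSolOn p q r y s ↔ IsSolOn h 1 ρ y s := by
  refine forall₂_congr fun x hx => and_congr_right fun _ => ?_
  rw [hp x hx, hr x hx, Pi.one_apply, one_mul, mul_assoc, ← mul_add, mul_right_inj' (hq x hx)]

lemma isSol_iff_of_eq_mul (hn : n ≠ 0) (hh : ContinuousOn h (Ioo a b))
    (hρ : ContinuousOn ρ (Ioo a b)) (hq : ∀ x ∈ Ioo a b \ {x₀}, q x ≠ 0)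
    (hp : ∀ x ∈ Ioo a b, p x = q x * h x) (hr : ∀ x ∈ Ioo a b, r x = q x * ρ x) :
    IsSol a b n p q r y ↔ IsSol a b n h 1 ρ y := by
  refine ⟨fun hy => ?_, fun hy => ⟨hy.1, fun x hx => ?_⟩⟩
  · refine IsSolOn.isSol_of_contDiffOn (x₀ := x₀) hn hh continuousOn_const hρ ?_ hy.1
    exact (isSolOn_iff_of_eq_mul hq (fun x hx => hp x hx.1) fun x hx => hr x hx.1).1
      ((hy.isSolOn hn).mono sdiff_subset)
  · have := hy.2 x hx
    rw [Pi.one_apply] at this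
    rw [hp x hx, hr x hx]
    linear_combination q x * this

variable (hx₀ : x₀ ∈ Ioo a b) (hn : n ≠ 0) (hh : ContDiffOn ℝ n h (Ioo a b)) (hh₀ : h x₀ = 0)
  (hpos : ∀ x ∈ Ioo a b \ {x₀}, 0 < h x)
include hx₀ hn hh hh₀ hpos

lemma isNormalForm_one : IsNormalForm a b x₀ h 1 where
  mem := hx₀
  continuousOn := hh.continuousOn
  continuousOn_coeff := continuousOn_const
  pos := hpos
  eq_zero := hh₀
  hasDerivAt := by
    have hmem := isOpen_Ioo.mem_nhds hx₀
    have hmin : IsLocalMin h x₀ := by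
      filter_upwards [hmem] with x hx
      rcases eq_or_ne x x₀ with rfl | hne
      · exact le_rfl
      · exact hh₀ ▸ (hpos x ⟨hx, hne⟩).le
    exact hmin.deriv_eq_zero ▸
      ((hh.contDiffAt hmem).differentiableAt (by exact_mod_cast hn)).hasDerivAt
  coeff_pos := one_pos

lemma isSol_iff_of_pos (hρ : ContDiffOn ℝ n ρ (Ioo a b)) :
    IsSol a b n h 1 ρ y ↔ ContinuousOn y (Ioo a b) ∧ IsSolOn h 1 ρ y (Ioo a b \ {x₀}) := by
  refine ⟨fun hy => ⟨hy.1.continuousOn, (hy.isSolOn hn).mono sdiff_subset⟩, fun hy => ?_⟩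
  exact hy.2.isSol_of_contDiffOn hn hh.continuousOn continuousOn_const hρ.continuousOn
    ((isNormalForm_one hx₀ hn hh hh₀ hpos).contDiffOn_of_isSolOn hh contDiffOn_const hρ hy.1 hy.2)

theorem isOneSidedFamily_isSol_of_pos (hρ : ContDiffOn ℝ n ρ (Ioo a b)) :
    IsOneSidedFamily (IsSol a b n h 1 ρ) (Ico x₀ b) (Ioc a x₀) (Ioo a x₀) := by
  simpa only [← isSol_iff_of_pos hx₀ hn hh hh₀ hpos hρ] using
    (isNormalForm_one hx₀ hn hh hh₀ hpos).isOneSidedFamily hρ.continuousOn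

theorem IsSolOn.exists_continuousOn_eqOn_of_pos (hρ : ContDiffOn ℝ n ρ (Ioo a b))
    (hy : IsSolOn h 1 ρ y (Ioo a b \ {x₀})) (hint : IntegrableAtFilter y (𝓝[≠] x₀)) :
    ∃ y', ContinuousOn y' (Ioo a b) ∧ EqOn y' y (Ioo a b \ {x₀}) :=
  hy.exists_continuousOn_eqOn
    ((isNormalForm_one hx₀ hn hh hh₀ hpos).tendsto_of_integrableAtFilter hρ.continuousOn hy hint)

end RegularSolutions

section Reflection

variable {a b x₀ : ℝ} {n : ℕ∞} {h ρ p q r y : ℝ → ℝ}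

lemma IsOneSidedFamily.of_comp_neg {P Q : (ℝ → ℝ) → Prop} {A B B' : Set ℝ}
    (hPQ : ∀ y, P y ↔ Q fun x => y (-x))
    (hQ : IsOneSidedFamily Q (Neg.neg ⁻¹' A) (Neg.neg ⁻¹' B) (Neg.neg ⁻¹' B')) :
    IsOneSidedFamily P A B B' := by
  have hQP {y : ℝ → ℝ} (hy : Q y) : P fun x => y (-x) := (hPQ _).2 (by simpa using hy)
  have hneg {y y' : ℝ → ℝ} {S : Set ℝ} (hyy' : EqOn (fun x => y (-x)) y' (Neg.neg ⁻¹' S)) :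
      EqOn y (fun x => y' (-x)) S := fun x hx => by
    simpa using hyy' (show -x ∈ Neg.neg ⁻¹' S by simpa using hx)
  obtain ⟨⟨y₁, hy₁⟩, huniq, y₀, z, hy₀, ⟨x, hx, hzx⟩, hmem, hall⟩ := hQ
  refine ⟨⟨_, hQP hy₁⟩, fun y y' hy hy' => ?_, fun x => y₀ (-x), fun x => z (-x), hQP hy₀,
    ⟨-x, hx, by simpa using hzx⟩, fun c => ?_, fun y hy => ?_⟩
  · simpa using hneg (huniq _ _ ((hPQ y).1 hy) ((hPQ y').1 hy'))
  · obtain ⟨y, hy, heq⟩ := hmem c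
    exact ⟨_, hQP hy, hneg (y := fun x => y (-x)) (by simpa using heq)⟩
  · obtain ⟨c, hc⟩ := hall _ ((hPQ y).1 hy)
    exact ⟨c, hneg hc⟩

lemma neg_mem_Ioo {x : ℝ} (hx : x ∈ Ioo (-b) (-a)) : -x ∈ Ioo a b :=
  ⟨lt_neg_of_lt_neg hx.2, neg_lt_of_neg_lt hx.1⟩

lemma neg_mem_Ioo_diff {x : ℝ} (hx : x ∈ Ioo (-b) (-a) \ {-x₀}) : -x ∈ Ioo a b \ {x₀} :=
  ⟨neg_mem_Ioo hx.1, fun h => hx.2 (neg_eq_iff_eq_neg.1 h)⟩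

lemma contDiffOn_comp_neg (hy : ContDiffOn ℝ n y (Ioo a b)) :
    ContDiffOn ℝ n (fun x => y (-x)) (Ioo (-b) (-a)) :=
  hy.comp contDiff_neg.contDiffOn fun _ => neg_mem_Ioo

lemma IsSol.comp_neg (hy : IsSol a b n p q r y) :
    IsSol (-b) (-a) n (fun x => -p (-x)) (fun x => q (-x)) (fun x => r (-x)) fun x => y (-x) := by
  refine ⟨contDiffOn_comp_neg hy.1, fun x hx => ?_⟩
  have := hy.2 (-x) (neg_mem_Ioo hx)
  rw [deriv_comp_neg]
  linear_combination this

lemma isSol_comp_neg_iff : IsSol a b n p q r y ↔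
    IsSol (-b) (-a) n (fun x => -p (-x)) (fun x => q (-x)) (fun x => r (-x)) fun x => y (-x) :=
  ⟨IsSol.comp_neg, fun hy => by simpa using hy.comp_neg⟩

lemma IsSolOn.comp_neg {s t : Set ℝ} (hts : ∀ x ∈ t, -x ∈ s) (hy : IsSolOn p q r y s) :
    IsSolOn (fun x => -p (-x)) (fun x => q (-x)) (fun x => r (-x)) (fun x => y (-x)) t := by
  intro x hx
  obtain ⟨hd, heq⟩ := hy (-x) (hts x hx)
  refine ⟨differentiableAt_comp_neg.2 hd, ?_⟩
  rw [deriv_comp_neg]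
  linear_combination heq

lemma tendsto_neg_nhdsNE_neg (x : ℝ) : Tendsto Neg.neg (𝓝[≠] (-x)) (𝓝[≠] x) := by
  refine tendsto_nhdsWithin_iff.2 ⟨?_, ?_⟩
  · exact (continuous_neg.tendsto' _ _ (neg_neg x)).mono_left nhdsWithin_le_nhds
  · filter_upwards [self_mem_nhdsWithin] with z hz h using hz (neg_eq_iff_eq_neg.1 h)

lemma integrableAtFilter_comp_neg (hy : IntegrableAtFilter y (𝓝[≠] x₀)) :
    IntegrableAtFilter (fun x => y (-x)) (𝓝[≠] (-x₀)) := by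
  obtain ⟨s, hs, hint⟩ := hy
  exact ⟨_, tendsto_neg_nhdsNE_neg x₀ hs, ((Measure.measurePreserving_neg volume)
    |>.integrableOn_comp_preimage (MeasurableEquiv.neg ℝ).measurableEmbedding).2 hint⟩

variable (hx₀ : x₀ ∈ Ioo a b) (hn : n ≠ 0) (hh : ContDiffOn ℝ n h (Ioo a b)) (hh₀ : h x₀ = 0)
  (hneg : ∀ x ∈ Ioo a b \ {x₀}, h x < 0)
include hx₀ hn hh hh₀ hneg

theorem isOneSidedFamily_isSol_of_neg (hρ : ContDiffOn ℝ n ρ (Ioo a b)) :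
    IsOneSidedFamily (IsSol a b n h 1 ρ) (Ioc a x₀) (Ico x₀ b) (Ioo x₀ b) := by
  refine .of_comp_neg (fun _ => isSol_comp_neg_iff) ?_
  simpa [Pi.one_def] using isOneSidedFamily_isSol_of_pos (neg_mem_Ioo (by simpa using hx₀)) hn
    (contDiffOn_comp_neg hh).neg (by simpa using hh₀)
    (fun x hx => neg_pos.2 (hneg (-x) (neg_mem_Ioo_diff hx))) (contDiffOn_comp_neg hρ)

theorem IsSolOn.exists_continuousOn_eqOn_of_neg (hρ : ContDiffOn ℝ n ρ (Ioo a b))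
    (hy : IsSolOn h 1 ρ y (Ioo a b \ {x₀})) (hint : IntegrableAtFilter y (𝓝[≠] x₀)) :
    ∃ y', ContinuousOn y' (Ioo a b) ∧ EqOn y' y (Ioo a b \ {x₀}) := by
  obtain ⟨y', hyc', hyy'⟩ := (hy.comp_neg fun _ => neg_mem_Ioo_diff).exists_continuousOn_eqOn_of_pos
    (neg_mem_Ioo (by simpa using hx₀)) hn (contDiffOn_comp_neg hh).neg (by simpa using hh₀)
    (fun x hx => neg_pos.2 (hneg (-x) (neg_mem_Ioo_diff hx))) (contDiffOn_comp_neg hρ)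
    (integrableAtFilter_comp_neg hint)
  refine ⟨fun x => y' (-x), hyc'.comp continuousOn_neg fun x hx => neg_mem_Ioo (by simpa using hx),
    fun x hx => ?_⟩
  simpa using hyy' (neg_mem_Ioo_diff (by simpa using hx))

end Reflection

theorem even_order_case_general {a b x₀ : ℝ} {m : ℕ∞} {p q r : ℝ → ℝ} {k : ℕ} (hx₀ : x₀ ∈ Ioo a b)
    (hp : ContDiffOn ℝ m p (Ioo a b)) (hq : ContDiffOn ℝ m q (Ioo a b))
    (hr : ContDiffOn ℝ m r (Ioo a b)) (hkm : k < m) (hzp : ∀ j ≤ k, iteratedDeriv j p x₀ = 0)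
    (hzq : HasZeroOfOrder q x₀ k) (hzr : ∀ j < k, iteratedDeriv j r x₀ = 0)
    (hne : ∀ x ∈ Ioo a b \ {x₀}, q x ≠ 0) :
    ((∀ x ∈ Ioo a b \ {x₀}, 0 < p x / q x) →
      IsOneSidedFamily (IsSol a b (m - k) p q r) (Ico x₀ b) (Ioc a x₀) (Ioo a x₀)) ∧
    ((∀ x ∈ Ioo a b \ {x₀}, p x / q x < 0) →
      IsOneSidedFamily (IsSol a b (m - k) p q r) (Ioc a x₀) (Ico x₀ b) (Ioo x₀ b)) ∧
    ((∀ x ∈ Ioo a b \ {x₀}, 0 < p x / q x) ∨ (∀ x ∈ Ioo a b \ {x₀}, p x / q x < 0) →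
      ∀ y, IsSolOn p q r y (Ioo a b \ {x₀}) →
        (¬ ∃ y', ContinuousOn y' (Ioo a b) ∧ EqOn y' y (Ioo a b \ {x₀})) →
        ∀ ε > 0, ¬ IntegrableOn y ((Ioo a b ∩ Ioo (x₀ - ε) (x₀ + ε)) \ {x₀})) := by
  have hn : m - k ≠ 0 := (tsub_pos_of_lt hkm).ne'
  obtain ⟨h, hh, hph, hh₀⟩ := exists_eq_mul_of_hasZeroOfOrder isOpen_Ioo (convex_Ioo a b) hx₀ hkm.le
    hp hq (fun j hj => hzp j hj.le) hzq hne
  obtain ⟨ρ, hρ, hrρ, -⟩ := exists_eq_mul_of_hasZeroOfOrder isOpen_Ioo (convex_Ioo a b) hx₀ hkm.le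
    hr hq hzr hzq hne
  replace hh₀ : h x₀ = 0 := (mul_eq_zero.1 (hh₀ ▸ hzp k le_rfl)).resolve_left hzq.2
  have hquot : ∀ x ∈ Ioo a b \ {x₀}, p x / q x = h x := fun x hx => by
    rw [hph x hx.1, mul_div_cancel_left₀ _ (hne x hx)]
  have hsol : IsSol a b (m - k) p q r = IsSol a b (m - k) h 1 ρ := funext fun _ =>
    propext (isSol_iff_of_eq_mul hn hh.continuousOn hρ.continuousOn hne hph hrρ)
  have hpos_iff : (∀ x ∈ Ioo a b \ {x₀}, 0 < p x / q x) ↔ ∀ x ∈ Ioo a b \ {x₀}, 0 < h x :=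
    forall₂_congr fun x hx => by rw [hquot x hx]
  have hneg_iff : (∀ x ∈ Ioo a b \ {x₀}, p x / q x < 0) ↔ ∀ x ∈ Ioo a b \ {x₀}, h x < 0 :=
    forall₂_congr fun x hx => by rw [hquot x hx]
  rw [hsol, hpos_iff, hneg_iff]
  refine ⟨fun hpos => isOneSidedFamily_isSol_of_pos hx₀ hn hh hh₀ hpos hρ,
    fun hneg => isOneSidedFamily_isSol_of_neg hx₀ hn hh hh₀ hneg hρ,
    fun hsign y hy hext ε hε hint => hext ?_⟩
  replace hy : IsSolOn h 1 ρ y (Ioo a b \ {x₀}) :=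
    (isSolOn_iff_of_eq_mul hne (fun x hx => hph x hx.1) fun x hx => hrρ x hx.1).1 hy
  have hint' : IntegrableAtFilter y (𝓝[≠] x₀) := ⟨_, sdiff_mem_nhdsWithin_compl
    (inter_mem (isOpen_Ioo.mem_nhds hx₀) (Ioo_mem_nhds (by linarith) (by linarith))) _, hint⟩
  rcases hsign with hpos | hneg
  · exact hy.exists_continuousOn_eqOn_of_pos hx₀ hn hh hh₀ hpos hρ hint'
  · exact hy.exists_continuousOn_eqOn_of_neg hx₀ hn hh hh₀ hneg hρ hint'

end

/-- **Proposition B(iv)-(v).** -/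
theorem even_order_case
    (a b xh : ℝ) (hx : xh ∈ Ioo a b) (m : ℕ∞)
    (p q r : ℝ → ℝ) (lp lq lr : ℕ) (l : ℕ)
    (hpC : ContDiffOn ℝ m p (Ioo a b))
    (hqC : ContDiffOn ℝ m q (Ioo a b))
    (hrC : ContDiffOn ℝ m r (Ioo a b))
    (hlpm : (lp : ℕ∞) < m) (hlqm : (lq : ℕ∞) < m)
    (hzp : HasZeroOfOrder p xh lp)
    (hzq : HasZeroOfOrder q xh lq)
    (hzr : HasZeroOfOrder r xh lr)
    (hnop : ∀ x ∈ Ioo a b, x ≠ xh → p x ≠ 0)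
    (hnoq : ∀ x ∈ Ioo a b, x ≠ xh → q x ≠ 0)
    (hldef : l = lp - lq) (hl2 : 2 ≤ l) (hleven : Even l) (hlr : lq ≤ lr)
    -- the C^l extension `h` of `p/q`, with a zero of order `l` at `xh`:
    (h : ℝ → ℝ)
    (hhC : ContDiffOn ℝ (l : ℕ∞) h (Ioo a b))
    (hhq : ∀ x ∈ Ioo a b, q x ≠ 0 → h x = p x / q x)
    (hhz : HasZeroOfOrder h xh l) :
    -- case `h^{(l)}(xh) > 0`:
    (0 < iteratedDeriv l h xh →
      -- (a) existence:
      (∃ y : ℝ → ℝ, IsSol a b (m - lq) p q r y) ∧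
      -- (b) uniqueness to the right of `xh`:
      (∀ y y' : ℝ → ℝ, IsSol a b (m - lq) p q r y → IsSol a b (m - lq) p q r y' →
        EqOn y y' (Ico xh b)) ∧
      -- (c) one-parameter family to the left of `xh`:
      (∃ y₀ z : ℝ → ℝ, IsSol a b (m - lq) p q r y₀ ∧ (∃ x ∈ Ioo a xh, z x ≠ 0) ∧
        (∀ c : ℝ, ∃ y : ℝ → ℝ, IsSol a b (m - lq) p q r y ∧
          EqOn y (fun x => y₀ x + c * z x) (Ioc a xh)) ∧
        (∀ y : ℝ → ℝ, IsSol a b (m - lq) p q r y →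
          ∃ c : ℝ, EqOn y (fun x => y₀ x + c * z x) (Ioc a xh)))) ∧
    -- case `h^{(l)}(xh) < 0`: the two sides of `xh` are interchanged:
    (iteratedDeriv l h xh < 0 →
      (∃ y : ℝ → ℝ, IsSol a b (m - lq) p q r y) ∧
      (∀ y y' : ℝ → ℝ, IsSol a b (m - lq) p q r y → IsSol a b (m - lq) p q r y' →
        EqOn y y' (Ioc a xh)) ∧
      (∃ y₀ z : ℝ → ℝ, IsSol a b (m - lq) p q r y₀ ∧ (∃ x ∈ Ioo xh b, z x ≠ 0) ∧
        (∀ c : ℝ, ∃ y : ℝ → ℝ, IsSol a b (m - lq) p q r y ∧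
          EqOn y (fun x => y₀ x + c * z x) (Ico xh b)) ∧
        (∀ y : ℝ → ℝ, IsSol a b (m - lq) p q r y →
          ∃ c : ℝ, EqOn y (fun x => y₀ x + c * z x) (Ico xh b)))) ∧
    -- (d) any solution on `U∖{xh}` which does not extend to a continuous function on
    -- `U` fails to be locally Lebesgue-integrable at `xh`:
    (∀ y : ℝ → ℝ,
      (∀ x ∈ Ioo a b, x ≠ xh →
        DifferentiableAt ℝ y x ∧ p x * deriv y x + q x * y x = r x) →
      (¬ ∃ ytilde : ℝ → ℝ, ContinuousOn ytilde (Ioo a b) ∧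
          EqOn ytilde y (Ioo a b \ {xh})) →
      ∀ ε > (0:ℝ),
        ¬ IntegrableOn y ((Ioo a b ∩ Ioo (xh - ε) (xh + ε)) \ {xh}) volume) := by
  have hlp : lq < lp := by lia
  have hne : ∀ x ∈ Ioo a b \ {xh}, q x ≠ 0 := fun x hx => hnoq x hx.1 hx.2
  have hquot : ∀ x ∈ Ioo a b \ {xh}, h x = p x / q x := fun x hx => hhq x hx.1 (hne x hx)
  have hsign : ∀ x ∈ Ioo a b \ {xh}, 0 < p x / q x * iteratedDeriv l h xh := fun x hxd => by
    rw [← hquot x hxd]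
    exact hhz.mul_iteratedDeriv_pos isOpen_Ioo (convex_Ioo a b) hx hleven hhC
      (fun z hz => hquot z hz ▸ div_ne_zero (hnop z hz.1 hz.2) (hne z hz)) x hxd
  have hpos (hD : 0 < iteratedDeriv l h xh) : ∀ x ∈ Ioo a b \ {xh}, 0 < p x / q x :=
    fun x hx => pos_of_mul_pos_left (hsign x hx) hD.le
  have hneg (hD : iteratedDeriv l h xh < 0) : ∀ x ∈ Ioo a b \ {xh}, p x / q x < 0 :=
    fun x hx => neg_of_mul_pos_left (hsign x hx) hD.le
  obtain ⟨hfam_pos, hfam_neg, hint⟩ := even_order_case_general hx hpC hqC hrC hlqm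
    (fun k hk => hzp.1 k (hk.trans_lt hlp)) hzq (fun k hk => hzr.1 k (hk.trans_le hlr)) hne
  exact ⟨fun hD => hfam_pos (hpos hD), fun hD => hfam_neg (hneg hD),
    fun y hy => hint (hhz.2.lt_or_gt.symm.imp hpos hneg) y fun x hx => hy x hx.1 hx.2⟩

end SingularODE19
end
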